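/- Let k ≥ 3 be an integer and α₁,…,α_k ∈ ℝ. Suppose there exists a natural number j with 2 ≤ j ≤ k such that, for some a ∈ ℤ and q ∈ ℕ with gcd(a,q) = 1, one has |α_j − a/q| ≤ q^{−2}. Then ∑_{1≤n≤N} e(α₁n + α₂n² + ⋯ + α_k n^k) ≪ N^{1+ε}(q^{−1} + N^{−1} + qN^{−j})^{1/(k(k−1))}. -/

import Mathlib

open scoped BigOperators Classical
open Real

noncomputable section

/-- `e(t) = e^{2πit}`. -/
def eC (t : ℝ) : ℂ := Complex.exp (2 * Real.pi * Complex.I * t)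

/-- The Piatetski-Shapiro set `ℕ^c = {⌊n^c⌋ : n ∈ ℕ}`. -/
def PS (c : ℝ) : Set ℕ := {m | ∃ n : ℕ, 0 < n ∧ m = ⌊(n : ℝ) ^ c⌋₊}

/-- The Fourier transform `f̂(α) = ∑_{n ∈ ℤ} f(n) e(αn)` of a finitely
supported function on `ℤ`. -/
def FT (f : ℤ → ℂ) (α : ℝ) : ℂ := ∑ᶠ n : ℤ, f n * eC (α * n)

/-- `w = (1/2) log log x`. -/
def wps (x : ℕ) : ℝ := Real.log (Real.log x) / 2

/-- `W = 4 d³ ∏_{p ≤ w} p`. -/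
def Wps (d x : ℕ) : ℕ :=
  4 * d ^ 3 * ∏ p ∈ Finset.filter Nat.Prime (Finset.Iic ⌊wps x⌋₊), p

/-- `σ(b) = #{z ∈ [W] : z^d ≡ -b (mod W)}`. -/
def sigmaPS (d W b : ℕ) : ℕ :=
  ((Finset.Icc 1 W).filter fun z => (z ^ d + b) % W = 0).card

/-- `N = ⌊x^d / W⌋ + 1`. -/
def Nps (d x : ℕ) : ℕ := ⌊(x : ℝ) ^ d / (Wps d x : ℝ)⌋₊ + 1

/-- `b ∈ [W]` and `-b ∈ (ℤ/Wℤ)^{×d}`. -/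
def bSpec (d x b : ℕ) : Prop :=
  b ∈ Finset.Icc 1 (Wps d x) ∧
    ∃ z : (ZMod (Wps d x))ˣ, (z : ZMod (Wps d x)) ^ d = -(b : ZMod (Wps d x))

/-- `S(d) = 2⌊d²/2⌋`. -/
def Sd (d : ℕ) : ℕ := 2 * (d ^ 2 / 2)

def hD (d : ℕ) : ℝ := 1 / ((d : ℝ) * ((d : ℝ) + 1) ^ 2 - 1)
def kD (d : ℕ) : ℝ := 2 / (27 * (d : ℝ) ^ 2 - 14)
def lD (d : ℕ) : ℝ := 2 / (27 * (d : ℝ) ^ 2 - 5)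

/-- `θ(d, c)`. -/
def θdc (d : ℕ) (c : ℝ) : ℝ :=
  if d = 2 then (4 * c + 7) / 13
  else if d = 3 then (15 * c + 14) / 30
  else if d ≤ 11 then (1 + c) / 2 * (1 - hD d)
  else if 2 ∣ d then (1 + c) / 2 * (1 - kD d)
  else (1 + c) / 2 * (1 - lD d)

/-- `c₂(d)`. -/
def c2ps (d : ℕ) : ℝ :=
  if d = 2 then 1 / 54
  else if d = 3 then 1 / 495
  else if d ≤ 11 then 2 * hD d / (4 * (Sd d : ℝ) + 1 - hD d)
  else if 2 ∣ d then 2 * kD d / (4 * (Sd d : ℝ) + 1 - kD d)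
  else 2 * lD d / (4 * (Sd d : ℝ) + 1 - lD d)

/-- The majorant `ν = ν_b` from the density transfer lemma, characterized by
its defining property. -/
def nuSpec (d x : ℕ) (c : ℝ) (b : ℕ) (ν : ℤ → ℝ) : Prop :=
  (∀ n : ℤ, ∀ p : ℕ, p.Prime → p ∈ PS c → p ≤ x →
      (Wps d x : ℤ) * n - (b : ℤ) = (p : ℤ) ^ d →
      ν n = c * (Nat.totient (Wps d x) : ℝ) /
          ((sigmaPS d (Wps d x) b : ℝ) * (Wps d x : ℝ)) *
          (p : ℝ) ^ ((d : ℝ) - 1 / c) * Real.log p) ∧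
  (∀ n : ℤ, (¬ ∃ p : ℕ, p.Prime ∧ p ∈ PS c ∧ p ≤ x ∧
      (Wps d x : ℤ) * n - (b : ℤ) = (p : ℤ) ^ d) → ν n = 0)

/-- The majorant `τ`, characterized by its defining property. -/
def tauSpec (d x : ℕ) (c : ℝ) (b : ℕ) (τ : ℤ → ℝ) : Prop :=
  (∀ n : ℤ, ∀ m : ℕ, m ∈ PS c → m ≤ x →
      (Wps d x : ℤ) * n - (b : ℤ) = (m : ℤ) ^ d →
      τ n = c / (sigmaPS d (Wps d x) b : ℝ) * (m : ℝ) ^ ((d : ℝ) - 1 / c)) ∧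
  (∀ n : ℤ, (¬ ∃ m : ℕ, m ∈ PS c ∧ m ≤ x ∧
      (Wps d x : ℤ) * n - (b : ℤ) = (m : ℤ) ^ d) → τ n = 0)

/-- The function `μ`, characterized by its defining property. -/
def muSpec (d x : ℕ) (b : ℕ) (μ : ℤ → ℝ) : Prop :=
  (∀ n : ℤ, ∀ m : ℕ, 1 ≤ m → m ≤ x →
      (Wps d x : ℤ) * n - (b : ℤ) = (m : ℤ) ^ d →
      μ n = (m : ℝ) ^ (d - 1) / (sigmaPS d (Wps d x) b : ℝ)) ∧
  (∀ n : ℤ, (¬ ∃ m : ℕ, 1 ≤ m ∧ m ≤ x ∧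
      (Wps d x : ℤ) * n - (b : ℤ) = (m : ℤ) ^ d) → μ n = 0)

/-!
Modulo `p ^ n`, `n → ∞`, the moment curve `(x, …, x ^ d)` satisfies `ℓ²` decoupling at the critical
exponent `d (d + 1)` with constant `p ^ (ε n)`. If the best exponent of `p ^ n` were `x > 0`, a
bilinear version for pairs of distinct residue classes modulo `p` would, after translation and
rescaling, use only the decoupling inequalities of degrees `l < d` and gain on `x` through Hölder's
inequality and iteration; splitting a sum into a narrow part, where one residue class modulo `p`
dominates, and a broad part, where two classes do, passes the gain back to the linear inequality.
So `x = 0`.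

For the Weyl sum of degree `k = d + 1`, replacing `n` by `n + m` with `m ≤ N` changes it little
after completion, while the coefficients of `n, …, n ^ d` vary with `m`. Decoupling in degree `d`,
used as a large sieve, bounds the mean over `m` of the `d (d + 1)`-th powers by `N ^ ε` times the
number of coincidences of those coefficient vectors at scales `N ^ (-1), …, N ^ (-d)`. The Taylor
expansion turns a coincidence into smallness of `‖c (m - m') α_j‖`, and `|α_j - a / q| ≤ 1 / q²`
makes such pairs rare. Since `d (d + 1) = k (k - 1)`, taking the root gives the exponent.
-/

namespace MomentCurve

open Finset

section WeightedNorm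

variable {Ω ι : Type*} [Fintype Ω]

/-- The weighted `L^r` norm of a nonnegative function `f` on a finite set, for the weight `g`
times the uniform probability measure. -/
def wNorm (g : Ω → ℝ) (r : ℕ) (f : Ω → ℝ) : ℝ := (𝔼 ω, g ω * f ω ^ r) ^ ((r : ℝ)⁻¹)

variable {g : Ω → ℝ} {r : ℕ} {f f' : Ω → ℝ}

lemma expect_weight_mul_pow_nonneg (hg : 0 ≤ g) (hf : 0 ≤ f) : 0 ≤ 𝔼 ω, g ω * f ω ^ r :=
  expect_nonneg fun ω _ => mul_nonneg (hg ω) (pow_nonneg (hf ω) r)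

lemma wNorm_nonneg (hg : 0 ≤ g) (hf : 0 ≤ f) : 0 ≤ wNorm g r f :=
  rpow_nonneg (expect_weight_mul_pow_nonneg hg hf) _

lemma wNorm_pow (hr : r ≠ 0) (hg : 0 ≤ g) (hf : 0 ≤ f) :
    wNorm g r f ^ r = 𝔼 ω, g ω * f ω ^ r :=
  rpow_inv_natCast_pow (expect_weight_mul_pow_nonneg hg hf) hr

lemma wNorm_mono (hg : 0 ≤ g) (hf : 0 ≤ f) (h : f ≤ f') : wNorm g r f ≤ wNorm g r f' := by
  refine rpow_le_rpow (expect_weight_mul_pow_nonneg hg hf) (expect_le_expect fun ω _ => ?_)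
    (by positivity)
  exact mul_le_mul_of_nonneg_left (pow_le_pow_left₀ (hf ω) (h ω) r) (hg ω)

lemma wNorm_zero (hr : r ≠ 0) : wNorm g r 0 = 0 := by
  simp [wNorm, hr, zero_rpow]

lemma wNorm_const_mul (hr : r ≠ 0) (hg : 0 ≤ g) (hf : 0 ≤ f) {c : ℝ} (hc : 0 ≤ c) :
    wNorm g r (fun ω => c * f ω) = c * wNorm g r f := by
  have hscale : 𝔼 ω, g ω * (c * f ω) ^ r = c ^ r * 𝔼 ω, g ω * f ω ^ r := by
    rw [mul_expect]
    exact expect_congr rfl fun ω _ => by rw [mul_pow]; ring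
  rw [wNorm, hscale, mul_rpow (by positivity) (expect_weight_mul_pow_nonneg hg hf),
    pow_rpow_inv_natCast hc hr, wNorm]

lemma wNorm_eq_rpow_sum (hr : r ≠ 0) (hg : 0 ≤ g) :
    wNorm g r f = (∑ ω, ((g ω / Fintype.card Ω) ^ ((r : ℝ)⁻¹) * f ω) ^ (r : ℝ)) ^
      (1 / (r : ℝ)) := by
  rw [wNorm, one_div, Fintype.expect_eq_sum_div_card, sum_div]
  congr 1
  refine sum_congr rfl fun ω _ => ?_
  rw [rpow_natCast, mul_pow,
    rpow_inv_natCast_pow (div_nonneg (hg ω) (Nat.cast_nonneg _)) hr]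
  ring

lemma wNorm_add_le (hr : r ≠ 0) (hg : 0 ≤ g) (hf : 0 ≤ f) (hf' : 0 ≤ f') :
    wNorm g r (f + f') ≤ wNorm g r f + wNorm g r f' := by
  have hw (ω : Ω) : 0 ≤ (g ω / Fintype.card Ω) ^ ((r : ℝ)⁻¹) :=
    rpow_nonneg (div_nonneg (hg ω) (Nat.cast_nonneg _)) _
  simp only [wNorm_eq_rpow_sum hr hg, Pi.add_apply, mul_add]
  exact Lp_add_le_of_nonneg univ (by exact_mod_cast Nat.one_le_iff_ne_zero.2 hr)
    (fun ω _ => mul_nonneg (hw ω) (hf ω)) (fun ω _ => mul_nonneg (hw ω) (hf' ω))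

lemma wNorm_sum_le [Fintype ι] (hr : r ≠ 0) (hg : 0 ≤ g) {F : ι → Ω → ℝ} (hF : ∀ i, 0 ≤ F i) :
    wNorm g r (∑ i, F i) ≤ ∑ i, wNorm g r (F i) :=
  le_sum_of_subadditive_on_pred (wNorm g r) (0 ≤ ·) (wNorm_zero hr).le
    (fun _ _ => wNorm_add_le hr hg) (fun _ _ => add_nonneg) F fun i _ => hF i

lemma expect_rpow_mul_rpow_le {f₁ f₂ : Ω → ℝ} (h₁ : 0 ≤ f₁) (h₂ : 0 ≤ f₂) {s t : ℝ}
    (hs : 0 ≤ s) (ht : 0 ≤ t) (hst : s + t = 1) :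
    𝔼 ω, f₁ ω ^ s * f₂ ω ^ t ≤ (𝔼 ω, f₁ ω) ^ s * (𝔼 ω, f₂ ω) ^ t := by
  rcases hs.eq_or_lt with rfl | hs
  · simp [show t = 1 by linarith]
  rcases ht.eq_or_lt with rfl | ht
  · simp [show s = 1 by linarith]
  have hconj : HolderConjugate s⁻¹ t⁻¹ := HolderConjugate.inv_inv hs ht hst
  have hroot {f : Ω → ℝ} (hf : 0 ≤ f) {u : ℝ} (hu : 0 < u) (ω : Ω) : (f ω ^ u) ^ u⁻¹ = f ω := by
    rw [← rpow_mul (hf ω), mul_inv_cancel₀ hu.ne', rpow_one]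
  have hHolder := inner_le_Lp_mul_Lq_of_nonneg univ hconj
    (fun ω _ => rpow_nonneg (h₁ ω) s) (fun ω _ => rpow_nonneg (h₂ ω) t)
  simp only [hroot h₁ hs, hroot h₂ ht, one_div, inv_inv] at hHolder
  simp only [Fintype.expect_eq_sum_div_card]
  rcases isEmpty_or_nonempty Ω with hΩ | hΩ
  · simp [zero_rpow hs.ne']
  have hcard : (0 : ℝ) < Fintype.card Ω := by exact_mod_cast Fintype.card_pos
  rw [div_rpow (sum_nonneg fun ω _ => h₁ ω) hcard.le,
    div_rpow (sum_nonneg fun ω _ => h₂ ω) hcard.le,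
    div_mul_div_comm, ← rpow_add hcard, hst, rpow_one]
  gcongr

lemma rpow_mul_rpow_pow_mul_pow {x y s t : ℝ} (hx : 0 ≤ x) (hy : 0 ≤ y) (hs : 0 ≤ s) (ht : 0 ≤ t)
    {a b a₁ b₁ a₂ b₂ : ℕ} (ha : (a₁ : ℝ) * s + a₂ * t = a) (hb : (b₁ : ℝ) * s + b₂ * t = b) :
    (x ^ a₁ * y ^ b₁) ^ s * (x ^ a₂ * y ^ b₂) ^ t = x ^ a * y ^ b := by
  have hpow {z : ℝ} (hz : 0 ≤ z) {c c₁ c₂ : ℕ} (hc : (c₁ : ℝ) * s + c₂ * t = c) :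
      (z ^ c₁) ^ s * (z ^ c₂) ^ t = z ^ c := by
    rw [← rpow_natCast, ← rpow_natCast, ← rpow_mul hz, ← rpow_mul hz,
      ← rpow_add_of_nonneg hz (by positivity) (by positivity), hc, rpow_natCast]
  rw [mul_rpow (by positivity) (by positivity), mul_rpow (by positivity) (by positivity),
    mul_mul_mul_comm, hpow hx ha, hpow hy hb]

lemma expect_pow_mul_pow_le {f₁ f₂ : Ω → ℝ} (h₁ : 0 ≤ f₁) (h₂ : 0 ≤ f₂) {a b : ℕ}
    (hab : a + b ≠ 0) :
    𝔼 ω, f₁ ω ^ a * f₂ ω ^ b ≤ wNorm 1 (a + b) f₁ ^ a * wNorm 1 (a + b) f₂ ^ b := by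
  have hab' : (a : ℝ) + b ≠ 0 := by exact_mod_cast hab
  have hsum : (a : ℝ) / (a + b) + b / (a + b) = 1 := by field_simp
  have hexp (c : ℕ) : ((a + b : ℕ) : ℝ) * (c / (a + b)) = c := by
    push_cast
    field_simp
  have hHolder := expect_rpow_mul_rpow_le (f₁ := fun ω => f₁ ω ^ (a + b))
    (f₂ := fun ω => f₂ ω ^ (a + b)) (fun ω => pow_nonneg (h₁ ω) _) (fun ω => pow_nonneg (h₂ ω) _)
    (by positivity) (by positivity) hsum
  have hnorm {f : Ω → ℝ} (hf : 0 ≤ f) : 𝔼 ω, f ω ^ (a + b) = wNorm 1 (a + b) f ^ (a + b) := by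
    simp [wNorm_pow hab zero_le_one hf]
  have hroot {z : ℝ} (hz : 0 ≤ z) (c : ℕ) : (z ^ (a + b)) ^ ((c : ℝ) / (a + b)) = z ^ c := by
    rw [← rpow_natCast, ← rpow_mul hz, hexp, rpow_natCast]
  simpa only [hnorm h₁, hnorm h₂, hroot (h₁ _), hroot (h₂ _), hroot (wNorm_nonneg zero_le_one h₁),
    hroot (wNorm_nonneg zero_le_one h₂)] using hHolder

end WeightedNorm

lemma expect_comp_of_surjective {A B : Type*} [AddCommGroup A] [AddCommGroup B] [Fintype A]
    [Fintype B] (φ : A →+ B) (hφ : Function.Surjective φ) (f : B → ℝ) :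
    𝔼 a, f (φ a) = 𝔼 b, f b := by
  have translate_right (a : A) : 𝔼 b, f b = 𝔼 b, f (φ a + b) :=
    (Fintype.expect_equiv (Equiv.addLeft (φ a)) _ _ fun _ => rfl).symm
  have translate_left (b : B) : 𝔼 a, f (φ a) = 𝔼 a, f (φ a + b) := by
    obtain ⟨a₀, rfl⟩ := hφ b
    exact (Fintype.expect_equiv (Equiv.addRight a₀) _ _ fun a => by simp).symm
  calc 𝔼 a, f (φ a) = 𝔼 b : B, 𝔼 a, f (φ a + b) := by
        simp only [← translate_left, Fintype.expect_const]
    _ = 𝔼 a, 𝔼 b, f (φ a + b) := expect_comm _ _ _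
    _ = 𝔼 b, f b := by simp only [← translate_right, Fintype.expect_const]

/-- The critical exponent of decoupling for the moment curve of degree `k` is `k * (k + 1)`; it is
halved here because it is applied to squared absolute values. -/
def critExp (k : ℕ) : ℕ := k * (k + 1) / 2

lemma two_mul_critExp (k : ℕ) : 2 * critExp k = k * (k + 1) :=
  Nat.mul_div_cancel' (Nat.even_mul_succ_self k).two_dvd

lemma critExp_ne_zero {k : ℕ} (hk : 1 ≤ k) : critExp k ≠ 0 := by
  have := two_mul_critExp k
  intro h
  nlinarith

/-- Coefficient vectors `(α₁, …, α_k)` modulo `Q`, with `α_{i+1}` at index `i : Fin k`. -/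
abbrev Freq (k Q : ℕ) := Fin k → ZMod Q

section Phase

variable {k l Q : ℕ}

/-- The phase polynomial `α₁ x + ⋯ + α_k x ^ k` modulo `Q`. -/
def phase (α : Freq k Q) (x : ℤ) : ZMod Q := ∑ i, α i * (x : ZMod Q) ^ (i.val + 1)

lemma phase_add_sum_smul (α : Freq k Q) (θ : Freq l Q) (h : Fin l → Freq k Q) (x : ℤ) :
    phase (α + ∑ i, θ i • h i) x = phase α x + ∑ i, θ i * phase (h i) x := by
  simp only [phase, Pi.add_apply, add_mul, sum_add_distrib, Finset.sum_apply, Pi.smul_apply,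
    smul_eq_mul, sum_mul, mul_sum]
  rw [sum_comm]
  simp only [mul_assoc]

lemma phase_castHom {Q' : ℕ} (h : Q' ∣ Q) (θ : Freq l Q) (x : ℤ) :
    phase (fun i => ZMod.castHom h (ZMod Q') (θ i)) x = ZMod.castHom h (ZMod Q') (phase θ x) := by
  simp only [phase, map_sum, map_mul, map_pow, map_intCast]

lemma stdAddChar_mul_eq_castHom {e Q' : ℕ} [NeZero Q] [NeZero Q'] (hQ : Q = e * Q')
    (t : ZMod Q) : ZMod.stdAddChar ((e : ZMod Q) * t)
      = ZMod.stdAddChar (ZMod.castHom (Dvd.intro_left e hQ.symm) (ZMod Q') t) := by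
  obtain ⟨z, rfl⟩ := ZMod.intCast_surjective t
  have he : (e : ℂ) ≠ 0 := by
    rintro h
    exact NeZero.ne Q (by simp [hQ, Nat.cast_eq_zero.1 h])
  have hcast : ZMod.castHom (Dvd.intro_left e hQ.symm) (ZMod Q') (z : ZMod Q) = z :=
    map_intCast _ z
  rw [show (e : ZMod Q) * (z : ZMod Q) = ((e * z : ℤ) : ZMod Q) by push_cast; rfl, hcast,
    ZMod.stdAddChar_coe, ZMod.stdAddChar_coe, hQ]
  congr 1
  push_cast
  field_simp

variable [NeZero Q]

/-- The exponential sum `∑ x ∈ s, a x * e(phase α x / Q)`. -/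
def expSum (a : ℤ → ℂ) (s : Finset ℤ) (α : Freq k Q) : ℂ :=
  ∑ x ∈ s, a x * ZMod.stdAddChar (phase α x)

/-- The squared absolute value of the exponential sum. -/
def energy (a : ℤ → ℂ) (s : Finset ℤ) (α : Freq k Q) : ℝ := ‖expSum a s α‖ ^ 2

lemma energy_nonneg (a : ℤ → ℂ) (s : Finset ℤ) : 0 ≤ (energy a s : Freq k Q → ℝ) :=
  fun _ => sq_nonneg _

lemma energy_empty (a : ℤ → ℂ) : (energy a ∅ : Freq k Q → ℝ) = 0 := by
  ext; simp [energy, expSum]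

lemma expSum_translate (a : ℤ → ℂ) (s : Finset ℤ) (α : Freq k Q) (θ : Freq l Q)
    (h : Fin l → Freq k Q) (c : Freq l Q) (f : ℤ → ZMod Q)
    (hf : ∀ x ∈ s, ∑ i, θ i * phase (h i) x = ∑ i, θ i * c i + f x) :
    expSum a s (α + ∑ i, θ i • h i) = ZMod.stdAddChar (∑ i, θ i * c i) *
      ∑ x ∈ s, a x * ZMod.stdAddChar (phase α x) * ZMod.stdAddChar (f x) := by
  rw [expSum, mul_sum]
  refine sum_congr rfl fun x hx => ?_
  rw [phase_add_sum_smul, hf x hx, AddChar.map_add_eq_mul, AddChar.map_add_eq_mul]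
  ring

lemma energy_translate_of_phase_const (a : ℤ → ℂ) (s : Finset ℤ) (α : Freq k Q) (θ : Freq l Q)
    (h : Fin l → Freq k Q) (c : Freq l Q) (hc : ∀ x ∈ s, ∀ i, phase (h i) x = c i) :
    energy a s (α + ∑ i, θ i • h i) = energy a s α := by
  rw [energy, expSum_translate a s α θ h c 0 fun x hx => by simp [hc x hx], norm_mul,
    AddChar.norm_apply, one_mul]
  simp only [Pi.zero_apply, AddChar.map_zero_eq_one, mul_one]
  rfl

end Phase

section Decouples

variable {k q q' Q : ℕ}

/-- The elements of `s` that are congruent to `c` modulo `q`. -/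
def residueClass (s : Finset ℤ) (q : ℕ) (c : ZMod q) : Finset ℤ := {x ∈ s | (x : ZMod q) = c}

lemma mem_residueClass {s : Finset ℤ} {c : ZMod q} {x : ℤ} :
    x ∈ residueClass s q c ↔ x ∈ s ∧ (x : ZMod q) = c := by
  simp [residueClass]

lemma residueClass_residueClass {s : Finset ℤ} (h : q ∣ q') (c : ZMod q) (c' : ZMod q') :
    residueClass (residueClass s q c) q' c'
      = if ZMod.castHom h (ZMod q) c' = c then residueClass s q' c' else ∅ := by
  split_ifs with hc
  · ext x
    simp only [mem_residueClass, and_congr_left_iff, and_iff_left_iff_imp]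
    rintro rfl -
    rw [← hc, map_intCast]
  · refine filter_eq_empty_iff.2 fun x hx hxc => hc ?_
    rw [← hxc, map_intCast, (mem_residueClass.1 hx).2]

variable [NeZero q] [NeZero Q]

lemma expSum_eq_sum_residueClass (a : ℤ → ℂ) (s : Finset ℤ) (q : ℕ) [NeZero q] (α : Freq k Q) :
    expSum a s α = ∑ c : ZMod q, expSum a (residueClass s q c) α :=
  (sum_fiberwise s (fun x : ℤ => (x : ZMod q)) _).symm

lemma energy_le_sum_energy_residueClass (a : ℤ → ℂ) (s : Finset ℤ) (q : ℕ) [NeZero q]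
    (α : Freq k Q) : energy a s α ≤ q * ∑ c : ZMod q, energy a (residueClass s q c) α := by
  have hCauchy := sq_sum_le_card_mul_sum_sq (s := univ)
    (f := fun c : ZMod q => ‖expSum a (residueClass s q c) α‖)
  rw [card_univ, ZMod.card] at hCauchy
  rw [energy, expSum_eq_sum_residueClass a s q]
  exact (pow_le_pow_left₀ (norm_nonneg _) (norm_sum_le _ _) 2).trans hCauchy

/-- The `ℓ¹` sum over the residue classes modulo `q` of the weighted `L^r` norms of the energies
(the squared `ℓ²L^{2r}` norm in the usual normalisation of decoupling). -/
def classNormSum (g : Freq k Q → ℝ) (r : ℕ) (a : ℤ → ℂ) (s : Finset ℤ) (q : ℕ) [NeZero q] : ℝ :=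
  ∑ c : ZMod q, wNorm g r (energy a (residueClass s q c))

variable {g : Freq k Q → ℝ} {r : ℕ} {a : ℤ → ℂ} {s : Finset ℤ} {W W' : ℝ}

lemma classNormSum_nonneg (hg : 0 ≤ g) : 0 ≤ classNormSum g r a s q :=
  sum_nonneg fun _ _ => wNorm_nonneg hg (energy_nonneg a _)

lemma sum_classNormSum_residueClass [NeZero q'] (hr : r ≠ 0) (h : q ∣ q') :
    ∑ c : ZMod q, classNormSum g r a (residueClass s q c) q' = classNormSum g r a s q' := by
  simp only [classNormSum, residueClass_residueClass h]
  rw [sum_comm]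
  refine sum_congr rfl fun c' _ => ?_
  simp only [apply_ite (energy a), apply_ite (wNorm g r), energy_empty, wNorm_zero hr, sum_ite_eq,
    mem_univ, if_true]

/-- `ℓ²` decoupling, with constant `W`, of the exponential sum over `s` into its residue classes
modulo `q`, in the weighted `L^{2r}` norm. -/
def Decouples (g : Freq k Q → ℝ) (r : ℕ) (a : ℤ → ℂ) (s : Finset ℤ) (q : ℕ) [NeZero q]
    (W : ℝ) : Prop :=
  wNorm g r (energy a s) ≤ W * classNormSum g r a s q

namespace Decouples

lemma mono (hg : 0 ≤ g) (h : Decouples g r a s q W) (hW : W ≤ W') : Decouples g r a s q W' :=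
  h.trans (mul_le_mul_of_nonneg_right hW (classNormSum_nonneg hg))

lemma trivial (hg : 0 ≤ g) (hr : r ≠ 0) : Decouples g r a s q q := by
  rw [Decouples, classNormSum, mul_sum]
  simp_rw [← wNorm_const_mul hr hg (energy_nonneg a _) (Nat.cast_nonneg q)]
  refine (wNorm_mono hg (energy_nonneg a s) fun α => ?_).trans
    (wNorm_sum_le hr hg fun c α => mul_nonneg q.cast_nonneg (energy_nonneg a _ α))
  simpa only [Finset.sum_apply, mul_sum] using energy_le_sum_energy_residueClass a s q α

lemma comp [NeZero q'] (hr : r ≠ 0) (hq : q ∣ q') (hW : 0 ≤ W) (h : Decouples g r a s q W)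
    (h' : ∀ c : ZMod q, Decouples g r a (residueClass s q c) q' W') :
    Decouples g r a s q' (W * W') := by
  calc wNorm g r (energy a s)
      ≤ W * ∑ c : ZMod q, W' * classNormSum g r a (residueClass s q c) q' :=
        h.trans (mul_le_mul_of_nonneg_left (sum_le_sum fun c _ => h' c) hW)
    _ = W * W' * classNormSum g r a s q' := by
        rw [← mul_sum, sum_classNormSum_residueClass hr hq, mul_assoc]

end Decouples

/-- `ℓ²` decoupling at the critical exponent, with constant `D`, for the moment curve of degree
`k` into residue classes modulo `q`. -/
def DecouplingBound (k q : ℕ) [NeZero q] (D : ℝ) : Prop :=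
  ∀ (a : ℤ → ℂ) (s : Finset ℤ), Decouples (1 : Freq k (q ^ k) → ℝ) (critExp k) a s q D

end Decouples

section Transfer

variable {k l m q q' e Q : ℕ}

lemma affine_injective (ξ : ℤ) (m : ℕ) [NeZero m] :
    Function.Injective fun y : ℤ => ξ + m * y := fun _ _ hxy =>
  mul_left_cancel₀ (Nat.cast_ne_zero.2 (NeZero.ne m)) (add_left_cancel hxy)

/-- The set of `y` with `ξ + m * y ∈ s`: it rescales a part of `s` lying in a residue class
modulo `m` to unit spacing. -/
def pullback (s : Finset ℤ) (ξ : ℤ) (m : ℕ) [NeZero m] : Finset ℤ :=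
  s.preimage (fun y => ξ + m * y) (affine_injective ξ m).injOn

lemma exists_eq_add_mul {x ξ : ℤ} (h : (x : ZMod m) = ξ) : ∃ y : ℤ, ξ + m * y = x := by
  obtain ⟨y, hy⟩ := (ZMod.intCast_eq_intCast_iff_dvd_sub ξ x m).1 h.symm
  exact ⟨y, by linarith⟩

variable [NeZero m]

lemma sum_pullback {s : Finset ℤ} {ξ : ℤ} (hs : ∀ x ∈ s, (x : ZMod m) = ξ) (f : ℤ → ℂ) :
    ∑ y ∈ pullback s ξ m, f (ξ + m * y) = ∑ x ∈ s, f x :=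
  sum_preimage _ _ _ _ fun x hx hx' => (hx' (exists_eq_add_mul (hs x hx))).elim

lemma intCast_affine_eq_iff (hq' : q' = m * q) (ξ x y : ℤ) :
    ((ξ + m * x : ℤ) : ZMod q') = (ξ + m * y : ℤ) ↔ (x : ZMod q) = y := by
  rw [ZMod.intCast_eq_intCast_iff_dvd_sub, ZMod.intCast_eq_intCast_iff_dvd_sub, hq',
    add_sub_add_left_eq_sub, ← mul_sub, Nat.cast_mul,
    mul_dvd_mul_iff_left (Nat.cast_ne_zero.2 (NeZero.ne m))]

lemma pullback_residueClass (hq' : q' = m * q) (s : Finset ℤ) (ξ y : ℤ) :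
    pullback (residueClass s q' ((ξ + m * y : ℤ) : ZMod q')) ξ m
      = residueClass (pullback s ξ m) q (y : ZMod q) := by
  ext x
  simp only [pullback, mem_preimage, mem_residueClass, intCast_affine_eq_iff hq']

variable [NeZero q] [NeZero Q]

/-- The coefficients on `pullback s ξ m` obtained from the coefficients `a`, twisted by `α`. -/
def twist (a : ℤ → ℂ) (α : Freq k Q) (ξ : ℤ) (m : ℕ) (y : ℤ) : ℂ :=
  a (ξ + m * y) * ZMod.stdAddChar (phase α (ξ + m * y))

lemma energy_translate_eq_energy_pullback (hQ : Q = e * q ^ l) (a : ℤ → ℂ) {s : Finset ℤ} {ξ : ℤ}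
    (hs : ∀ x ∈ s, (x : ZMod m) = ξ) {h : Fin l → Freq k Q} {c : Freq l Q}
    (hh : ∀ i (y : ℤ), phase (h i) (ξ + m * y) = c i + e * (y : ZMod Q) ^ (i.val + 1))
    (α : Freq k Q) (θ : Freq l Q) :
    energy a s (α + ∑ i, θ i • h i) = energy (twist a α ξ m) (pullback s ξ m)
      (fun i => ZMod.castHom (Dvd.intro_left e hQ.symm) (ZMod (q ^ l)) (θ i)) := by
  have hm : (m : ℤ) ≠ 0 := Nat.cast_ne_zero.2 (NeZero.ne m)
  rw [energy, expSum_translate a s α θ h c (fun x => e * phase θ ((x - ξ) / m)), norm_mul,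
    AddChar.norm_apply, one_mul, energy, expSum, ← sum_pullback hs]
  · simp only [add_sub_cancel_left, Int.mul_ediv_cancel_left _ hm, stdAddChar_mul_eq_castHom hQ,
      phase_castHom, twist]
  · intro x hx
    obtain ⟨y, rfl⟩ := exists_eq_add_mul (hs x hx)
    simp only [hh, add_sub_cancel_left, Int.mul_ediv_cancel_left _ hm, mul_add, sum_add_distrib]
    simp only [phase, mul_sum, mul_left_comm]

lemma wNorm_energy_eq_wNorm_pullback (hQ : Q = e * q ^ l) (hl : 1 ≤ l) {g : Freq k Q → ℝ}
    (a : ℤ → ℂ) {s : Finset ℤ} {ξ : ℤ} (hs : ∀ x ∈ s, (x : ZMod m) = ξ) {h : Fin l → Freq k Q}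
    {c : Freq l Q}
    (hh : ∀ i (y : ℤ), phase (h i) (ξ + m * y) = c i + e * (y : ZMod Q) ^ (i.val + 1))
    (hinv : ∀ (α : Freq k Q) (θ : Freq l Q), g (α + ∑ i, θ i • h i) = g α) :
    wNorm g (critExp l) (energy a s) = wNorm g (critExp l) fun α =>
      wNorm (1 : Freq l (q ^ l) → ℝ) (critExp l) (energy (twist a α ξ m) (pullback s ξ m)) := by
  set r := critExp l
  let φ : Freq l Q →+ Freq l (q ^ l) :=
    (ZMod.castHom (Dvd.intro_left e hQ.symm) (ZMod (q ^ l))).toAddMonoidHom.compLeft (Fin l)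
  have hφ : Function.Surjective φ := (ZMod.castHom_surjective (Dvd.intro_left e hQ.symm)).comp_left
  have translate (θ : Freq l Q) : 𝔼 α, g α * energy a s α ^ r
      = 𝔼 α, g α * energy (twist a α ξ m) (pullback s ξ m) (φ θ) ^ r := by
    rw [← Fintype.expect_equiv (Equiv.addRight (∑ i, θ i • h i)) _ _ fun _ => rfl]
    refine expect_congr rfl fun α _ => ?_
    simp only [Equiv.coe_addRight, hinv, energy_translate_eq_energy_pullback hQ a hs hh]
    rfl
  unfold wNorm
  congr 1
  calc 𝔼 α, g α * energy a s α ^ r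
      = 𝔼 θ : Freq l Q, 𝔼 α, g α * energy (twist a α ξ m) (pullback s ξ m) (φ θ) ^ r := by
        simp only [← translate, Fintype.expect_const]
    _ = 𝔼 α, g α * 𝔼 θ : Freq l Q, energy (twist a α ξ m) (pullback s ξ m) (φ θ) ^ r := by
        rw [expect_comm]
        simp only [mul_expect]
    _ = 𝔼 α, g α *
          wNorm (1 : Freq l (q ^ l) → ℝ) r (energy (twist a α ξ m) (pullback s ξ m)) ^ r := by
        refine expect_congr rfl fun α _ => ?_
        rw [wNorm_pow (critExp_ne_zero hl) zero_le_one (energy_nonneg _ _)]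
        simp only [Pi.one_apply, one_mul]
        rw [expect_comp_of_surjective φ hφ fun β => energy (twist a α ξ m) (pullback s ξ m) β ^ r]

lemma DecouplingBound.decouples_of_directions [NeZero q'] {D : ℝ} (hD : DecouplingBound l q D)
    (hD0 : 0 ≤ D) (hl : 1 ≤ l) (hQ : Q = e * q ^ l) (hq' : q' = m * q) {g : Freq k Q → ℝ}
    (hg : 0 ≤ g) {a : ℤ → ℂ} {s : Finset ℤ} {ξ : ℤ} (hs : ∀ x ∈ s, (x : ZMod m) = ξ)
    {h : Fin l → Freq k Q} {c : Freq l Q}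
    (hh : ∀ i (y : ℤ), phase (h i) (ξ + m * y) = c i + e * (y : ZMod Q) ^ (i.val + 1))
    (hinv : ∀ (α : Freq k Q) (θ : Freq l Q), g (α + ∑ i, θ i • h i) = g α) :
    Decouples g (critExp l) a s q' D := by
  have hr := critExp_ne_zero hl
  set r := critExp l
  have inner_nonneg (t : Finset ℤ) : 0 ≤ fun α : Freq k Q =>
      wNorm (1 : Freq l (q ^ l) → ℝ) r (energy (twist a α ξ m) t) :=
    fun α => wNorm_nonneg zero_le_one (energy_nonneg _ _)
  let class_of (c : ZMod q) : ZMod q' := ((ξ + m * (c.val : ℤ) : ℤ) : ZMod q')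
  have class_injective : Function.Injective class_of := fun c c' hcc => by
    simpa using (intCast_affine_eq_iff hq' ξ c.val c'.val).1 hcc
  calc wNorm g r (energy a s)
      = wNorm g r fun α => wNorm 1 r (energy (twist a α ξ m) (pullback s ξ m)) :=
        wNorm_energy_eq_wNorm_pullback hQ hl a hs hh hinv
    _ ≤ wNorm g r (fun α => D * ∑ c : ZMod q, wNorm 1 r
          (energy (twist a α ξ m) (residueClass (pullback s ξ m) q c))) :=
        wNorm_mono hg (inner_nonneg _) fun α => hD _ _
    _ = D * wNorm g r (∑ c : ZMod q, fun α => wNorm 1 r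
          (energy (twist a α ξ m) (residueClass (pullback s ξ m) q c))) := by
        rw [← wNorm_const_mul hr hg (Finset.sum_nonneg fun c _ => inner_nonneg _) hD0]
        simp only [Finset.sum_apply]
    _ ≤ D * ∑ c : ZMod q, wNorm g r (fun α => wNorm 1 r
          (energy (twist a α ξ m) (residueClass (pullback s ξ m) q c))) := by
        gcongr
        exact wNorm_sum_le hr hg fun c => inner_nonneg _
    _ = D * ∑ c : ZMod q, wNorm g r (energy a (residueClass s q' (class_of c))) := by
        congr 1
        refine sum_congr rfl fun c _ => ?_
        rw [wNorm_energy_eq_wNorm_pullback hQ hl a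
          (fun x hx => hs x (mem_residueClass.1 hx).1) hh hinv, pullback_residueClass hq']
        simp [r]
    _ ≤ D * classNormSum g r a s q' := by
        gcongr
        rw [← sum_image (f := fun c => wNorm g r (energy a (residueClass s q' c)))
          class_injective.injOn]
        exact sum_le_univ_sum_of_nonneg fun c => wNorm_nonneg hg (energy_nonneg a _)

end Transfer

section Directions

open Polynomial

lemma exists_derivative_eq {R : Type*} [CommRing R] {k : ℕ}
    (hu : ∀ j : ℕ, 1 ≤ j → j ≤ k → IsUnit (j : R)) {g : R[X]} (hg : g.natDegree < k) :
    ∃ P : R[X], derivative P = g ∧ P.natDegree ≤ k := by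
  refine ⟨∑ j ∈ range k, monomial (j + 1) (g.coeff j * Ring.inverse ((j + 1 : ℕ) : R)), ?_,
    natDegree_sum_le_of_forall_le _ _ fun j hj =>
      (natDegree_monomial_le _).trans (mem_range.1 hj)⟩
  rw [derivative_sum]
  conv_rhs => rw [g.as_sum_range' k hg]
  refine sum_congr rfl fun j hj => ?_
  rw [derivative_monomial, mul_assoc, Nat.add_sub_cancel,
    Ring.inverse_mul_cancel _ (hu (j + 1) (by omega) (mem_range.1 hj)), mul_one]

lemma exists_taylor_expansion {R : Type*} [CommRing R] {e : ℕ}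
    (hu : ∀ j : ℕ, 1 ≤ j → j ≤ e → IsUnit (j : R)) {P f : R[X]} {t : R}
    (hP : derivative P = (X - C t) ^ e * f) :
    ∃ d : R, (e + 1 : ℕ) * d = f.eval t ∧
      ∀ u, ∃ E, P.eval (t + u) = P.eval t + d * u ^ (e + 1) + u ^ (e + 2) * E := by
  have hderiv : derivative (taylor t P) = X ^ e * taylor t f := by
    have hcomm : derivative (taylor t P) = taylor t (derivative P) := by
      simp [taylor_apply, derivative_comp]
    rw [hcomm, hP, taylor_mul]
    simp
  have hcoeff (j : ℕ) :
      (taylor t P).coeff (j + 1) * (j + 1 : ℕ) = (X ^ e * taylor t f).coeff j := by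
    rw [← hderiv, coeff_derivative, Nat.cast_succ]
  have hdvd : X ^ (e + 2) ∣
      taylor t P - C (P.eval t) - C ((taylor t P).coeff (e + 1)) * X ^ (e + 1) := by
    refine X_pow_dvd_iff.2 fun j hj => ?_
    rcases j with _ | j
    · simp [coeff_X_pow]
    · rcases eq_or_ne j e with rfl | hje
      · simp
      · have hzero : (taylor t P).coeff (j + 1) * (j + 1 : ℕ) = 0 := by
          rw [hcoeff, coeff_X_pow_mul', if_neg (by omega)]
        simp [coeff_X_pow, hje, (hu (j + 1) (by omega) (by omega)).mul_left_eq_zero.1 hzero]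
  refine ⟨(taylor t P).coeff (e + 1), ?_, fun u => ?_⟩
  · rw [mul_comm, hcoeff, coeff_X_pow_mul']
    simp
  · obtain ⟨E, hE⟩ := hdvd
    have heval := congrArg (eval u) hE
    simp only [eval_sub, eval_mul, eval_pow, eval_X, eval_C, taylor_eval, add_comm u t] at heval
    exact ⟨E.eval u, by linear_combination heval⟩

/- An antiderivative of `(X - η) ^ (k - l) * (X - ξ) ^ i`, suitably normalised. -/
lemma exists_polynomial_separating {R : Type*} [CommRing R] {k l i : ℕ} (hil : i < l) (hlk : l ≤ k)
    (hu : ∀ j : ℕ, 1 ≤ j → j ≤ k → IsUnit (j : R)) {ξ η : R} (hξη : IsUnit (ξ - η)) :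
    ∃ P : R[X], P.natDegree ≤ k ∧
      (∀ u, ∃ E, P.eval (ξ + u) = P.eval ξ + u ^ (i + 1) + u ^ (i + 2) * E) ∧
      ∀ u, ∃ E, P.eval (η + u) = P.eval η + u ^ (k - l + 1) * E := by
  have hdeg : ((X - C η) ^ (k - l) * (X - C ξ) ^ i).natDegree < k := by
    refine natDegree_mul_le.trans_lt ?_
    have hη := natDegree_pow_le_of_le (k - l) (natDegree_X_sub_C_le η)
    have hξ := natDegree_pow_le_of_le i (natDegree_X_sub_C_le ξ)
    omega
  obtain ⟨P, hP, hPdeg⟩ := exists_derivative_eq hu hdeg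
  obtain ⟨d, hd, hPξ⟩ := exists_taylor_expansion (fun j h1 h2 => hu j h1 (by omega))
    (hP.trans (mul_comm _ _))
  obtain ⟨d', -, hPη⟩ := exists_taylor_expansion (fun j h1 h2 => hu j h1 (by omega)) hP
  have hd_unit : IsUnit d := by
    refine isUnit_of_mul_isUnit_right (x := ((i + 1 : ℕ) : R)) ?_
    rw [hd]
    simpa using hξη.pow (k - l)
  obtain ⟨v, hv⟩ := hd_unit.exists_left_inv
  refine ⟨C v * P, (natDegree_C_mul_le _ _).trans hPdeg, fun u => ?_, fun u => ?_⟩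
  · obtain ⟨E, hE⟩ := hPξ u
    refine ⟨v * E, ?_⟩
    simp only [eval_mul, eval_C, hE]
    linear_combination u ^ (i + 1) * hv
  · obtain ⟨E, hE⟩ := hPη u
    refine ⟨v * (d' + u * E), ?_⟩
    simp only [eval_mul, eval_C, hE]
    ring

variable {k l m b q q' e Q : ℕ}

/-- The coefficients of degree `1, …, k` of a polynomial over `ZMod Q`. -/
def freqOfPolynomial (k : ℕ) (P : (ZMod Q)[X]) : Freq k Q := fun i => P.coeff (i.val + 1)

lemma phase_freqOfPolynomial {P : (ZMod Q)[X]} (hP : P.natDegree ≤ k) (x : ℤ) :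
    phase (freqOfPolynomial k P) x = P.eval (x : ZMod Q) - P.coeff 0 := by
  rw [eval_eq_sum_range' (Nat.lt_succ_of_le hP), sum_range_succ', phase]
  simp only [freqOfPolynomial]
  rw [Fin.sum_univ_eq_sum_range fun i => P.coeff (i + 1) * (x : ZMod Q) ^ (i + 1)]
  simp

lemma exists_direction_separating {i : ℕ} (hil : i < l) (hlk : l ≤ k)
    (hu : ∀ j : ℕ, 1 ≤ j → j ≤ k → IsUnit (j : ZMod Q)) {ξ η : ℤ}
    (hξη : IsUnit ((ξ - η : ℤ) : ZMod Q)) (hQ : Q = e * q ^ l) (hme : m ^ l ∣ e) (hqm : q ^ l ∣ m)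
    (hb : (m * q) ^ l ∣ b ^ (k - l + 1)) :
    ∃ (h : Freq k Q) (c c' : ZMod Q),
      (∀ y : ℤ, phase h (ξ + m * y) = c + e * (y : ZMod Q) ^ (i + 1)) ∧
      ∀ y : ℤ, (y : ZMod b) = η → phase h y = c' := by
  obtain ⟨P, hPdeg, hPξ, hPη⟩ :=
    exists_polynomial_separating hil hlk hu (by exact_mod_cast hξη : IsUnit ((ξ : ZMod Q) - η))
  obtain ⟨w, hw⟩ : m ^ (i + 1) ∣ e := (pow_dvd_pow m hil).trans hme
  have hQ_dvd_ξ : Q ∣ w * m ^ (i + 2) := by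
    rw [hQ, pow_succ m (i + 1), ← mul_assoc, mul_comm w, ← hw]
    exact mul_dvd_mul_left e hqm
  have hQ_dvd_η : Q ∣ w * b ^ (k - l + 1) := by
    refine dvd_trans ?_ (mul_dvd_mul_left w hb)
    rw [hQ, hw, mul_pow, mul_comm _ w, mul_assoc]
    exact mul_dvd_mul_left w (mul_dvd_mul_right (pow_dvd_pow m hil) _)
  have hphase (x : ℤ) := phase_freqOfPolynomial ((natDegree_C_mul_le (w : ZMod Q) P).trans hPdeg) x
  simp only [eval_mul, eval_C] at hphase
  refine ⟨freqOfPolynomial k (C (w : ZMod Q) * P),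
    w * P.eval (ξ : ZMod Q) - (C (w : ZMod Q) * P).coeff 0,
    w * P.eval (η : ZMod Q) - (C (w : ZMod Q) * P).coeff 0, fun y => ?_, fun y hy => ?_⟩
  · obtain ⟨E, hE⟩ := hPξ (m * y)
    have hvanish := (ZMod.natCast_eq_zero_iff _ _).2 hQ_dvd_ξ
    rw [hphase, hw]
    push_cast at hvanish ⊢
    rw [hE]
    linear_combination (y : ZMod Q) ^ (i + 2) * E * hvanish
  · obtain ⟨z, hz⟩ := (ZMod.intCast_eq_intCast_iff_dvd_sub η y b).1 hy.symm
    obtain ⟨E, hE⟩ := hPη (b * z)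
    have hvanish := (ZMod.natCast_eq_zero_iff _ _).2 hQ_dvd_η
    rw [hphase, show y = η + b * z by linarith]
    push_cast at hvanish ⊢
    rw [hE]
    linear_combination (z : ZMod Q) ^ (k - l + 1) * E * hvanish

variable [NeZero q] [NeZero m] [NeZero q'] [NeZero Q] {D : ℝ}

/- The weight `energy a t ^ r` is invariant under a family of translations that act on the rest of
the sum like the full group of coefficient vectors of degree `l`. -/
lemma DecouplingBound.decouples_of_separated (hD : DecouplingBound l q D) (hD0 : 0 ≤ D)
    (hl : 1 ≤ l) (hlk : l ≤ k) (hu : ∀ j : ℕ, 1 ≤ j → j ≤ k → IsUnit (j : ZMod Q)) {ξ η : ℤ}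
    (hξη : IsUnit ((ξ - η : ℤ) : ZMod Q)) (hQ : Q = e * q ^ l) (hme : m ^ l ∣ e) (hqm : q ^ l ∣ m)
    (hb : (m * q) ^ l ∣ b ^ (k - l + 1)) (hq' : q' = m * q) (a : ℤ → ℂ) {s t : Finset ℤ}
    (hs : ∀ x ∈ s, (x : ZMod m) = ξ) (ht : ∀ y ∈ t, (y : ZMod b) = η) (r : ℕ) :
    Decouples (fun α : Freq k Q => energy a t α ^ r) (critExp l) a s q' D := by
  choose h c c' hξ hη using fun i : Fin l =>
    exists_direction_separating i.2 hlk hu hξη hQ hme hqm hb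
  refine hD.decouples_of_directions hD0 hl hQ hq' (fun α => pow_nonneg (energy_nonneg a t α) r) hs
    hξ fun α θ => ?_
  rw [energy_translate_of_phase_const a t α θ h c' fun y hy i => hη i y (ht y hy)]

lemma DecouplingBound.decouples_of_residueClass (hD : DecouplingBound k q D) (hD0 : 0 ≤ D)
    (hk : 1 ≤ k) (hQ : Q = (m * q) ^ k) (hq' : q' = m * q) (a : ℤ → ℂ) {s : Finset ℤ} {ξ : ℤ}
    (hs : ∀ x ∈ s, (x : ZMod m) = ξ) :
    Decouples (1 : Freq k Q → ℝ) (critExp k) a s q' D := by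
  let P (i : Fin k) : (ZMod Q)[X] :=
    C ((m : ZMod Q) ^ (k - (i.val + 1))) * (X - C (ξ : ZMod Q)) ^ (i.val + 1)
  have hdeg (i : Fin k) : (P i).natDegree ≤ k := by
    have := natDegree_pow_le_of_le (i.val + 1) (natDegree_X_sub_C_le (ξ : ZMod Q))
    exact (natDegree_C_mul_le _ _).trans (by omega)
  refine hD.decouples_of_directions hD0 hk (hQ.trans (mul_pow m q k)) hq' zero_le_one hs
    (h := fun i => freqOfPolynomial k (P i)) (c := fun i => -(P i).coeff 0) (fun i y => ?_)
    fun _ _ => rfl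
  have hsplit :
      (m : ZMod Q) ^ k = (m : ZMod Q) ^ (k - (i.val + 1)) * (m : ZMod Q) ^ (i.val + 1) := by
    rw [← pow_add, Nat.sub_add_cancel i.2]
  rw [phase_freqOfPolynomial (hdeg i), Nat.cast_pow, hsplit]
  simp only [P, eval_mul, eval_C, eval_pow, eval_sub, eval_X]
  push_cast
  ring

end Directions

section Exponents

lemma eventually_le_rpow {b : ℝ} (hb : 1 < b) (A : ℝ) {ε : ℝ} (hε : 0 < ε) :
    ∀ᶠ n : ℕ in Filter.atTop, A ≤ b ^ (ε * n) :=
  ((tendsto_rpow_atTop_of_base_gt_one b hb).comp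
    (tendsto_natCast_atTop_atTop.const_mul_atTop hε)).eventually_ge_atTop A

variable {p : ℕ}

/-- The decoupling constants of degree `k` modulo `p ^ n` are at most `p ^ (x * n + o(n))`. -/
def DecouplingExponent (p k : ℕ) [NeZero p] (x : ℝ) : Prop :=
  ∀ ε > 0, ∀ᶠ n : ℕ in Filter.atTop, DecouplingBound k (p ^ n) ((p : ℝ) ^ ((x + ε) * n))

variable [Fact p.Prime]

lemma one_lt_cast_prime : (1 : ℝ) < p := by exact_mod_cast (Fact.out : p.Prime).one_lt

lemma cast_prime_pos : (0 : ℝ) < p := zero_lt_one.trans one_lt_cast_prime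

lemma DecouplingBound.mono {k q : ℕ} [NeZero q] {D D' : ℝ} (hD : DecouplingBound k q D)
    (h : D ≤ D') : DecouplingBound k q D' :=
  fun a s => (hD a s).mono zero_le_one h

lemma isUnit_intCast_primePow {x : ℤ} (hx : (x : ZMod p) ≠ 0) (n k : ℕ) :
    IsUnit (x : ZMod ((p ^ n) ^ k)) := by
  rw [ZMod.coe_int_isUnit_iff_isCoprime]
  push_cast
  refine (IsCoprime.pow_left ?_).pow_left
  rw [← ZMod.coe_int_isUnit_iff_isCoprime]
  exact hx.isUnit

lemma isUnit_natCast_primePow {j : ℕ} (hj : 1 ≤ j) (hjp : j < p) (n k : ℕ) :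
    IsUnit (j : ZMod ((p ^ n) ^ k)) := by
  have hj' : ((j : ℤ) : ZMod p) ≠ 0 := by
    rw [Int.cast_natCast, Ne, ZMod.natCast_eq_zero_iff]
    exact Nat.not_dvd_of_pos_of_lt hj hjp
  simpa using isUnit_intCast_primePow hj' n k

lemma Decouples.empty {k Q q r : ℕ} [NeZero Q] [NeZero q] {g : Freq k Q → ℝ} {W : ℝ}
    (hg : 0 ≤ g) (hr : r ≠ 0) (hW : 0 ≤ W) (a : ℤ → ℂ) : Decouples g r a ∅ q W := by
  rw [Decouples, energy_empty, wNorm_zero hr]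
  exact mul_nonneg hW (classNormSum_nonneg hg)

end Exponents

section Separated

variable {p k l : ℕ} [Fact p.Prime]

lemma DecouplingBound.decouples_separated_residueClass {i i' j n : ℕ} {D : ℝ}
    (hD : DecouplingBound l (p ^ i) D) (hD0 : 0 ≤ D) (hl : 1 ≤ l) (hlk : l ≤ k) (hkp : k < p)
    (hii' : l * i ≤ i') (hn : i' + i ≤ n) (hj : l * (i' + i) ≤ (k - l + 1) * j)
    (a : ℤ → ℂ) {s t : Finset ℤ} {η : ℤ} (hs : ∀ x ∈ s, (x : ZMod p) ≠ η)
    (ht : ∀ y ∈ t, (y : ZMod (p ^ j)) = η) (r : ℕ) (c : ZMod (p ^ i')) :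
    Decouples (fun α : Freq k ((p ^ n) ^ k) => energy a t α ^ r) (critExp l) a
      (residueClass s (p ^ i') c) (p ^ (i' + i)) D := by
  rcases (residueClass s (p ^ i') c).eq_empty_or_nonempty with hempty | ⟨x, hx⟩
  · rw [hempty]
    exact Decouples.empty (fun α => pow_nonneg (energy_nonneg a t α) r) (critExp_ne_zero hl) hD0 a
  obtain ⟨hxs, rfl⟩ := mem_residueClass.1 hx
  have hsep : ((x - η : ℤ) : ZMod p) ≠ 0 := by
    rw [Int.cast_sub]
    exact sub_ne_zero.2 (hs x hxs)
  have hexp : l * (i' + i) ≤ k * n := Nat.mul_le_mul hlk hn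
  refine hD.decouples_of_separated (e := p ^ (k * n - l * i)) (m := p ^ i') (b := p ^ j) hD0 hl hlk
    (fun j hj hjk => isUnit_natCast_primePow hj (hjk.trans_lt hkp) n k)
    (isUnit_intCast_primePow hsep n k) ?_ ?_ ?_ ?_ (pow_add p i' i) a
    (fun y hy => (mem_residueClass.1 hy).2) ht r
  · rw [← pow_mul, ← pow_mul, ← pow_add]
    congr 1
    have : l * i ≤ k * n := le_trans (by gcongr; omega) hexp
    rw [mul_comm n, mul_comm i]
    omega
  · rw [← pow_mul]
    refine pow_dvd_pow p ?_
    rw [mul_add] at hexp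
    rw [mul_comm]
    omega
  · rw [← pow_mul, mul_comm]
    exact pow_dvd_pow p hii'
  · rw [← pow_add, ← pow_mul, ← pow_mul, mul_comm, mul_comm j]
    exact pow_dvd_pow p hj

lemma exists_decouples_of_separated (hl : 1 ≤ l) (hlk : l ≤ k) (hkp : k < p)
    (hexp : DecouplingExponent p l 0) {ε : ℝ} (hε : 0 < ε) :
    ∃ C : ℝ, ∀ m n j, m ≤ n → l * m ≤ (k - l + 1) * j → ∀ (a : ℤ → ℂ) (s t : Finset ℤ) (η : ℤ),
      (∀ x ∈ s, (x : ZMod p) ≠ η) → (∀ y ∈ t, (y : ZMod (p ^ j)) = η) → ∀ r,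
      Decouples (fun α : Freq k ((p ^ n) ^ k) => energy a t α ^ r) (critExp l) a s (p ^ m)
        (C * (p : ℝ) ^ (ε * m)) := by
  obtain ⟨n₀, hn₀⟩ := Filter.eventually_atTop.1 ((hexp ε hε).and (Filter.eventually_ge_atTop 1))
  have hp : (0 : ℝ) < p := cast_prime_pos
  have hr := critExp_ne_zero hl
  refine ⟨(p : ℝ) ^ ((l + 1) * n₀), fun m => ?_⟩
  induction m using Nat.strong_induction_on with
  | _ m ih =>
    intro n j hmn hj a s t η hs ht r
    have hg : 0 ≤ fun α : Freq k ((p ^ n) ^ k) => energy a t α ^ r :=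
      fun α => pow_nonneg (energy_nonneg a t α) r
    rcases lt_or_ge m ((l + 1) * n₀) with hm | hm
    · refine (Decouples.trivial hg hr).mono hg ?_
      rw [Nat.cast_pow]
      calc (p : ℝ) ^ m ≤ (p : ℝ) ^ ((l + 1) * n₀) * 1 := by
            rw [mul_one]
            exact pow_le_pow_right₀ one_lt_cast_prime.le hm.le
        _ ≤ _ := by
            gcongr
            exact one_le_rpow one_lt_cast_prime.le (by positivity)
    set i := m / (l + 1)
    have hi : n₀ ≤ i := (Nat.le_div_iff_mul_le l.succ_pos).2 (by rwa [mul_comm])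
    obtain ⟨hbound, hi1⟩ := hn₀ i hi
    have hlim : (l + 1) * i ≤ m := Nat.mul_div_le m (l + 1)
    obtain ⟨i', hi'⟩ : ∃ i', m = i' + i := ⟨m - i, by rw [Nat.sub_add_cancel]; nlinarith⟩
    have hii' : l * i ≤ i' := by linarith
    have hcoarse := ih i' (by omega) n j (by omega) (le_trans (by gcongr; omega) hj) a s t η hs ht r
    have hfine := hbound.decouples_separated_residueClass (by positivity) hl hlk hkp
      hii' (hi' ▸ hmn) (hi' ▸ hj) a hs ht r
    rw [hi']
    refine (hcoarse.comp hr (pow_dvd_pow p (by omega)) (by positivity) hfine).mono hg (le_of_eq ?_)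
    rw [mul_assoc, ← rpow_add hp]
    push_cast
    ring_nf

lemma eventually_decouples_of_separated (hl : 1 ≤ l) (hlk : l ≤ k) (hkp : k < p)
    (hexp : DecouplingExponent p l 0) {ε : ℝ} (hε : 0 < ε) :
    ∀ᶠ n : ℕ in Filter.atTop, ∀ m j, m ≤ n → l * m ≤ (k - l + 1) * j →
      ∀ (a : ℤ → ℂ) (s t : Finset ℤ) (η : ℤ),
      (∀ x ∈ s, (x : ZMod p) ≠ η) → (∀ y ∈ t, (y : ZMod (p ^ j)) = η) → ∀ r,
      Decouples (fun α : Freq k ((p ^ n) ^ k) => energy a t α ^ r) (critExp l) a s (p ^ m)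
        ((p : ℝ) ^ (ε * n)) := by
  obtain ⟨C, hC⟩ := exists_decouples_of_separated hl hlk hkp hexp (half_pos hε)
  have hp : (1 : ℝ) < p := one_lt_cast_prime
  filter_upwards [eventually_le_rpow hp C (half_pos hε)] with n hn m j hmn hj a s t η hs ht r
  refine (hC m n j hmn hj a s t η hs ht r).mono
    (fun α => pow_nonneg (energy_nonneg a t α) r) ?_
  calc C * (p : ℝ) ^ (ε / 2 * m) ≤ (p : ℝ) ^ (ε / 2 * n) * (p : ℝ) ^ (ε / 2 * n) := by
        gcongr
        exact hp.le
    _ = (p : ℝ) ^ (ε * n) := by rw [← rpow_add (by positivity)]; ring_nf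

end Separated

section Bilinear

variable {p k l n i j i' j' : ℕ} {B B' : ℝ}

/-- The right-hand side of decoupling at the critical exponent for degree `k` and modulus `q`. -/
abbrev decoupledNorm (k q : ℕ) [NeZero q] (a : ℤ → ℂ) (s : Finset ℤ) : ℝ :=
  classNormSum (1 : Freq k (q ^ k) → ℝ) (critExp k) a s q

/-- Bilinear decoupling with constant `B` for sums over a residue class modulo `p ^ i` and one
modulo `p ^ j` that are distinct modulo `p`; the first one carries `critExp l` of the `critExp k`
factors. -/
def BilinearBound (p k l n i j : ℕ) [NeZero p] (B : ℝ) : Prop :=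
  ∀ (a : ℤ → ℂ) (s t : Finset ℤ) (ξ η : ℤ), (ξ : ZMod p) ≠ η →
    (∀ x ∈ s, (x : ZMod (p ^ i)) = ξ) → (∀ y ∈ t, (y : ZMod (p ^ j)) = η) →
    𝔼 α : Freq k ((p ^ n) ^ k),
        energy a t α ^ (critExp k - critExp l) * energy a s α ^ critExp l ≤
      B * (decoupledNorm k (p ^ n) a t ^ (critExp k - critExp l) *
        decoupledNorm k (p ^ n) a s ^ critExp l)

lemma decoupledNorm_nonneg {q : ℕ} [NeZero q] (a : ℤ → ℂ) (s : Finset ℤ) :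
    0 ≤ decoupledNorm k q a s :=
  classNormSum_nonneg zero_le_one

lemma intCast_eq_of_dvd {m m' : ℕ} (h : m ∣ m') {x y : ℤ} (hxy : (x : ZMod m') = y) :
    (x : ZMod m) = y := by
  simpa using congrArg (ZMod.castHom h (ZMod m)) hxy

lemma critExp_strictMono : StrictMono critExp := fun l k h => by
  have := two_mul_critExp l
  have := two_mul_critExp k
  nlinarith

lemma critExp_interpolation {m : ℕ} (hlm : l + m = k) (hl : 1 ≤ l) :
    (critExp l : ℝ) * (m + 1) = (critExp k - critExp m : ℕ) + critExp (l - 1) * m ∧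
    ((critExp k - critExp l : ℕ) : ℝ) * (m + 1) =
      critExp m + (critExp k - critExp (l - 1) : ℕ) * m := by
  obtain ⟨i, rfl⟩ := Nat.exists_eq_add_of_le' hl
  have hval (d : ℕ) : (critExp d : ℝ) = d * (d + 1) / 2 := by
    have := two_mul_critExp d
    rw [eq_div_iff two_ne_zero, mul_comm]
    exact_mod_cast this
  have hcast {d : ℕ} (hd : d ≤ k) : ((critExp k - critExp d : ℕ) : ℝ) = critExp k - critExp d :=
    Nat.cast_sub (critExp_strictMono.monotone hd)
  rw [hcast (by omega), hcast (by omega), hcast (by omega)]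
  simp only [hval, ← hlm, Nat.add_sub_cancel]
  push_cast
  constructor <;> ring

lemma critExp_rpow_interpolation {m : ℕ} (hlm : l + m = k) (hl : 1 ≤ l) {x y : ℝ} (hx : 0 ≤ x)
    (hy : 0 ≤ y) :
    (x ^ critExp m * y ^ (critExp k - critExp m)) ^ (1 / (m + 1) : ℝ) *
        (x ^ (critExp k - critExp (l - 1)) * y ^ critExp (l - 1)) ^ (m / (m + 1) : ℝ) =
      x ^ (critExp k - critExp l) * y ^ critExp l := by
  obtain ⟨hs, ht⟩ := critExp_interpolation hlm hl
  refine rpow_mul_rpow_pow_mul_pow hx hy (by positivity) (by positivity) ?_ ?_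
  · field_simp
    linarith
  · field_simp
    linarith

lemma expect_le_of_decouples {Q q q' r r' : ℕ} [NeZero Q] [NeZero q] [NeZero q']
    {g : Freq k Q → ℝ} {a : ℤ → ℂ} {s : Finset ℤ} {W : ℝ} (hg : 0 ≤ g) (hr : r ≠ 0) (hr' : r' ≠ 0)
    (hq : q ∣ q') (hW : 0 ≤ W) (hB : 0 ≤ B) (h : Decouples g r a s q W)
    (hclass : ∀ c : ZMod q, (residueClass s q c).Nonempty →
      𝔼 α, g α * energy a (residueClass s q c) α ^ r ≤
        B * classNormSum (1 : Freq k Q → ℝ) r' a (residueClass s q c) q' ^ r) :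
    𝔼 α, g α * energy a s α ^ r ≤
      W ^ r * B * classNormSum (1 : Freq k Q → ℝ) r' a s q' ^ r := by
  have nonneg (c : ZMod q) :
      0 ≤ classNormSum (1 : Freq k Q → ℝ) r' a (residueClass s q c) q' :=
    classNormSum_nonneg zero_le_one
  have hroot : (B ^ ((r : ℝ)⁻¹)) ^ r = B := rpow_inv_natCast_pow hB hr
  have hnorm (c : ZMod q) : wNorm g r (energy a (residueClass s q c)) ≤
      B ^ ((r : ℝ)⁻¹) * classNormSum (1 : Freq k Q → ℝ) r' a (residueClass s q c) q' := by
    rcases (residueClass s q c).eq_empty_or_nonempty with hempty | hne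
    · rw [hempty, energy_empty, wNorm_zero hr]
      exact mul_nonneg (rpow_nonneg hB _) (classNormSum_nonneg zero_le_one)
    rw [← pow_le_pow_iff_left₀ (wNorm_nonneg hg (energy_nonneg a _))
      (mul_nonneg (rpow_nonneg hB _) (nonneg c)) hr, mul_pow, hroot,
      wNorm_pow hr hg (energy_nonneg a _)]
    exact hclass c hne
  have hsum : wNorm g r (energy a s) ≤
      W * (B ^ ((r : ℝ)⁻¹) * classNormSum (1 : Freq k Q → ℝ) r' a s q') := by
    rw [← sum_classNormSum_residueClass hr' hq, mul_sum]
    exact h.trans (mul_le_mul_of_nonneg_left (sum_le_sum fun c _ => hnorm c) hW)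
  rw [← wNorm_pow hr hg (energy_nonneg a s)]
  refine (pow_le_pow_left₀ (wNorm_nonneg hg (energy_nonneg a s)) hsum r).trans_eq ?_
  rw [mul_pow, mul_pow, hroot, mul_assoc]

variable [Fact p.Prime]

namespace BilinearBound

lemma mono (h : BilinearBound p k l n i j B) (hB : B ≤ B') : BilinearBound p k l n i j B' :=
  fun a s t ξ η hξη hs ht => (h a s t ξ η hξη hs ht).trans <| mul_le_mul_of_nonneg_right hB <|
    mul_nonneg (pow_nonneg (decoupledNorm_nonneg a t) _) (pow_nonneg (decoupledNorm_nonneg a s) _)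

lemma refine_left {W : ℝ} (h : BilinearBound p k l n i' j B) (hl : 1 ≤ l) (hlk : l ≤ k)
    (hi : 1 ≤ i) (hn : i' ≤ n) (hW : 0 ≤ W) (hB : 0 ≤ B)
    (hdec : ∀ (a : ℤ → ℂ) (s t : Finset ℤ) (η : ℤ), (∀ x ∈ s, (x : ZMod p) ≠ η) →
      (∀ y ∈ t, (y : ZMod (p ^ j)) = η) →
      Decouples (fun α : Freq k ((p ^ n) ^ k) => energy a t α ^ (critExp k - critExp l)) (critExp l)
        a s (p ^ i') W) :
    BilinearBound p k l n i j (W ^ critExp l * B) := by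
  intro a s t ξ η hξη hs ht
  have hsη : ∀ x ∈ s, (x : ZMod p) ≠ η := fun x hx => by
    rwa [intCast_eq_of_dvd (dvd_pow_self p (by omega)) (hs x hx)]
  rw [← mul_assoc, mul_assoc (W ^ _)]
  refine expect_le_of_decouples (fun α => pow_nonneg (energy_nonneg a t α) _) (critExp_ne_zero hl)
    (critExp_ne_zero (hl.trans hlk)) (pow_dvd_pow p hn) hW
    (mul_nonneg hB (pow_nonneg (decoupledNorm_nonneg a t) _)) (hdec a s t η hsη ht)
    fun c ⟨x, hx⟩ => ?_
  obtain ⟨hxs, rfl⟩ := mem_residueClass.1 hx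
  rw [mul_assoc]
  exact h a _ t x η (hsη x hxs) (fun y hy => (mem_residueClass.1 hy).2) ht

lemma refine_right (h : BilinearBound p k l n i j' B) (hlk : l < k) (hj : 1 ≤ j)
    (hn : j' ≤ n) (hB : 0 ≤ B) :
    BilinearBound p k l n i j (((p : ℝ) ^ j') ^ (critExp k - critExp l) * B) := by
  intro a s t ξ η hξη hs ht
  have hne : critExp k - critExp l ≠ 0 := Nat.sub_ne_zero_of_lt (critExp_strictMono hlk)
  have hg : 0 ≤ fun α : Freq k ((p ^ n) ^ k) => energy a s α ^ critExp l :=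
    fun α => pow_nonneg (energy_nonneg a s α) _
  have htrivial := Decouples.trivial (q := p ^ j') (a := a) (s := t) hg hne
  simp only [mul_comm (energy a t _ ^ _), mul_comm (decoupledNorm k _ a t ^ _)]
  rw [← mul_assoc, mul_assoc _ B, ← Nat.cast_pow]
  refine expect_le_of_decouples hg hne (critExp_ne_zero (by omega)) (pow_dvd_pow p hn)
    (Nat.cast_nonneg _) (mul_nonneg hB (pow_nonneg (decoupledNorm_nonneg a s) _)) htrivial
    fun c ⟨y, hy⟩ => ?_
  obtain ⟨hyt, rfl⟩ := mem_residueClass.1 hy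
  have hyη : (y : ZMod p) = η := intCast_eq_of_dvd (dvd_pow_self p (by omega)) (ht y hyt)
  simpa only [mul_comm (energy a s _ ^ _), mul_assoc, mul_comm (decoupledNorm k _ a s ^ _)] using
    h a s _ ξ y (by rwa [hyη]) hs fun x hx => (mem_residueClass.1 hx).2

lemma holder {m : ℕ} {B₁ B₂ : ℝ} (hlm : l + m = k) (hl : 1 ≤ l) (hB₁ : 0 ≤ B₁) (hB₂ : 0 ≤ B₂)
    (h₁ : BilinearBound p k m n j i B₁) (h₂ : BilinearBound p k (l - 1) n i j B₂) :
    BilinearBound p k l n i j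
      (B₁ ^ (1 / (m + 1) : ℝ) * B₂ ^ (m / (m + 1) : ℝ)) := by
  intro a s t ξ η hξη hs ht
  have hu : (0 : ℝ) ≤ 1 / (m + 1) := by positivity
  have hv : (0 : ℝ) ≤ m / (m + 1) := by positivity
  have huv : (1 : ℝ) / (m + 1) + m / (m + 1) = 1 := by field_simp; ring
  have hE (u v : Finset ℤ) (d e : ℕ) (α : Freq k ((p ^ n) ^ k)) :
      0 ≤ energy a u α ^ d * energy a v α ^ e :=
    mul_nonneg (pow_nonneg (energy_nonneg a u α) d) (pow_nonneg (energy_nonneg a v α) e)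
  have hN (u v : Finset ℤ) (d e : ℕ) :
      0 ≤ decoupledNorm k (p ^ n) a u ^ d * decoupledNorm k (p ^ n) a v ^ e :=
    mul_nonneg (pow_nonneg (decoupledNorm_nonneg a u) d) (pow_nonneg (decoupledNorm_nonneg a v) e)
  have b₁ := h₁ a t s η ξ hξη.symm ht hs
  have b₂ := h₂ a s t ξ η hξη hs ht
  calc 𝔼 α : Freq k ((p ^ n) ^ k),
        energy a t α ^ (critExp k - critExp l) * energy a s α ^ critExp l
      = 𝔼 α : Freq k ((p ^ n) ^ k),
        (energy a s α ^ (critExp k - critExp m) * energy a t α ^ critExp m) ^ (1 / (m + 1) : ℝ) *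
        (energy a t α ^ (critExp k - critExp (l - 1)) * energy a s α ^ critExp (l - 1)) ^
          (m / (m + 1) : ℝ) := by
        refine expect_congr rfl fun α _ => ?_
        rw [mul_comm (energy a s α ^ _),
          critExp_rpow_interpolation hlm hl (energy_nonneg a t α) (energy_nonneg a s α)]
    _ ≤ _ := expect_rpow_mul_rpow_le (hE s t _ _)
        (hE t s _ _) hu hv huv
    _ ≤ _ := mul_le_mul
        (rpow_le_rpow (expect_nonneg fun α _ => hE s t _ _ α) b₁ hu)
        (rpow_le_rpow (expect_nonneg fun α _ => hE t s _ _ α) b₂ hv)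
        (rpow_nonneg (expect_nonneg fun α _ => hE t s _ _ α) _)
        (rpow_nonneg (mul_nonneg hB₁ (hN s t _ _)) _)
    _ = _ := by
        rw [mul_rpow hB₁ (hN s t _ _), mul_rpow hB₂ (hN t s _ _), mul_mul_mul_comm,
          mul_comm (decoupledNorm k (p ^ n) a s ^ _),
          critExp_rpow_interpolation hlm hl (decoupledNorm_nonneg a t) (decoupledNorm_nonneg a s)]

end BilinearBound

lemma DecouplingBound.bilinearBound {D D' : ℝ} (hlk : l ≤ k) (hk : 1 ≤ k) (hjn : j ≤ n)
    (hD : DecouplingBound k (p ^ n) D) (hD' : DecouplingBound k (p ^ (n - j)) D') (hD'0 : 0 ≤ D')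
    (i : ℕ) : BilinearBound p k l n i j (D' ^ (critExp k - critExp l) * D ^ critExp l) := by
  intro a s t ξ η _ _ ht
  have hsum : critExp k - critExp l + critExp l = critExp k :=
    Nat.sub_add_cancel (critExp_strictMono.monotone hlk)
  have hpow : p ^ n = p ^ j * p ^ (n - j) := by rw [← pow_add, Nat.add_sub_cancel' hjn]
  have ht' : wNorm 1 (critExp k) (energy a t : Freq k ((p ^ n) ^ k) → ℝ) ≤
      D' * decoupledNorm k (p ^ n) a t :=
    hD'.decouples_of_residueClass hD'0 hk (by rw [hpow]) hpow a ht
  have hHolder := expect_pow_mul_pow_le (energy_nonneg (k := k) (Q := (p ^ n) ^ k) a t)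
    (energy_nonneg a s) (hsum.trans_ne (critExp_ne_zero hk))
  rw [hsum] at hHolder
  have norm_energy_nonneg (u : Finset ℤ) :
      0 ≤ wNorm (1 : Freq k ((p ^ n) ^ k) → ℝ) (critExp k) (energy a u) :=
    wNorm_nonneg zero_le_one (energy_nonneg a u)
  calc _ ≤ _ := hHolder
    _ ≤ (D' * decoupledNorm k (p ^ n) a t) ^ (critExp k - critExp l) *
        (D * decoupledNorm k (p ^ n) a s) ^ critExp l := by
      refine mul_le_mul (pow_le_pow_left₀ (norm_energy_nonneg t) ht' _)
        (pow_le_pow_left₀ (norm_energy_nonneg s) (hD a s) _)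
        (pow_nonneg (norm_energy_nonneg s) _) (pow_nonneg ?_ _)
      exact mul_nonneg hD'0 (decoupledNorm_nonneg a t)
    _ = _ := by rw [mul_pow, mul_pow]; ring

end Bilinear

section BilinearExponent

variable {p k l : ℕ} {x c : ℝ}

/-- The bilinear constants modulo `p ^ n`, with the second residue class modulo `p ^ j`, beat the
exponent `critExp k * x` of linear decoupling by a factor `p ^ (c * j)`. -/
def BilinearExponent (p k l : ℕ) [NeZero p] (x c : ℝ) : Prop :=
  ∃ K : ℕ, ∀ ε > 0, ∀ᶠ n : ℕ in Filter.atTop, ∀ i j, 1 ≤ i → K ≤ j → K * j ≤ n →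
    BilinearBound p k l n i j ((p : ℝ) ^ ((critExp k * x + ε) * n - c * j))

variable [Fact p.Prime]

lemma DecouplingExponent.bilinearExponent (hk : 1 ≤ k) (hlk : l ≤ k)
    (h : DecouplingExponent p k x) :
    BilinearExponent p k l x ((critExp k - critExp l : ℕ) * x) := by
  have hp : (0 : ℝ) < p := cast_prime_pos
  refine ⟨2, fun ε hε => ?_⟩
  have hσ : (0 : ℝ) < critExp k := by exact_mod_cast Nat.pos_of_ne_zero (critExp_ne_zero hk)
  obtain ⟨n₀, hn₀⟩ := Filter.eventually_atTop.1 (h (ε / critExp k) (by positivity))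
  filter_upwards [Filter.eventually_ge_atTop (2 * n₀)] with n hn i j _ _ hj
  refine ((hn₀ n (by omega)).bilinearBound hlk hk (by omega) (hn₀ (n - j) (by omega))
    (by positivity) i).mono ?_
  set A := critExp k - critExp l
  have hsum : (A : ℝ) + critExp l = critExp k := by
    exact_mod_cast Nat.sub_add_cancel (critExp_strictMono.monotone hlk)
  rw [← rpow_natCast, ← rpow_natCast, ← rpow_mul hp.le, ← rpow_mul hp.le, ← rpow_add hp,
    Nat.cast_sub (by omega)]
  refine rpow_le_rpow_of_exponent_le one_lt_cast_prime.le ?_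
  calc (x + ε / critExp k) * (n - j) * A + (x + ε / critExp k) * n * critExp l
      = (x + ε / critExp k) * n * (A + critExp l) - A * x * j - ε / critExp k * j * A := by ring
    _ ≤ (x + ε / critExp k) * n * (A + critExp l) - A * x * j :=
        sub_le_self _ (by positivity)
    _ = _ := by rw [hsum]; field_simp

lemma step_exponent_le {i j m n : ℕ} {c₁ c₂ y δ σ : ℝ} (hl : 1 ≤ l) (hc₁ : 0 ≤ c₁)
    (hc₁n : c₁ ≤ δ * n) (hi : (m + 1) * j < l * (i + 1)) :
    δ * n * σ + (((y + δ) * n - c₁ * i) * (1 / (m + 1)) +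
        ((y + δ) * n - c₂ * j) * (m / (m + 1))) ≤
      (y + δ * (σ + 2)) * n - (c₁ / l + c₂ * m / (m + 1)) * j := by
  have hl0 : (0 : ℝ) < l := by exact_mod_cast hl
  have hi_ge : (j : ℝ) / l ≤ i / (m + 1) + 1 := by
    have hlt : ((m : ℝ) + 1) * j < l * (i + 1) := by exact_mod_cast hi
    rw [div_le_iff₀ hl0, ← mul_le_mul_iff_of_pos_left (by positivity : (0 : ℝ) < m + 1)]
    have hclear : ((m : ℝ) + 1) * ((i / (m + 1) + 1) * l) = l * (i + 1) + l * m := by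
      field_simp
      ring
    linarith [mul_nonneg hl0.le (Nat.cast_nonneg (α := ℝ) m)]
  calc _ = (y + δ * (σ + 1)) * n - c₁ * (i / (m + 1)) - c₂ * m / (m + 1) * j := by
        field_simp
        ring
    _ ≤ (y + δ * (σ + 2)) * n - c₁ * (j / l) - c₂ * m / (m + 1) * j := by
        linarith [mul_le_mul_of_nonneg_left hi_ge hc₁]
    _ = _ := by ring

lemma BilinearExponent.step {m : ℕ} {c₁ c₂ : ℝ} (hlm : l + m = k) (hl : 1 ≤ l) (hkp : k < p)
    (hdec : DecouplingExponent p l 0) (hc₁ : 0 ≤ c₁) (h₁ : BilinearExponent p k m x c₁)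
    (h₂ : BilinearExponent p k (l - 1) x c₂) :
    BilinearExponent p k l x (c₁ / l + c₂ * m / (m + 1)) := by
  obtain ⟨K₁, hK₁⟩ := h₁
  obtain ⟨K₂, hK₂⟩ := h₂
  have hp : (0 : ℝ) < p := cast_prime_pos
  refine ⟨k * (K₁ + K₂ + 1), fun ε hε => ?_⟩
  set δ := ε / (critExp l + 2)
  have hδ : 0 < δ := by positivity
  filter_upwards [hK₁ δ hδ, hK₂ δ hδ, eventually_decouples_of_separated hl (by omega) hkp hdec hδ,
    Filter.eventually_ge_atTop ⌈c₁ / δ⌉₊] with n hb₁ hb₂ hsep hn i j hi hKj hj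
  set i' := (m + 1) * j / l
  have hi'_le : l * i' ≤ (m + 1) * j := Nat.mul_div_le _ _
  have hi'_kj : i' ≤ k * j := by nlinarith
  have hkj : k ≤ j := by nlinarith
  have le_i' {d : ℕ} (hd : d * k ≤ j) : d ≤ i' := by
    refine (Nat.le_div_iff_mul_le hl).2 ?_
    nlinarith
  have hbound := (BilinearBound.holder hlm hl (by positivity) (by positivity)
    (hb₁ j i' (by omega) (le_i' (by nlinarith)) (by nlinarith))
    (hb₂ i' j (le_i' (by omega)) (by nlinarith) (by nlinarith))).refine_left hl (by omega) hi
    (by nlinarith) (by positivity) (by positivity)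
    fun a s t η hs ht => hsep i' j (by nlinarith) (by rwa [show k - l = m by omega]) a s t η hs ht _
  refine hbound.mono ?_
  rw [← rpow_natCast, ← rpow_mul hp.le, ← rpow_mul hp.le, ← rpow_mul hp.le, ← rpow_add hp,
    ← rpow_add hp]
  refine rpow_le_rpow_of_exponent_le one_lt_cast_prime.le ?_
  have hc₁n : c₁ ≤ δ * n := by
    rw [mul_comm, ← div_le_iff₀ hδ]
    exact Nat.ceil_le.1 hn
  refine (step_exponent_le hl hc₁ hc₁n (Nat.lt_mul_div_succ _ hl)).trans_eq ?_
  rw [div_mul_cancel₀ ε (by positivity)]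

lemma sum_gain_step (hk : 1 ≤ k) (c : ℕ → ℝ) :
    ∑ l ∈ Ico 1 k, (c (k - l) / l + c (l - 1) * (k - l : ℕ) / ((k - l : ℕ) + 1)) =
      ∑ l ∈ Ico 1 k, c l + c 0 * (k - 1) / k := by
  obtain ⟨K, rfl⟩ := Nat.exists_eq_add_of_le' hk
  let d (m : ℕ) : ℝ := c m * (K - m) / (K - m + 1)
  have hreflect : ∑ l ∈ Ico 1 (K + 1), c (K + 1 - l) / l =
      ∑ l ∈ Ico 1 (K + 1), c l / (K - l + 1) := by
    have h := sum_Ico_reflect (fun l : ℕ => c l / ((K : ℝ) - l + 1)) 1 (Nat.le_succ (K + 1))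
    rw [Nat.add_sub_cancel, Nat.add_sub_cancel_left] at h
    rw [← h]
    refine sum_congr rfl fun l hl => ?_
    have hl' := (mem_Ico.1 hl).2
    rw [Nat.cast_sub hl'.le]
    push_cast
    ring_nf
  have hshift : ∑ l ∈ Ico 1 (K + 1), c (l - 1) * (K + 1 - l : ℕ) / ((K + 1 - l : ℕ) + 1) =
      d 0 + ∑ l ∈ Ico 1 (K + 1), d l := by
    rw [← sum_range_eq_add_Ico d K.succ_pos, sum_range_succ, sum_Ico_eq_sum_range]
    have hlast : d K = 0 := by simp [d]
    rw [hlast, add_zero, Nat.add_sub_cancel]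
    refine sum_congr rfl fun m hm => ?_
    rw [show K + 1 - (1 + m) = K - m by omega, Nat.add_sub_cancel_left,
      Nat.cast_sub (mem_range.1 hm).le]
  rw [sum_add_distrib, hreflect, hshift, add_left_comm, ← sum_add_distrib, add_comm]
  congr 1
  · refine sum_congr rfl fun l hl => ?_
    have : (l : ℝ) ≤ K := by exact_mod_cast Nat.lt_succ_iff.1 (mem_Ico.1 hl).2
    have : (K : ℝ) - l + 1 ≠ 0 := by linarith
    simp only [d]
    field_simp
    ring
  · simp [d]

lemma exists_bilinearExponent_family (hk : 1 ≤ k) (hkp : k < p) (hx : 0 ≤ x)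
    (h : DecouplingExponent p k x) (hlower : ∀ l, 1 ≤ l → l < k → DecouplingExponent p l 0)
    (r : ℕ) : ∃ c : ℕ → ℝ, c 0 = critExp k * x ∧
      (∀ l < k, 0 ≤ c l ∧ BilinearExponent p k l x (c l)) ∧
      r * (critExp k * x * (k - 1) / k) ≤ ∑ l ∈ Ico 1 k, c l := by
  have h₀ : BilinearExponent p k 0 x (critExp k * x) := by
    simpa [critExp] using h.bilinearExponent hk (Nat.zero_le k)
  induction r with
  | zero =>
    refine ⟨fun l => (critExp k - critExp l : ℕ) * x, by simp [critExp], fun l hl =>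
      ⟨by positivity, h.bilinearExponent hk hl.le⟩, ?_⟩
    rw [Nat.cast_zero, zero_mul]
    exact sum_nonneg fun l _ => by positivity
  | succ r ih =>
    obtain ⟨c, hc₀, hc, hsum⟩ := ih
    refine ⟨fun l => if l = 0 then critExp k * x else
      c (k - l) / l + c (l - 1) * (k - l : ℕ) / ((k - l : ℕ) + 1), if_pos rfl, fun l hl => ?_, ?_⟩
    · rcases Nat.eq_zero_or_pos l with rfl | hl0
      · simpa using ⟨by positivity, h₀⟩
      obtain ⟨hc₁, h₁⟩ := hc (k - l) (by omega)
      obtain ⟨hc₂, h₂⟩ := hc (l - 1) (by omega)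
      beta_reduce
      rw [if_neg hl0.ne']
      exact ⟨by positivity, h₁.step (by omega) hl0 hkp (hlower l hl0 hl) hc₁ h₂⟩
    · rw [sum_congr rfl fun l hl => if_neg (Nat.one_le_iff_ne_zero.1 (mem_Ico.1 hl).1),
        sum_gain_step hk, hc₀]
      push_cast
      linarith

lemma exists_bilinearExponent_ge (hk : 2 ≤ k) (hkp : k < p) (hx : 0 < x)
    (h : DecouplingExponent p k x) (hlower : ∀ l, 1 ≤ l → l < k → DecouplingExponent p l 0)
    (M : ℝ) : ∃ l, 1 ≤ l ∧ l < k ∧ ∃ c : ℝ, M ≤ c ∧ BilinearExponent p k l x c := by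
  have hk' : (2 : ℝ) ≤ k := by exact_mod_cast hk
  have hσ : (0 : ℝ) < critExp k := by
    exact_mod_cast Nat.pos_of_ne_zero (critExp_ne_zero (by omega : 1 ≤ k))
  have hstep : 0 < critExp k * x * (k - 1) / k :=
    div_pos (mul_pos (by positivity) (by linarith)) (by linarith)
  obtain ⟨r, hr⟩ := Archimedean.arch (∑ _l ∈ Ico 1 k, M) hstep
  obtain ⟨c, -, hc, hsum⟩ := exists_bilinearExponent_family (by omega) hkp hx.le h hlower r
  rw [nsmul_eq_mul] at hr
  obtain ⟨l, hl, hle⟩ := exists_le_of_sum_le ⟨1, mem_Ico.2 ⟨le_rfl, hk⟩⟩ (hr.trans hsum)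
  obtain ⟨hl1, hlk⟩ := mem_Ico.1 hl
  exact ⟨l, hl1, hlk, c l, hle, (hc l hlk).2⟩

lemma exists_bilinearBound_gain (hk : 2 ≤ k) (hkp : k < p) (hx : 0 < x)
    (h : DecouplingExponent p k x) (hlower : ∀ l, 1 ≤ l → l < k → DecouplingExponent p l 0) :
    ∃ l, 1 ≤ l ∧ l < k ∧ ∃ δ : ℝ, 0 < δ ∧ ∀ᶠ n : ℕ in Filter.atTop,
      BilinearBound p k l n 1 1 ((p : ℝ) ^ ((critExp k * x - δ) * n)) := by
  have hp : (0 : ℝ) < p := cast_prime_pos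
  obtain ⟨l, hl1, hlk, c, hc, K, hK⟩ :=
    exists_bilinearExponent_ge hk hkp hx h hlower (critExp k + 1)
  set δ : ℝ := 1 / (4 * (K + 1)) with hδ_def
  have hδ : 0 < δ := by positivity
  refine ⟨l, hl1, hlk, δ, hδ, ?_⟩
  filter_upwards [hK δ hδ, Filter.eventually_ge_atTop ((K + 1) * (K + 1))] with n hn hnK
  set j := n / (K + 1)
  have hj_le : (K + 1) * j ≤ n := Nat.mul_div_le _ _
  have hK_le : K + 1 ≤ j := (Nat.le_div_iff_mul_le K.succ_pos).2 hnK
  refine ((hn 1 j le_rfl (by omega) (by nlinarith)).refine_right hlk le_rfl (by nlinarith)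
    (by positivity)).mono ?_
  rw [← rpow_natCast, ← rpow_natCast, ← rpow_mul hp.le, ← rpow_add hp]
  refine rpow_le_rpow_of_exponent_le one_lt_cast_prime.le ?_
  have hδj : 2 * δ * n ≤ j := by
    have hlt : (n : ℝ) < (K + 1) * (j + 1) := by exact_mod_cast Nat.lt_mul_div_succ n K.succ_pos
    have hj1 : (1 : ℝ) ≤ j := by exact_mod_cast (by omega : 1 ≤ j)
    calc 2 * δ * n = n / (2 * (K + 1)) := by rw [hδ_def]; field_simp; ring
      _ ≤ j := by
        rw [div_le_iff₀ (by positivity)]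
        nlinarith
  have hsub : ((critExp k - critExp l : ℕ) : ℝ) ≤ critExp k := by exact_mod_cast Nat.sub_le _ _
  have hcj : (critExp k - critExp l : ℕ) * (j : ℝ) + j ≤ c * j := by
    nlinarith [Nat.cast_nonneg (α := ℝ) j]
  linarith

end BilinearExponent

section BroadNarrow

lemma sum_pow_le_pow_sum {ι : Type*} {s : Finset ι} {u : ι → ℝ} (hu : ∀ c ∈ s, 0 ≤ u c) {r : ℕ}
    (hr : r ≠ 0) : ∑ c ∈ s, u c ^ r ≤ (∑ c ∈ s, u c) ^ r := by
  obtain ⟨r, rfl⟩ := Nat.exists_eq_succ_of_ne_zero hr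
  simp only [Nat.succ_eq_add_one, pow_succ, mul_sum]
  refine sum_le_sum fun c hc => ?_
  have := hu c hc
  gcongr
  exact single_le_sum hu hc

variable {ι : Type*} [Fintype ι] {u : ι → ℝ} {τ : ℝ} {i j : ℕ} {c₀ c₁ : ι}

lemma sum_le_of_narrow (hu : 0 ≤ u c₀) (hτ : 0 ≤ τ)
    (h : ∀ c ≠ c₀, u c ≤ τ / Fintype.card ι * u c₀) : ∑ c, u c ≤ (1 + τ) * u c₀ := by
  have hcard : (0 : ℝ) < Fintype.card ι := by exact_mod_cast Fintype.card_pos_iff.2 ⟨c₀⟩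
  calc ∑ c, u c = u c₀ + ∑ c ∈ univ.erase c₀, u c := (add_sum_erase _ _ (mem_univ c₀)).symm
    _ ≤ u c₀ + ∑ _c ∈ univ.erase c₀, τ / Fintype.card ι * u c₀ := by
        gcongr with _ hc
        exact h _ (ne_of_mem_erase hc)
    _ ≤ u c₀ + ∑ _c : ι, τ / Fintype.card ι * u c₀ := by
        gcongr
        exact erase_subset _ _
    _ = (1 + τ) * u c₀ := by
        rw [sum_const, card_univ, nsmul_eq_mul]
        field_simp

lemma pow_sum_le_of_broad (hu : 0 ≤ u) (hτ : 0 < τ) (hmax : ∀ c, u c ≤ u c₀)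
    (h : τ / Fintype.card ι * u c₀ ≤ u c₁) :
    (∑ c, u c) ^ (j + i) ≤
      (Fintype.card ι : ℝ) ^ (j + i) * (Fintype.card ι / τ) ^ j * (u c₁ ^ j * u c₀ ^ i) := by
  have hcard : (0 : ℝ) < Fintype.card ι := by exact_mod_cast Fintype.card_pos_iff.2 ⟨c₀⟩
  have hu₀ : 0 ≤ u c₀ := hu c₀
  have hsum : ∑ c, u c ≤ Fintype.card ι * u c₀ := by
    simpa using sum_le_sum fun c (_ : c ∈ univ) => hmax c
  have h₀₁ : u c₀ ≤ Fintype.card ι / τ * u c₁ := by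
    calc u c₀ = Fintype.card ι / τ * (τ / Fintype.card ι * u c₀) := by field_simp
      _ ≤ Fintype.card ι / τ * u c₁ := by gcongr
  calc (∑ c, u c) ^ (j + i) ≤ (Fintype.card ι * u c₀) ^ (j + i) :=
        pow_le_pow_left₀ (sum_nonneg fun c _ => hu c) hsum _
    _ = (Fintype.card ι : ℝ) ^ (j + i) * (u c₀ ^ j * u c₀ ^ i) := by rw [mul_pow, ← pow_add]
    _ ≤ (Fintype.card ι : ℝ) ^ (j + i) * ((Fintype.card ι / τ * u c₁) ^ j * u c₀ ^ i) := by gcongr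
    _ = _ := by rw [mul_pow]; ring

lemma exists_one_add_pow_le {ρ : ℝ} (hρ : 1 < ρ) (r : ℕ) : ∃ τ : ℝ, 0 < τ ∧ (1 + τ) ^ r ≤ ρ := by
  have hcont : Continuous fun t : ℝ => (1 + t) ^ r := by fun_prop
  have hev : ∀ᶠ t : ℝ in nhds 0, (1 + t) ^ r < ρ :=
    hcont.continuousAt.eventually_lt_const (by simpa using hρ)
  obtain ⟨τ, hτ, hpos⟩ := ((hev.filter_mono nhdsWithin_le_nhds).and
    (self_mem_nhdsWithin : Set.Ioi (0 : ℝ) ∈ nhdsWithin 0 (Set.Ioi 0))).exists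
  exact ⟨τ, hpos, hτ.le⟩

/- Either one of the terms dominates the sum, or at least two of them are comparable to it. -/
lemma exists_pow_sum_le_narrow_add_broad (ι : Type*) [Fintype ι] [Nonempty ι]
    {ρ : ℝ} (hρ : 1 < ρ) (i j : ℕ) : ∃ κ : ℝ, 0 ≤ κ ∧ ∀ u : ι → ℝ, 0 ≤ u →
      (∑ c, u c) ^ (j + i) ≤
        ρ * ∑ c, u c ^ (j + i) + κ * ∑ x ∈ univ.offDiag, u x.2 ^ j * u x.1 ^ i := by
  obtain ⟨τ, hτ, hτρ⟩ := exists_one_add_pow_le hρ (j + i)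
  refine ⟨(Fintype.card ι : ℝ) ^ (j + i) * (Fintype.card ι / τ) ^ j, by positivity,
    fun u hu => ?_⟩
  have hρ0 : 0 ≤ ρ := zero_le_one.trans hρ.le
  have hnarrow : 0 ≤ ∑ c, u c ^ (j + i) := sum_nonneg fun c _ => pow_nonneg (hu c) _
  have hpair (x : ι × ι) : 0 ≤ u x.2 ^ j * u x.1 ^ i :=
    mul_nonneg (pow_nonneg (hu _) _) (pow_nonneg (hu _) _)
  have hbroad : 0 ≤ ∑ x ∈ univ.offDiag, u x.2 ^ j * u x.1 ^ i := sum_nonneg fun x _ => hpair x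
  obtain ⟨c₀, -, hmax⟩ := exists_max_image univ u univ_nonempty
  by_cases hcase : ∀ c ≠ c₀, u c ≤ τ / Fintype.card ι * u c₀
  · refine le_add_of_le_of_nonneg ?_ (mul_nonneg (by positivity) hbroad)
    calc (∑ c, u c) ^ (j + i) ≤ ((1 + τ) * u c₀) ^ (j + i) :=
          pow_le_pow_left₀ (sum_nonneg fun c _ => hu c) (sum_le_of_narrow (hu c₀) hτ.le hcase) _
      _ = (1 + τ) ^ (j + i) * u c₀ ^ (j + i) := mul_pow _ _ _
      _ ≤ ρ * ∑ c, u c ^ (j + i) :=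
          mul_le_mul hτρ (single_le_sum (fun c _ => pow_nonneg (hu c) _) (mem_univ c₀))
            (pow_nonneg (hu c₀) _) hρ0
  · push Not at hcase
    obtain ⟨c₁, hne, hlt⟩ := hcase
    refine le_add_of_nonneg_of_le (mul_nonneg hρ0 hnarrow) ?_
    refine (pow_sum_le_of_broad hu hτ (fun c => hmax c (mem_univ c)) hlt.le).trans ?_
    have hmem : (c₀, c₁) ∈ univ.offDiag := by simpa using hne.symm
    gcongr
    exact single_le_sum (f := fun x : ι × ι => u x.2 ^ j * u x.1 ^ i) (fun x _ => hpair x) hmem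

end BroadNarrow

section LinearFromBilinear

variable {k l m n q q' p : ℕ} {D D' B : ℝ}

lemma decoupledNorm_residueClass_le [NeZero q] [NeZero q'] (hk : 1 ≤ k) (h : q ∣ q') (a : ℤ → ℂ)
    (s : Finset ℤ) (c : ZMod q) :
    decoupledNorm k q' a (residueClass s q c) ≤ decoupledNorm k q' a s := by
  refine le_of_le_of_eq ?_ (sum_classNormSum_residueClass (critExp_ne_zero hk) h)
  exact single_le_sum (f := fun c => decoupledNorm k q' a (residueClass s q c))
    (fun c _ => decoupledNorm_nonneg a _) (mem_univ c)

lemma DecouplingBound.sum_expect_energy_residueClass_le [NeZero m] [NeZero q] [NeZero q']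
    (hD : DecouplingBound k q D) (hD0 : 0 ≤ D) (hk : 1 ≤ k) (hq' : q' = m * q) (a : ℤ → ℂ)
    (s : Finset ℤ) :
    ∑ c : ZMod m, 𝔼 α : Freq k (q' ^ k), energy a (residueClass s m c) α ^ critExp k ≤
      D ^ critExp k * decoupledNorm k q' a s ^ critExp k := by
  have hσ := critExp_ne_zero hk
  have hclass (c : ZMod m) : 𝔼 α : Freq k (q' ^ k), energy a (residueClass s m c) α ^ critExp k ≤
      D ^ critExp k * decoupledNorm k q' a (residueClass s m c) ^ critExp k := by
    obtain ⟨ξ, rfl⟩ := ZMod.intCast_surjective c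
    have hW := hD.decouples_of_residueClass hD0 hk (congrArg (· ^ k) hq') hq' a
      (s := residueClass s m ξ) fun x hx => (mem_residueClass.1 hx).2
    have hpow := pow_le_pow_left₀ (wNorm_nonneg zero_le_one (energy_nonneg a _)) hW (critExp k)
    simpa only [wNorm_pow hσ zero_le_one (energy_nonneg a _), Pi.one_apply, one_mul, mul_pow]
      using hpow
  calc _ ≤ ∑ c : ZMod m,
        D ^ critExp k * decoupledNorm k q' a (residueClass s m c) ^ critExp k :=
        sum_le_sum fun c _ => hclass c
    _ ≤ D ^ critExp k * (∑ c : ZMod m, decoupledNorm k q' a (residueClass s m c)) ^ critExp k := by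
        rw [← mul_sum]
        gcongr
        exact sum_pow_le_pow_sum (fun c _ => decoupledNorm_nonneg a _) hσ
    _ = _ := by
        rw [decoupledNorm, ← sum_classNormSum_residueClass hσ (Dvd.intro q hq'.symm)]

lemma BilinearBound.expect_residueClass_le [NeZero p] (h : BilinearBound p k l n 1 1 B)
    (hB : 0 ≤ B) (hk : 1 ≤ k) (hlk : l ≤ k) (hn : 1 ≤ n) (a : ℤ → ℂ) (s : Finset ℤ)
    {c c' : ZMod (p ^ 1)} (hne : c ≠ c') :
    𝔼 α : Freq k ((p ^ n) ^ k), energy a (residueClass s (p ^ 1) c') α ^ (critExp k - critExp l) *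
        energy a (residueClass s (p ^ 1) c) α ^ critExp l ≤
      B * decoupledNorm k (p ^ n) a s ^ critExp k := by
  have hdvd : p ^ 1 ∣ p ^ n := pow_dvd_pow p hn
  obtain ⟨ξ, rfl⟩ := ZMod.intCast_surjective c
  obtain ⟨η, rfl⟩ := ZMod.intCast_surjective c'
  have hsep : (ξ : ZMod p) ≠ η := fun h => hne (intCast_eq_of_dvd (pow_one p).dvd h)
  have hsum : critExp k - critExp l + critExp l = critExp k :=
    Nat.sub_add_cancel (critExp_strictMono.monotone hlk)
  refine (h a _ _ ξ η hsep (fun x hx => (mem_residueClass.1 hx).2)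
    fun y hy => (mem_residueClass.1 hy).2).trans ?_
  rw [← hsum, pow_add, hsum]
  have hle := decoupledNorm_residueClass_le hk hdvd a s
  have nonneg := decoupledNorm_nonneg (k := k) (q := p ^ n) a
  gcongr
  exacts [pow_nonneg (nonneg _) _, pow_nonneg (nonneg _) _, nonneg _, hle _, nonneg _, hle _]

lemma exists_decouplingBound_succ [NeZero p] (hk : 1 ≤ k) (hlk : l ≤ k) {ρ : ℝ} (hρ : 1 < ρ) :
    ∃ κ : ℝ, ∀ (n : ℕ) (D B D' : ℝ), 0 ≤ D → 0 ≤ B → 0 ≤ D' →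
      DecouplingBound k (p ^ n) D → BilinearBound p k l (n + 1) 1 1 B →
      ρ * D ^ critExp k + κ * B ≤ D' ^ critExp k → DecouplingBound k (p ^ (n + 1)) D' := by
  obtain ⟨κ, hκ, hpt⟩ := exists_pow_sum_le_narrow_add_broad (ZMod (p ^ 1)) hρ
    (2 * critExp l) (2 * (critExp k - critExp l))
  have hexp : 2 * (critExp k - critExp l) + 2 * critExp l = 2 * critExp k := by
    rw [← mul_add, Nat.sub_add_cancel (critExp_strictMono.monotone hlk)]
  set pairs : Finset (ZMod (p ^ 1) × ZMod (p ^ 1)) := univ.offDiag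
  refine ⟨κ * #pairs, fun n D B D' hD0 hB hD' hD hBil hle a s => ?_⟩
  have hσ := critExp_ne_zero hk
  set T := decoupledNorm k (p ^ (n + 1)) a s
  have hT : 0 ≤ T := decoupledNorm_nonneg a s
  let f (c : ZMod (p ^ 1)) : Freq k ((p ^ (n + 1)) ^ k) → ℝ := energy a (residueClass s (p ^ 1) c)
  have hpoint (α : Freq k ((p ^ (n + 1)) ^ k)) : energy a s α ^ critExp k ≤
      ρ * ∑ c, f c α ^ critExp k +
        κ * ∑ x ∈ pairs, f x.2 α ^ (critExp k - critExp l) * f x.1 α ^ critExp l := by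
    have h := hpt (fun c => ‖expSum a (residueClass s (p ^ 1) c) α‖) fun c => norm_nonneg _
    simp only [hexp, pow_mul] at h
    rw [energy, expSum_eq_sum_residueClass a s (p ^ 1)]
    refine le_trans ?_ h
    gcongr
    exact norm_sum_le _ _
  have hexpect : 𝔼 α : Freq k ((p ^ (n + 1)) ^ k), energy a s α ^ critExp k ≤
      (D' * T) ^ critExp k := by
    calc 𝔼 α : Freq k ((p ^ (n + 1)) ^ k), energy a s α ^ critExp k
        ≤ 𝔼 α, (ρ * ∑ c, f c α ^ critExp k +
          κ * ∑ x ∈ pairs, f x.2 α ^ (critExp k - critExp l) * f x.1 α ^ critExp l) :=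
          expect_le_expect fun α _ => hpoint α
      _ = ρ * ∑ c, 𝔼 α, f c α ^ critExp k +
          κ * ∑ x ∈ pairs, 𝔼 α, f x.2 α ^ (critExp k - critExp l) * f x.1 α ^ critExp l := by
          rw [expect_add_distrib, ← mul_expect, ← mul_expect, expect_sum_comm, expect_sum_comm]
      _ ≤ ρ * (D ^ critExp k * T ^ critExp k) + κ * ∑ _x ∈ pairs, B * T ^ critExp k := by
          gcongr with x hx
          · exact hD.sum_expect_energy_residueClass_le hD0 hk (by ring) a s
          · exact hBil.expect_residueClass_le hB hk hlk (by omega) a s (mem_offDiag.1 hx).2.2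
      _ = (ρ * D ^ critExp k + κ * #pairs * B) * T ^ critExp k := by
          rw [sum_const, nsmul_eq_mul]; ring
      _ ≤ (D' * T) ^ critExp k := by rw [mul_pow]; gcongr
  rw [Decouples, ← pow_le_pow_iff_left₀ (wNorm_nonneg zero_le_one (energy_nonneg a s))
    (mul_nonneg hD' hT) hσ, wNorm_pow hσ zero_le_one (energy_nonneg a s)]
  simpa only [Pi.one_apply, one_mul] using hexpect

end LinearFromBilinear

section Induction

variable {p k l : ℕ} {x y : ℝ} [Fact p.Prime]

lemma decouplingExponent_of_forall_ge {A : ℝ} {n₀ : ℕ}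
    (h : ∀ n ≥ n₀, DecouplingBound k (p ^ n) (A * (p : ℝ) ^ (y * n))) :
    DecouplingExponent p k y := fun ε hε => by
  filter_upwards [Filter.eventually_ge_atTop n₀,
    eventually_le_rpow (one_lt_cast_prime (p := p)) A hε] with n hn hA
  refine (h n hn).mono ?_
  rw [add_mul, rpow_add cast_prime_pos, mul_comm]
  gcongr

lemma decouplingBound_trivial (hk : 1 ≤ k) (n : ℕ) : DecouplingBound k (p ^ n) ((p : ℝ) ^ n) :=
  fun a s => by
    simpa using Decouples.trivial (q := p ^ n) (a := a) (s := s) (zero_le_one (α := Freq k _ → ℝ))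
      (critExp_ne_zero hk)

lemma decouplingExponent_of_bilinearBound (hk : 1 ≤ k) (hlk : l ≤ k) (hy : 0 < y)
    (h : ∀ᶠ n : ℕ in Filter.atTop, BilinearBound p k l n 1 1 ((p : ℝ) ^ (critExp k * y * n))) :
    DecouplingExponent p k y := by
  have hp : (0 : ℝ) < p := cast_prime_pos
  have hσ : 0 < critExp k := Nat.pos_of_ne_zero (critExp_ne_zero hk)
  have hσy : 0 < critExp k * y := by positivity
  set b : ℝ := (p : ℝ) ^ (critExp k * y)
  have hb : 1 < b := one_lt_rpow one_lt_cast_prime hσy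
  obtain ⟨ρ, hρ, hρb⟩ := exists_between hb
  obtain ⟨κ, hstep⟩ := exists_decouplingBound_succ (p := p) hk hlk hρ
  obtain ⟨n₀, hn₀⟩ := Filter.eventually_atTop.1 h
  set A : ℝ := max ((p : ℝ) ^ n₀) (κ * b / (b - ρ))
  have hA1 : 1 ≤ A := (one_le_pow₀ one_lt_cast_prime.le).trans (le_max_left _ _)
  have hA : ρ * A ^ critExp k + κ * b ≤ A ^ critExp k * b := by
    have := (div_le_iff₀ (sub_pos.2 hρb)).1
      ((le_max_right ((p : ℝ) ^ n₀) _).trans (le_self_pow₀ hA1 hσ.ne'))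
    linarith
  have hrpow (n : ℕ) : ((p : ℝ) ^ (y * n)) ^ critExp k = b ^ n := by
    rw [← rpow_mul_natCast hp.le, ← rpow_mul_natCast hp.le]
    ring_nf
  refine decouplingExponent_of_forall_ge (A := A) (n₀ := n₀) fun n hn => ?_
  induction n, hn using Nat.le_induction with
  | base =>
    have hA0 : (p : ℝ) ^ n₀ ≤ A := le_max_left _ _
    refine (decouplingBound_trivial hk n₀).mono (hA0.trans ?_)
    exact le_mul_of_one_le_right (by positivity) (one_le_rpow one_lt_cast_prime.le (by positivity))
  | succ n hn ih =>
    refine hstep n _ _ _ (by positivity) (by positivity) (by positivity) ih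
      (hn₀ (n + 1) (by omega)) ?_
    rw [mul_pow, mul_pow, hrpow, hrpow, rpow_mul_natCast hp.le]
    calc ρ * (A ^ critExp k * b ^ n) + κ * b ^ (n + 1)
        = (ρ * A ^ critExp k + κ * b) * b ^ n := by ring
      _ ≤ A ^ critExp k * b * b ^ n := by gcongr
      _ = A ^ critExp k * b ^ (n + 1) := by ring

lemma BilinearBound.eventually_of_le {c z : ℝ} (hcz : c ≤ z)
    (h : ∀ᶠ n : ℕ in Filter.atTop, BilinearBound p k l n 1 1 ((p : ℝ) ^ (c * n))) :
    ∀ᶠ n : ℕ in Filter.atTop, BilinearBound p k l n 1 1 ((p : ℝ) ^ (z * n)) := by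
  filter_upwards [h] with n hn
  exact hn.mono (rpow_le_rpow_of_exponent_le one_lt_cast_prime.le (by gcongr))

lemma DecouplingExponent.improve (hk : 2 ≤ k) (hkp : k < p) (hx : 0 < x)
    (h : DecouplingExponent p k x) (hlower : ∀ l, 1 ≤ l → l < k → DecouplingExponent p l 0) :
    ∃ y, 0 < y ∧ y < x ∧ DecouplingExponent p k y := by
  obtain ⟨l, -, hlk, δ, hδ, hBil⟩ := exists_bilinearBound_gain hk hkp hx h hlower
  have hσ : (0 : ℝ) < critExp k := by
    exact_mod_cast Nat.pos_of_ne_zero (critExp_ne_zero (by omega : 1 ≤ k))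
  refine ⟨max (x / 2) (x - δ / critExp k), lt_max_of_lt_left (half_pos hx),
    max_lt (half_lt_self hx) (sub_lt_self _ (by positivity)),
    decouplingExponent_of_bilinearBound (by omega) hlk.le (lt_max_of_lt_left (half_pos hx))
      (BilinearBound.eventually_of_le ?_ hBil)⟩
  calc critExp k * x - δ = critExp k * (x - δ / critExp k) := by field_simp
    _ ≤ _ := by gcongr; exact le_max_right _ _

lemma DecouplingExponent.zero_of_improve (h₁ : DecouplingExponent p k x) (hx : 0 ≤ x)
    (himprove : ∀ x, 0 < x → DecouplingExponent p k x →
      ∃ y, 0 < y ∧ y < x ∧ DecouplingExponent p k y) : DecouplingExponent p k 0 := by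
  set S : Set ℝ := {x | 0 ≤ x ∧ DecouplingExponent p k x}
  have hne : S.Nonempty := ⟨x, hx, h₁⟩
  have hbdd : BddBelow S := ⟨0, fun x hx => hx.1⟩
  have hinf : DecouplingExponent p k (sInf S) := fun ε hε => by
    obtain ⟨z, ⟨-, hz⟩, hlt⟩ := exists_lt_of_csInf_lt hne
      (lt_add_of_pos_right (sInf S) (half_pos hε))
    filter_upwards [hz (ε / 2) (half_pos hε)] with n hn
    refine hn.mono (rpow_le_rpow_of_exponent_le one_lt_cast_prime.le ?_)
    gcongr ?_ * _
    linarith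
  rcases (le_csInf hne fun x hx => hx.1 : 0 ≤ sInf S).eq_or_lt with h0 | hpos
  · rwa [h0]
  · obtain ⟨y, hy, hlt, hdec⟩ := himprove _ hpos hinf
    exact absurd (csInf_le hbdd ⟨hy.le, hdec⟩) hlt.not_ge

lemma expect_norm_sq_sum_addChar {G ι : Type*} [AddCommGroup G] [Fintype G] [Fintype ι]
    {χ : ι → AddChar G ℂ} (hχ : Function.Injective χ) (A : ι → ℂ) :
    𝔼 x, ‖∑ c, A c * χ c x‖ ^ 2 = ∑ c, ‖A c‖ ^ 2 := by
  have hsq (x : G) : ((‖∑ c, A c * χ c x‖ ^ 2 : ℝ) : ℂ) =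
      ∑ c, ∑ c', A c * starRingEnd ℂ (A c') * (χ c - χ c') x := by
    rw [Complex.ofReal_pow, ← Complex.mul_conj', map_sum, sum_mul_sum]
    refine sum_congr rfl fun c _ => sum_congr rfl fun c' _ => ?_
    rw [map_mul, AddChar.sub_apply', div_eq_mul_inv, ← AddChar.inv_apply_eq_conj]
    ring
  have horth (c c' : ι) : 𝔼 x, (χ c - χ c') x = if c = c' then 1 else 0 := by
    simp only [AddChar.expect_eq_ite, sub_eq_zero, hχ.eq_iff]
  apply Complex.ofReal_injective
  rw [Complex.ofReal_expect]
  simp only [hsq, expect_sum_comm, ← mul_expect, horth, mul_ite, mul_one, mul_zero, sum_ite_eq,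
    mem_univ, if_true, Complex.mul_conj']
  push_cast
  rfl

lemma decouples_degree_one {q Q : ℕ} [NeZero q] [NeZero Q] (hQ : Q = q) (a : ℤ → ℂ)
    (s : Finset ℤ) : Decouples (1 : Freq 1 Q → ℝ) (critExp 1) a s q 1 := by
  subst hQ
  let χ (c : ZMod Q) : AddChar (Freq 1 Q) ℂ :=
    (AddChar.mulShift ZMod.stdAddChar c).compAddMonoidHom
      (Pi.evalAddMonoidHom (fun _ : Fin 1 => ZMod Q) 0)
  have hχ : Function.Injective χ := fun c c' h =>
    ZMod.injective_stdAddChar (by simpa [χ] using DFunLike.congr_fun h fun _ => 1)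
  let A (c : ZMod Q) : ℂ := ∑ x ∈ residueClass s Q c, a x
  have hclass (c : ZMod Q) (α : Freq 1 Q) : expSum a (residueClass s Q c) α = A c * χ c α := by
    rw [expSum, sum_mul]
    refine sum_congr rfl fun x hx => ?_
    simp [χ, phase, ← (mem_residueClass.1 hx).2, mul_comm]
  have hnorm (f : Freq 1 Q → ℝ) : wNorm 1 (critExp 1) f = 𝔼 α, f α := by
    simp [wNorm, critExp]
  rw [Decouples, one_mul, classNormSum]
  simp only [hnorm, energy, hclass, norm_mul, AddChar.norm_apply, mul_one, Fintype.expect_const,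
    expSum_eq_sum_residueClass a s Q]
  exact (expect_norm_sq_sum_addChar hχ A).le

lemma decouplingBound_one (q : ℕ) [NeZero q] : DecouplingBound 1 q 1 :=
  decouples_degree_one (pow_one q)

theorem decouplingExponent_zero (hk : 1 ≤ k) (hkp : k < p) : DecouplingExponent p k 0 := by
  induction k using Nat.strong_induction_on with
  | _ k ih =>
    rcases hk.eq_or_lt with rfl | hk2
    · exact decouplingExponent_of_forall_ge (A := 1) (n₀ := 0) fun n _ =>
        (decouplingBound_one _).mono (by simp)
    · refine (decouplingExponent_of_forall_ge (A := 1) (y := 1) (n₀ := 0) fun n _ =>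
        (decouplingBound_trivial hk n).mono (by simp)).zero_of_improve zero_le_one
        fun x hx h => h.improve hk2 hkp hx fun l hl hlk => ih l hlk hl (hlk.trans hkp)

theorem exists_decouplingBound (hk : 1 ≤ k) (hkp : k < p) {ε : ℝ} (hε : 0 < ε) :
    ∃ C : ℝ, 0 < C ∧ ∀ n : ℕ, DecouplingBound k (p ^ n) (C * (p : ℝ) ^ (ε * n)) := by
  obtain ⟨n₀, hn₀⟩ := Filter.eventually_atTop.1 (decouplingExponent_zero hk hkp ε hε)
  have hp : (1 : ℝ) < p := one_lt_cast_prime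
  refine ⟨(p : ℝ) ^ n₀, by positivity, fun n => ?_⟩
  rcases le_total n₀ n with h | h
  · refine (hn₀ n h).mono ?_
    rw [zero_add]
    exact le_mul_of_one_le_left (by positivity) (one_le_pow₀ hp.le)
  · refine (decouplingBound_trivial hk n).mono ((pow_le_pow_right₀ hp.le h).trans ?_)
    exact le_mul_of_one_le_right (by positivity) (one_le_rpow hp.le (by positivity))

end Induction

section TaylorCoeff

variable {G H : Type*}

/-- The value at the integer `x` of the polynomial `a₁ x + ⋯ + a_k x ^ k` with coefficients in an
additive group. -/
def polyValue [AddCommGroup G] (k : ℕ) (a : ℕ → G) (x : ℤ) : G := ∑ h ∈ Icc 1 k, x ^ h • a h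

/-- The coefficient of `x ^ i` in the translate `polyValue k a (x + m)`. -/
def taylorCoeff [AddCommGroup G] (k : ℕ) (a : ℕ → G) (m : ℤ) (i : ℕ) : G :=
  ∑ h ∈ Icc 1 k, (h.choose i * m ^ (h - i) : ℤ) • a h

section Group

variable [AddCommGroup G] [AddCommGroup H] {k : ℕ} {a : ℕ → G}

lemma map_polyValue (f : G →+ H) (x : ℤ) : f (polyValue k a x) = polyValue k (f ∘ a) x := by
  simp [polyValue]

lemma map_taylorCoeff (f : G →+ H) (m : ℤ) (i : ℕ) :
    f (taylorCoeff k a m i) = taylorCoeff k (f ∘ a) m i := by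
  simp [taylorCoeff]

lemma polyValue_sub (a b : ℕ → G) (x : ℤ) :
    polyValue k (a - b) x = polyValue k a x - polyValue k b x := by
  simp [polyValue, smul_sub]

lemma polyValue_add_single (hk : 1 ≤ k) (a : ℕ → G) (t : G) (x : ℤ) :
    polyValue k (a + Pi.single 1 t) x = polyValue k a x + x • t := by
  have hsingle : ∑ h ∈ Icc 1 k, x ^ h • (Pi.single 1 t : ℕ → G) h = x • t := by
    rw [sum_eq_single_of_mem 1 (mem_Icc.2 ⟨le_rfl, hk⟩) fun h _ hne => by
      rw [Pi.single_eq_of_ne hne, smul_zero], Pi.single_eq_same, pow_one]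
  simp only [polyValue, Pi.add_apply, smul_add, sum_add_distrib, hsingle]

lemma polyValue_add (a : ℕ → G) (x m : ℤ) :
    polyValue k a (x + m) = ∑ i ∈ range (k + 1), x ^ i • taylorCoeff k a m i := by
  have hterm : ∀ h ∈ Icc 1 k,
      (x + m) ^ h • a h = ∑ i ∈ range (k + 1), (x ^ i * (h.choose i * m ^ (h - i))) • a h := by
    intro h hh
    have hsub : range (h + 1) ⊆ range (k + 1) :=
      range_subset_range.2 (Nat.succ_le_succ (mem_Icc.1 hh).2)
    rw [add_pow, sum_smul, ← sum_subset hsub fun i _ hi => by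
      rw [Nat.choose_eq_zero_of_lt (by simpa using hi)]; simp]
    exact sum_congr rfl fun i _ => by ring_nf
  simp only [polyValue, taylorCoeff, sum_congr rfl hterm, smul_sum, mul_smul]
  exact sum_comm

lemma taylorCoeff_self (hk : 1 ≤ k) (m : ℤ) : taylorCoeff k a m k = a k := by
  rw [taylorCoeff, sum_eq_single_of_mem k (mem_Icc.2 ⟨hk, le_rfl⟩) fun h hh hne => by
    rw [Nat.choose_eq_zero_of_lt (by grind)]; simp]
  simp

lemma taylorCoeff_sub_taylorCoeff {i : ℕ} (hi : i + 1 ≤ k) (m m' : ℤ) :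
    taylorCoeff k a m i - taylorCoeff k a m' i = ((i + 1) * (m - m')) • a (i + 1) +
      ∑ h ∈ Icc (i + 2) k, (h.choose i * (m ^ (h - i) - m' ^ (h - i)) : ℤ) • a h := by
  simp only [taylorCoeff, ← sum_sub_distrib, ← sub_smul, ← mul_sub]
  have hsub : Icc (i + 1) k ⊆ Icc 1 k := Icc_subset_Icc_left (by omega)
  rw [← sum_subset hsub fun h _ hh => by
      rw [show h - i = 0 by grind, pow_zero, pow_zero, sub_self, mul_zero, zero_smul],
    ← insert_Icc_add_one_left_eq_Icc hi, sum_insert (by simp)]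
  simp [add_assoc]

end Group

lemma abs_geom_sum₂_le {x y : ℤ} {N : ℕ} (hx : |x| ≤ N) (hy : |y| ≤ N) (e : ℕ) :
    |∑ i ∈ range e, x ^ i * y ^ (e - 1 - i)| ≤ e * (N : ℤ) ^ (e - 1) := by
  refine (abs_sum_le_sum_abs _ _).trans ((sum_le_card_nsmul _ _ ((N : ℤ) ^ (e - 1)) ?_).trans_eq
    (by simp))
  intro i hi
  rw [abs_mul, abs_pow, abs_pow]
  calc |x| ^ i * |y| ^ (e - 1 - i) ≤ (N : ℤ) ^ i * (N : ℤ) ^ (e - 1 - i) := by gcongr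
    _ = (N : ℤ) ^ (e - 1) := by rw [← pow_add]; congr 1; grind

variable [SeminormedAddCommGroup G] {k N : ℕ} {a : ℕ → G} {m m' : ℤ}

lemma norm_zsmul_le_abs_mul (n : ℤ) (g : G) : ‖n • g‖ ≤ |(n : ℝ)| * ‖g‖ := by
  simpa only [Int.norm_eq_abs] using norm_zsmul_le n g

lemma norm_choose_mul_sub_pow_smul_le (hN : 1 ≤ N) (hm : |m| ≤ N) (hm' : |m'| ≤ N) {c i h : ℕ}
    (hih : i + 2 ≤ h) {κ : ℝ} (hκ : ‖(c * (m - m')) • a h‖ ≤ κ * (N / (N : ℝ) ^ h)) :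
    ‖(c * (h.choose i * (m ^ (h - i) - m' ^ (h - i))) : ℤ) • a h‖ ≤
      h.choose i * h * κ * (N / (N : ℝ) ^ (i + 1)) := by
  set W : ℤ := ∑ l ∈ range (h - i), m ^ l * m' ^ (h - i - 1 - l)
  have hW : |(W : ℝ)| ≤ h * (N : ℝ) ^ (h - i - 1) := by
    refine (show |(W : ℝ)| ≤ (h - i : ℕ) * (N : ℝ) ^ (h - i - 1) from
      mod_cast abs_geom_sum₂_le hm hm' (h - i)).trans ?_
    gcongr
    omega
  have hfactor : m ^ (h - i) - m' ^ (h - i) = (m - m') * W :=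
    ((Commute.all m m').mul_geom_sum₂ _).symm
  have hsmul : (c * (h.choose i * (m ^ (h - i) - m' ^ (h - i))) : ℤ) • a h =
      (h.choose i * W) • (c * (m - m')) • a h := by
    rw [hfactor, smul_smul]; ring_nf
  have _hN0 : (0 : ℝ) < N := by exact_mod_cast hN
  have hpow : (N : ℝ) ^ h = (N : ℝ) ^ (h - i - 1) * (N : ℝ) ^ (i + 1) := by
    rw [← pow_add]; congr 1; omega
  calc _ ≤ |((h.choose i * W : ℤ) : ℝ)| * (κ * (N / (N : ℝ) ^ h)) := by
        rw [hsmul]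
        exact (norm_zsmul_le_abs_mul _ _).trans (by gcongr)
    _ = h.choose i * |(W : ℝ)| * (κ * (N / (N : ℝ) ^ h)) := by
        push_cast; rw [abs_mul, Nat.abs_cast]
    _ ≤ h.choose i * (h * (N : ℝ) ^ (h - i - 1)) * (κ * (N / (N : ℝ) ^ h)) := by
        have := (norm_nonneg _).trans hκ
        gcongr
    _ = _ := by rw [hpow]; field_simp

lemma norm_smul_le_of_tail (hN : 1 ≤ N) (hm : |m| ≤ N) (hm' : |m'| ≤ N) {c i : ℕ} (hi : i + 1 ≤ k)
    {κ : ℝ} (hcoeff : ‖taylorCoeff k a m i - taylorCoeff k a m' i‖ ≤ ((N : ℝ) ^ i)⁻¹)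
    (htail : ∀ h ∈ Icc (i + 2) k, ‖(c * (m - m')) • a h‖ ≤ κ * (N / (N : ℝ) ^ h)) :
    ‖(c * (i + 1 : ℕ) * (m - m')) • a (i + 1)‖ ≤
      (c + ∑ h ∈ Icc (i + 2) k, h.choose i * h * κ) * (N / (N : ℝ) ^ (i + 1)) := by
  have _hN0 : (0 : ℝ) < N := by exact_mod_cast hN
  have hsolve : (c * (i + 1 : ℕ) * (m - m')) • a (i + 1) =
      (c : ℤ) • (taylorCoeff k a m i - taylorCoeff k a m' i) -
        ∑ h ∈ Icc (i + 2) k, (c * (h.choose i * (m ^ (h - i) - m' ^ (h - i))) : ℤ) • a h := by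
    rw [taylorCoeff_sub_taylorCoeff hi, smul_add, smul_smul, smul_sum]
    simp [smul_smul, mul_assoc]
  have hmain : ‖(c : ℤ) • (taylorCoeff k a m i - taylorCoeff k a m' i)‖ ≤
      c * (N / (N : ℝ) ^ (i + 1)) := by
    refine (norm_zsmul_le_abs_mul _ _).trans ?_
    rw [Int.cast_natCast, Nat.abs_cast]
    gcongr
    exact hcoeff.trans_eq (by rw [pow_succ]; field_simp)
  rw [hsolve, add_mul, sum_mul]
  refine (norm_sub_le _ _).trans (add_le_add hmain (norm_sum_le_of_le _ fun h hh => ?_))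
  exact norm_choose_mul_sub_pow_smul_le hN hm hm' (mem_Icc.1 hh).1 (htail h hh)

-- Downward induction: the `i`-th Taylor coefficient involves only the `a h` with `i ≤ h`, so the
-- leading coefficients are controlled first and then substituted into the next equation.
lemma exists_norm_smul_le_of_taylorCoeff (G : Type*) [SeminormedAddCommGroup G] {k t : ℕ}
    (ht : t < k) : ∃ c : ℕ, 1 ≤ c ∧ ∃ κ : ℝ, 0 ≤ κ ∧ ∀ {N : ℕ} {a : ℕ → G} {m m' : ℤ}, 1 ≤ N →
      |m| ≤ N → |m'| ≤ N →
      (∀ i, 1 ≤ i → i < k → ‖taylorCoeff k a m i - taylorCoeff k a m' i‖ ≤ ((N : ℝ) ^ i)⁻¹) →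
      ∀ h, k < h + t → h ≤ k → ‖(c * (m - m')) • a h‖ ≤ κ * (N / (N : ℝ) ^ h) := by
  induction t with
  | zero => exact ⟨1, le_rfl, 0, le_rfl, fun _ _ _ _ h _ _ => by omega⟩
  | succ t ih =>
    obtain ⟨c, hc, κ, hκ, H⟩ := ih (by omega)
    obtain ⟨i, rfl⟩ : ∃ i, k = i + 1 + t := ⟨k - 1 - t, by omega⟩
    set κ' : ℝ := c + ∑ h ∈ Icc (i + 2) (i + 1 + t), h.choose i * h * κ
    have _hκ' : 0 ≤ κ' := by positivity
    refine ⟨c * (i + 1), Nat.mul_pos hc i.succ_pos, (i + 1) * κ + κ', by positivity, ?_⟩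
    intro N a m m' hN hm hm' hcoeff h hlow hup
    have htail := H hN hm hm' hcoeff
    have hscale : 0 ≤ (N : ℝ) / (N : ℝ) ^ h := by positivity
    rw [add_mul]
    rcases (show h = i + 1 ∨ i + 1 < h by omega) with rfl | hlt
    · refine le_add_of_nonneg_of_le (by positivity) ?_
      simpa using norm_smul_le_of_tail hN hm hm' (by omega) (hcoeff i (by omega) (by omega))
        fun h hh => htail h (by grind) (mem_Icc.1 hh).2
    · refine le_add_of_le_of_nonneg ?_ (by positivity)
      have hsmul : ((c * (i + 1) : ℕ) * (m - m')) • a h =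
          ((i + 1 : ℕ) : ℤ) • (c * (m - m')) • a h := by
        rw [smul_smul]; push_cast; ring_nf
      rw [hsmul, mul_assoc]
      refine (norm_zsmul_le_abs_mul _ _).trans ?_
      rw [Int.cast_natCast, Nat.abs_cast, Nat.cast_succ]
      gcongr
      exact htail h (by omega) hup

end TaylorCoeff

section Spacing

lemma exists_coe_eq_abs_eq_norm (u : UnitAddCircle) :
    ∃ y : ℝ, (y : UnitAddCircle) = u ∧ |y| = ‖u‖ := by
  obtain ⟨x, rfl⟩ := QuotientAddGroup.mk_surjective u
  exact ⟨x - round x, by simp, UnitAddCircle.norm_eq.symm⟩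

lemma norm_coe_unitAddCircle_le (x : ℝ) : ‖(x : UnitAddCircle)‖ ≤ |x| :=
  UnitAddCircle.norm_eq.trans_le (by simpa using round_le x 0)

lemma card_le_of_le_norm_sub {ι : Type*} {S : Finset ι} (u : ι → UnitAddCircle) {δ η : ℝ}
    (hη : 0 < η) (hδ : ∀ i ∈ S, ‖u i‖ ≤ δ)
    (hsep : ∀ i ∈ S, ∀ j ∈ S, i ≠ j → η ≤ ‖u i - u j‖) : #S ≤ ⌊2 * δ / η⌋₊ + 1 := by
  choose y hyu hy using fun i => exists_coe_eq_abs_eq_norm (u i)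
  have hbound (i) (hi : i ∈ S) := abs_le.1 ((hy i).trans_le (hδ i hi))
  have hmaps : ∀ i ∈ S, ⌊(y i + δ) / η⌋₊ ∈ range (⌊2 * δ / η⌋₊ + 1) := fun i hi => by
    rw [mem_range, Nat.lt_succ_iff]
    exact Nat.floor_le_floor (by gcongr; linarith [(hbound i hi).2])
  rw [← card_range (⌊2 * δ / η⌋₊ + 1)]
  refine card_le_card_of_injOn _ hmaps fun i hi j hj hij => ?_
  by_contra hne
  have hnonneg (i) (hi : i ∈ S) : 0 ≤ (y i + δ) / η := div_nonneg (by linarith [hbound i hi]) hη.le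
  have hlt : |(y i + δ) / η - (y j + δ) / η| < 1 := by
    have hi' := hnonneg i hi
    have hj' := hnonneg j hj
    have hij : ⌊(y i + δ) / η⌋₊ = ⌊(y j + δ) / η⌋₊ := hij
    rw [abs_lt]
    constructor <;> linarith [Nat.floor_le hi', Nat.lt_floor_add_one ((y i + δ) / η),
      Nat.floor_le hj', Nat.lt_floor_add_one ((y j + δ) / η), congrArg (Nat.cast (R := ℝ)) hij]
  rw [← sub_div, add_sub_add_right_eq_sub, abs_div, abs_of_pos hη, div_lt_one hη] at hlt
  refine absurd (hsep i hi j hj hne) (not_le.2 (lt_of_le_of_lt ?_ hlt))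
  rw [← hyu, ← hyu, ← AddCircle.coe_sub]
  exact norm_coe_unitAddCircle_le _

variable {x : ℝ} {a : ℤ} {q : ℕ}

lemma inv_two_mul_le_norm_zsmul (hq : 0 < q) (hgcd : Int.gcd a q = 1)
    (hx : |x - a / q| ≤ (q : ℝ)⁻¹ ^ 2) {r : ℤ} (hr0 : r ≠ 0) (hr : 2 * |r| ≤ q) :
    (2 * q : ℝ)⁻¹ ≤ ‖r • (x : UnitAddCircle)‖ := by
  have hqR : (0 : ℝ) < q := by exact_mod_cast hq
  rw [← AddCircle.coe_zsmul, UnitAddCircle.norm_eq, zsmul_eq_mul]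
  set z := round (r * x)
  have hne : r * a - z * q ≠ 0 := fun h => by
    have hdvd : (q : ℤ) ∣ r := (Int.isCoprime_iff_gcd_eq_one.2 hgcd).symm.dvd_of_dvd_mul_right
      ⟨z, by linarith⟩
    have := Int.le_of_dvd (abs_pos.2 hr0) ((dvd_abs _ _).2 hdvd)
    have := abs_pos.2 hr0
    omega
  have hfrac : (q : ℝ)⁻¹ ≤ |(r * a - z * q : ℝ) / q| := by
    rw [abs_div, abs_of_pos hqR, inv_eq_one_div]
    gcongr
    exact_mod_cast Int.one_le_abs hne
  have herror : |r * (x - a / q)| ≤ (2 * q : ℝ)⁻¹ := by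
    have hr' : |(r : ℝ)| ≤ q / 2 := by
      rw [le_div_iff₀' two_pos]; exact_mod_cast hr
    rw [abs_mul]
    calc |(r : ℝ)| * |x - a / q| ≤ q / 2 * (q : ℝ)⁻¹ ^ 2 := by gcongr
      _ = _ := by field_simp
  have htri : |(r * a - z * q : ℝ) / q| ≤ |r * x - z| + |r * (x - a / q)| := by
    rw [show ((r * a - z * q) / q : ℝ) = (r * x - z) - r * (x - a / q) by field_simp; ring]
    exact abs_sub _ _
  have hhalf : (q : ℝ)⁻¹ = (2 * q : ℝ)⁻¹ + (2 * q : ℝ)⁻¹ := by field_simp; norm_num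
  linarith

lemma abs_natCast_sub_lt_of_div_eq {X Y B : ℕ} (hB : 0 < B) (h : X / B = Y / B) :
    |(X : ℤ) - Y| < B := by
  have hX := Nat.div_add_mod X B
  have hY := Nat.div_add_mod Y B
  rw [h] at hX
  have := Nat.mod_lt X hB
  have := Nat.mod_lt Y hB
  rw [abs_lt]
  omega

-- Within a block of `m` on which `c * m` varies by at most `q / 2` the points `(c * m) • x` are
-- `1 / (2 * q)`-separated.
lemma card_le_of_norm_smul_sub_le (hq : 0 < q) (hgcd : Int.gcd a q = 1)
    (hx : |x - a / q| ≤ (q : ℝ)⁻¹ ^ 2) {δ : ℝ} (hδ : 0 ≤ δ) {c N : ℕ} (hc : 1 ≤ c) {I : Finset ℕ}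
    (hI : ∀ m ∈ I, m ≤ N)
    (h : ∀ m ∈ I, ∀ m' ∈ I, ‖(c * (m - m') : ℤ) • (x : UnitAddCircle)‖ ≤ δ) :
    (#I : ℝ) ≤ (4 * q * δ + 1) * (2 * c * N / q + 1) := by
  rcases I.eq_empty_or_nonempty with rfl | ⟨m₀, hm₀⟩
  · rw [card_empty, Nat.cast_zero]; positivity
  have _hqR : (0 : ℝ) < q := by exact_mod_cast hq
  set B := (q + 1) / 2
  have hB : 0 < B := by omega
  have hqB : (q : ℝ) / 2 ≤ B := by
    rw [div_le_iff₀' two_pos]; exact_mod_cast (by omega : q ≤ 2 * B)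
  have hfibre (b : ℕ) : #{m ∈ I | c * m / B = b} ≤ ⌊2 * δ / (2 * q : ℝ)⁻¹⌋₊ + 1 := by
    refine card_le_of_le_norm_sub (fun m : ℕ => (c * (m - m₀) : ℤ) • (x : UnitAddCircle))
      (by positivity) (fun m hm => h m (mem_filter.1 hm).1 m₀ hm₀) fun m hm m' hm' hne => ?_
    rw [← sub_smul, ← mul_sub, sub_sub_sub_cancel_right]
    have hlt := abs_natCast_sub_lt_of_div_eq hB
      ((mem_filter.1 hm).2.trans (mem_filter.1 hm').2.symm)
    rw [Nat.cast_mul, Nat.cast_mul, ← mul_sub] at hlt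
    refine inv_two_mul_le_norm_zsmul hq hgcd hx (mul_ne_zero ?_ ?_) ?_ <;> omega
  have hblocks : ∀ m ∈ I, c * m / B ∈ range (c * N / B + 1) := fun m hm =>
    mem_range.2 (Nat.lt_succ_of_le (Nat.div_le_div_right (Nat.mul_le_mul_left c (hI m hm))))
  have hcard := card_le_mul_card_image_of_maps_to hblocks _ fun b _ => hfibre b
  rw [card_range] at hcard
  refine (Nat.cast_le.2 hcard).trans ?_
  push_cast
  gcongr
  · exact (Nat.floor_le (by positivity)).trans_eq (by field_simp; ring)
  · refine Nat.cast_div_le.trans ?_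
    push_cast
    calc (c * N / B : ℝ) ≤ c * N / (q / 2) := by gcongr
      _ = _ := by field_simp

end Spacing

section MeanValue

variable {d q : ℕ} [NeZero q] {a : ℤ → ℂ} {s : Finset ℤ} {A : ℝ}

lemma wNorm_one_le {Ω : Type*} [Fintype Ω] [Nonempty Ω] {f : Ω → ℝ} {r : ℕ} (hr : r ≠ 0)
    (hf : 0 ≤ f) {c : ℝ} (h : ∀ ω, f ω ≤ c) : wNorm 1 r f ≤ c := by
  have hc : 0 ≤ c := (hf (Classical.arbitrary Ω)).trans (h _)
  refine (wNorm_mono zero_le_one hf (f' := fun _ => c) h).trans_eq ?_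
  simp only [wNorm, Pi.one_apply, one_mul, Fintype.expect_const, pow_rpow_inv_natCast hc hr]

lemma energy_le_of_card_le_one {k Q : ℕ} [NeZero Q] (hs : #s ≤ 1) (ha : ∀ x ∈ s, ‖a x‖ ≤ A)
    (α : Freq k Q) : energy a s α ≤ A ^ 2 * #s := by
  rcases card_le_one_iff_subset_singleton.1 hs with ⟨x, hsx⟩
  rcases subset_singleton_iff.1 hsx with rfl | rfl
  · simp [energy, expSum]
  · simpa [energy, expSum] using pow_le_pow_left₀ (norm_nonneg _) (ha x (mem_singleton_self x)) 2

lemma DecouplingBound.expect_energy_pow_le (hd : 1 ≤ d) {D : ℝ} (hD : DecouplingBound d q D)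
    (hD0 : 0 ≤ D) (hs : Set.InjOn (fun x : ℤ => (x : ZMod q)) s) (ha : ∀ x ∈ s, ‖a x‖ ≤ A) :
    𝔼 β : Freq d (q ^ d), energy a s β ^ critExp d ≤ (D * (A ^ 2 * #s)) ^ critExp d := by
  have hr := critExp_ne_zero hd
  have hclass (c : ZMod q) : wNorm 1 (critExp d) (energy a (residueClass s q c) :
      Freq d (q ^ d) → ℝ) ≤ A ^ 2 * #(residueClass s q c) := by
    refine wNorm_one_le hr (energy_nonneg _ _) (energy_le_of_card_le_one (card_le_one.2 ?_)
      fun x hx => ha x (mem_residueClass.1 hx).1)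
    intro x hx y hy
    rw [mem_residueClass] at hx hy
    exact hs hx.1 hy.1 (hx.2.trans hy.2.symm)
  have hsum : classNormSum (1 : Freq d (q ^ d) → ℝ) (critExp d) a s q ≤ A ^ 2 * #s := by
    refine (sum_le_sum fun c _ => hclass c).trans_eq ?_
    rw [← mul_sum, card_eq_sum_card_fiberwise (f := fun x : ℤ => (x : ZMod q)) (t := univ)
      fun _ _ => mem_coe.2 (mem_univ _), Nat.cast_sum]
    rfl
  calc 𝔼 β : Freq d (q ^ d), energy a s β ^ critExp d
      = wNorm (1 : Freq d (q ^ d) → ℝ) (critExp d) (energy a s) ^ critExp d := by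
        simp [wNorm_pow hr zero_le_one (energy_nonneg a s)]
    _ ≤ (D * (A ^ 2 * #s)) ^ critExp d := by
        refine pow_le_pow_left₀ (wNorm_nonneg zero_le_one (energy_nonneg a s)) ?_ _
        exact (hD a s).trans (mul_le_mul_of_nonneg_left hsum hD0)

end MeanValue

section Averaging

variable {ι : Type*}

lemma half_le_norm_expect {B : Finset ι} (hB : B.Nonempty) {f : ι → ℂ}
    (hf : ∀ θ ∈ B, ‖f θ - 1‖ ≤ 1 / 2) : 1 / 2 ≤ ‖𝔼 θ ∈ B, f θ‖ := by
  have hdist : ‖𝔼 θ ∈ B, f θ - 1‖ ≤ 1 / 2 := by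
    rw [← expect_const hB (1 : ℂ), ← expect_sub_distrib]
    exact (RCLike.norm_expect_le (K := ℂ)).trans (expect_le hB hf)
  have htri := norm_sub_norm_le (1 : ℂ) (𝔼 θ ∈ B, f θ)
  rw [norm_one, norm_sub_rev] at htri
  linarith

lemma pow_expect_le_expect_pow {B : Finset ι} (hB : B.Nonempty) {f : ι → ℝ}
    (hf : ∀ i ∈ B, 0 ≤ f i) (r : ℕ) : (𝔼 i ∈ B, f i) ^ r ≤ 𝔼 i ∈ B, f i ^ r := by
  have hcard : (#B : ℝ) ≠ 0 := by exact_mod_cast hB.card_ne_zero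
  have h := Real.pow_arith_mean_le_arith_mean_pow B (fun _ => (#B : ℝ)⁻¹) f
    (fun _ _ => by positivity) (by simp [hcard]) hf r
  simpa only [expect_eq_sum_div_card, ← mul_sum, div_eq_inv_mul] using h

variable {k Q : ℕ} [NeZero Q]

-- Averaging over `θ ∈ B` is undone by dividing the coefficients by the averaged character.
lemma expSum_eq_expect_expSum_add (a : ℤ → ℂ) {s : Finset ℤ} {B : Finset (Freq k Q)}
    (hB : ∀ x ∈ s, 𝔼 θ ∈ B, (ZMod.stdAddChar (phase θ x) : ℂ) ≠ 0) (β : Freq k Q) :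
    expSum a s β = 𝔼 θ ∈ B,
      expSum (fun x => a x / 𝔼 θ ∈ B, (ZMod.stdAddChar (phase θ x) : ℂ)) s (β + θ) := by
  have hphase (θ : Freq k Q) (x : ℤ) : phase (β + θ) x = phase β x + phase θ x := by
    simp only [phase, Pi.add_apply, add_mul, sum_add_distrib]
  simp only [expSum]
  rw [expect_sum_comm]
  refine sum_congr rfl fun x hx => ?_
  simp only [hphase, AddChar.map_add_eq_mul, ← mul_assoc]
  rw [← mul_expect]
  field_simp [hB x hx]

lemma energy_pow_le_expect_energy_add_pow (a : ℤ → ℂ) {s : Finset ℤ} {B : Finset (Freq k Q)}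
    (hBne : B.Nonempty) (hB : ∀ x ∈ s, 𝔼 θ ∈ B, (ZMod.stdAddChar (phase θ x) : ℂ) ≠ 0) (r : ℕ)
    (β : Freq k Q) : energy a s β ^ r ≤ 𝔼 θ ∈ B,
      energy (fun x => a x / 𝔼 θ ∈ B, (ZMod.stdAddChar (phase θ x) : ℂ)) s (β + θ) ^ r := by
  simp only [energy, ← pow_mul]
  refine le_trans ?_ (pow_expect_le_expect_pow hBne (fun _ _ => norm_nonneg _) (2 * r))
  refine pow_le_pow_left₀ (norm_nonneg _) ?_ _
  rw [expSum_eq_expect_expSum_add a hB]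
  exact RCLike.norm_expect_le (K := ℂ)

lemma sum_sum_add_le_mul_sum {G : Type*} [AddCommGroup G] [Fintype G] [DecidableEq G]
    {f : G → ℝ} (hf : 0 ≤ f) {I : Finset ι} {B : Finset G} {β : ι → G} {K : ℝ}
    (hK : ∀ γ, (#{m ∈ I | γ - β m ∈ B} : ℝ) ≤ K) :
    ∑ m ∈ I, ∑ θ ∈ B, f (β m + θ) ≤ K * ∑ γ, f γ := by
  have htranslate (m : ι) : ∑ θ ∈ B, f (β m + θ) = ∑ γ, if γ - β m ∈ B then f γ else 0 := by
    rw [← sum_filter]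
    refine sum_nbij' (β m + ·) (· - β m) ?_ ?_ ?_ ?_ ?_ <;> simp
  simp only [htranslate]
  rw [sum_comm, mul_sum]
  refine sum_le_sum fun γ _ => ?_
  rw [← sum_filter, sum_const, nsmul_eq_mul]
  exact mul_le_mul_of_nonneg_right (hK γ) (hf γ)

end Averaging

section FreqBox

lemma norm_toCircle_sub_one_le (u : UnitAddCircle) :
    ‖(AddCircle.toCircle u : ℂ) - 1‖ ≤ 2 * π * ‖u‖ := by
  obtain ⟨y, rfl, hy⟩ := exists_coe_eq_abs_eq_norm u
  rw [← hy, AddCircle.toCircle_apply_mk, Circle.coe_exp, mul_comm _ Complex.I]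
  refine Real.norm_exp_I_mul_ofReal_sub_one_le.trans_eq ?_
  rw [div_one, Real.norm_eq_abs, abs_mul, abs_of_pos two_pi_pos]

variable {d Q N : ℕ} [NeZero Q]

lemma card_le_mul_card_norm_toAddCircle_le {M : ℕ} (hM : 2 ≤ M) :
    Q ≤ M * #{z : ZMod Q | ‖ZMod.toAddCircle z‖ ≤ (M : ℝ)⁻¹} := by
  have hQ := NeZero.pos Q
  have hMR : (0 : ℝ) < M := by exact_mod_cast two_pos.trans_le hM
  have hlt : Q / M < Q := Nat.div_lt_self hQ hM
  have hinj : Set.InjOn (fun t : ℕ => (t : ZMod Q)) (range (Q / M + 1)) := by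
    intro t ht t' ht' heq
    rw [coe_range, Set.mem_Iio] at ht ht'
    simpa only [ZMod.val_natCast_of_lt (show t < Q by omega),
      ZMod.val_natCast_of_lt (show t' < Q by omega)] using congrArg ZMod.val heq
  have hsub : (range (Q / M + 1)).image (fun t : ℕ => (t : ZMod Q)) ⊆
      ({z | ‖ZMod.toAddCircle z‖ ≤ (M : ℝ)⁻¹} : Finset (ZMod Q)) := by
    intro z hz
    obtain ⟨t, ht, rfl⟩ := mem_image.1 hz
    have htQ : (t : ℝ) * M ≤ Q := by
      exact_mod_cast (Nat.mul_le_mul_right M (Nat.lt_succ_iff.1 (mem_range.1 ht))).trans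
        (Nat.div_mul_le_self Q M)
    rw [mem_filter_univ, ZMod.toAddCircle_natCast]
    refine (norm_coe_unitAddCircle_le _).trans ?_
    rw [abs_of_nonneg (by positivity), ← one_div, div_le_div_iff₀ (by positivity) hMR, one_mul]
    exact htQ
  have hcard := card_le_card hsub
  rw [card_image_of_injOn hinj, card_range] at hcard
  calc Q ≤ M * (Q / M + 1) := (Nat.lt_mul_div_succ Q (two_pos.trans_le hM)).le
    _ ≤ _ := Nat.mul_le_mul_left M hcard

/-- Frequencies so close to `0` that their phases are nearly constant on `[-N, N]`. -/
def freqBox (d Q N : ℕ) [NeZero Q] : Finset (Freq d Q) :=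
  Fintype.piFinset fun i =>
    {z : ZMod Q | ‖ZMod.toAddCircle z‖ ≤ ((16 * d * N ^ (i.val + 1) : ℕ) : ℝ)⁻¹}

lemma mem_freqBox {θ : Freq d Q} : θ ∈ freqBox d Q N ↔
    ∀ i, ‖ZMod.toAddCircle (θ i)‖ ≤ ((16 * d * N ^ (i.val + 1) : ℕ) : ℝ)⁻¹ := by
  simp [freqBox, Fintype.mem_piFinset]

lemma freqBox_nonempty : (freqBox d Q N).Nonempty :=
  ⟨0, mem_freqBox.2 fun i => by rw [Pi.zero_apply, map_zero, norm_zero]; positivity⟩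

lemma norm_toAddCircle_phase_le (θ : Freq d Q) {x : ℤ} (hx : |x| ≤ N) :
    ‖ZMod.toAddCircle (phase θ x)‖ ≤ ∑ i, (N : ℝ) ^ (i.val + 1) * ‖ZMod.toAddCircle (θ i)‖ := by
  have hphase : phase θ x = ∑ i, x ^ (i.val + 1) • θ i := by
    simp only [phase, zsmul_eq_mul, Int.cast_pow, mul_comm]
  rw [hphase, map_sum]
  refine norm_sum_le_of_le _ fun i _ => ?_
  rw [map_zsmul]
  refine (norm_zsmul_le_abs_mul _ _).trans ?_
  gcongr
  rw [Int.cast_pow, abs_pow]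
  exact pow_le_pow_left₀ (abs_nonneg _) (by exact_mod_cast hx) _

lemma norm_stdAddChar_phase_sub_one_le (hd : 1 ≤ d) (hN : 1 ≤ N) {θ : Freq d Q}
    (hθ : θ ∈ freqBox d Q N) {x : ℤ} (hx : |x| ≤ N) :
    ‖(ZMod.stdAddChar (phase θ x) : ℂ) - 1‖ ≤ 1 / 2 := by
  have hphase : ‖ZMod.toAddCircle (phase θ x)‖ ≤ 1 / 16 := by
    calc _ ≤ ∑ i, (N : ℝ) ^ (i.val + 1) * ‖ZMod.toAddCircle (θ i)‖ :=
          norm_toAddCircle_phase_le θ hx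
      _ ≤ ∑ _i : Fin d, (1 / (16 * d) : ℝ) := by
          refine sum_le_sum fun i _ => ?_
          refine (mul_le_mul_of_nonneg_left (mem_freqBox.1 hθ i) (by positivity)).trans_eq ?_
          push_cast
          field_simp
      _ = 1 / 16 := by
          rw [sum_const, card_univ, Fintype.card_fin, nsmul_eq_mul]; field_simp
  rw [ZMod.stdAddChar_apply]
  refine (norm_toCircle_sub_one_le _).trans ?_
  nlinarith [pi_pos, pi_lt_four]

lemma prod_pow_succ_eq_pow_critExp (d N : ℕ) :
    ∏ i : Fin d, N ^ (i.val + 1) = N ^ critExp d := by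
  have hgauss := sum_range_id_mul_two (d + 1)
  rw [sum_range_succ', add_zero, Nat.add_sub_cancel, mul_comm (d + 1)] at hgauss
  rw [prod_pow_eq_pow_sum, Fin.sum_univ_eq_sum_range (· + 1) d, critExp, ← hgauss,
    Nat.mul_div_cancel _ two_pos]

lemma card_freq_le_mul_card_freqBox (hd : 1 ≤ d) (hN : 1 ≤ N) :
    Fintype.card (Freq d Q) ≤ (16 * d) ^ d * N ^ critExp d * #(freqBox d Q N) := by
  calc Fintype.card (Freq d Q) = ∏ _i : Fin d, Q := by simp
    _ ≤ ∏ i : Fin d, 16 * d * N ^ (i.val + 1) *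
          #{z : ZMod Q | ‖ZMod.toAddCircle z‖ ≤ ((16 * d * N ^ (i.val + 1) : ℕ) : ℝ)⁻¹} := by
        refine prod_le_prod' fun i _ => card_le_mul_card_norm_toAddCircle_le ?_
        have := Nat.one_le_pow (i.val + 1) N hN
        nlinarith
    _ = (16 * d) ^ d * N ^ critExp d * #(freqBox d Q N) := by
        rw [prod_mul_distrib, prod_mul_distrib, prod_pow_succ_eq_pow_critExp, freqBox,
          Fintype.card_piFinset, prod_const, card_univ, Fintype.card_fin]

lemma norm_sub_le_of_sub_mem_freqBox (hd : 1 ≤ d) (hN : 1 ≤ N) {γ β β' : Freq d Q}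
    (hβ : γ - β ∈ freqBox d Q N) (hβ' : γ - β' ∈ freqBox d Q N) (i : Fin d) :
    ‖ZMod.toAddCircle (β i) - ZMod.toAddCircle (β' i)‖ ≤ ((N : ℝ) ^ (i.val + 1))⁻¹ := by
  have hdR : (1 : ℝ) ≤ d := by exact_mod_cast hd
  have hNR : (1 : ℝ) ≤ (N : ℝ) ^ (i.val + 1) := one_le_pow₀ (by exact_mod_cast hN)
  rw [← map_sub, show β i - β' i = (γ - β') i - (γ - β) i by simp, map_sub]
  refine (norm_sub_le_of_le (mem_freqBox.1 hβ' i) (mem_freqBox.1 hβ i)).trans ?_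
  push_cast
  rw [← two_mul, ← div_eq_mul_inv, div_le_iff₀ (by positivity), inv_mul_eq_div,
    le_div_iff₀ (by positivity)]
  nlinarith

end FreqBox

section LargeSieve

variable {ι : Type*} {d q N : ℕ}

lemma card_Icc_neg_self (N : ℕ) : (#(Icc (-N : ℤ) N) : ℝ) = 2 * N + 1 := by
  rw [Int.card_Icc]; exact_mod_cast (by omega : ((N : ℤ) + 1 - -N).toNat = 2 * N + 1)

lemma injOn_intCast_Icc (hNq : 2 * N + 1 ≤ q) :
    Set.InjOn (fun x : ℤ => (x : ZMod q)) (Icc (-N : ℤ) N) := by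
  intro x hx y hy hxy
  have hdvd := (ZMod.intCast_eq_intCast_iff_dvd_sub x y q).1 hxy
  rw [mem_coe, mem_Icc] at hx hy
  have := Int.eq_zero_of_abs_lt_dvd hdvd (by rw [abs_lt]; omega)
  omega

-- Since `|x| ≤ N`, each value of `energy a` is dominated by an average of another energy over
-- `freqBox d Q N`; summed over `m` these averages combine into one over all frequencies.
theorem DecouplingBound.sum_energy_pow_le [NeZero q] (hd : 1 ≤ d) {D : ℝ}
    (hD : DecouplingBound d q D) (hD0 : 0 ≤ D) (hN : 1 ≤ N) (hNq : 2 * N + 1 ≤ q) {a : ℤ → ℂ}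
    (ha : ∀ x, ‖a x‖ ≤ 1) {I : Finset ι} {β : ι → Freq d (q ^ d)} {K : ℝ}
    (hK : ∀ J ⊆ I, (∀ m ∈ J, ∀ m' ∈ J, ∀ i : Fin d, ‖ZMod.toAddCircle (β m i) -
      ZMod.toAddCircle (β m' i)‖ ≤ ((N : ℝ) ^ (i.val + 1))⁻¹) → (#J : ℝ) ≤ K) :
    ∑ m ∈ I, energy a (Icc (-N : ℤ) N) (β m) ^ critExp d ≤
      K * ((16 * d) ^ d * (N : ℝ) ^ critExp d) * (D * (4 * (2 * N + 1))) ^ critExp d := by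
  set s := Icc (-N : ℤ) N
  set B := freqBox d (q ^ d) N
  have hB : B.Nonempty := freqBox_nonempty
  set w : ℤ → ℂ := fun x => 𝔼 θ ∈ B, ZMod.stdAddChar (phase θ x)
  have hw (x) (hx : x ∈ s) : 1 / 2 ≤ ‖w x‖ := half_le_norm_expect hB fun θ hθ =>
    norm_stdAddChar_phase_sub_one_le hd hN hθ (abs_le.2 (mem_Icc.1 hx))
  have hw0 (x) (hx : x ∈ s) : w x ≠ 0 := norm_pos_iff.1 (one_half_pos.trans_le (hw x hx))
  set f : Freq d (q ^ d) → ℝ := fun β => energy (fun x => a x / w x) s β ^ critExp d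
  have hf : 0 ≤ f := fun β => pow_nonneg (energy_nonneg _ _ β) _
  have hmult (γ) : (#{m ∈ I | γ - β m ∈ B} : ℝ) ≤ K := hK _ (filter_subset _ _) fun m hm m' hm' =>
    norm_sub_le_of_sub_mem_freqBox hd hN (mem_filter.1 hm).2 (mem_filter.1 hm').2
  have hK0 : 0 ≤ K := (Nat.cast_nonneg _).trans (hmult 0)
  have hmean : 𝔼 β, f β ≤ (D * (4 * (2 * N + 1))) ^ critExp d := by
    rw [← card_Icc_neg_self, show (4 : ℝ) = 2 ^ 2 by norm_num]
    refine hD.expect_energy_pow_le hd hD0 (injOn_intCast_Icc hNq) fun x hx => ?_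
    rw [norm_div, div_le_iff₀ (one_half_pos.trans_le (hw x hx))]
    linarith [ha x, hw x hx]
  have hBcard : (Fintype.card (Freq d (q ^ d)) : ℝ) ≤ (16 * d) ^ d * (N : ℝ) ^ critExp d * #B := by
    exact_mod_cast card_freq_le_mul_card_freqBox hd hN
  calc ∑ m ∈ I, energy a s (β m) ^ critExp d
      ≤ ∑ m ∈ I, 𝔼 θ ∈ B, f (β m + θ) := sum_le_sum fun m _ =>
        energy_pow_le_expect_energy_add_pow a hB hw0 (critExp d) (β m)
    _ = (∑ m ∈ I, ∑ θ ∈ B, f (β m + θ)) / #B := by simp only [expect_eq_sum_div_card, sum_div]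
    _ ≤ K * (∑ γ, f γ) / #B := by gcongr; exact sum_sum_add_le_mul_sum hf hmult
    _ = K * (Fintype.card (Freq d (q ^ d)) * 𝔼 β, f β) / #B := by rw [Fintype.card_mul_expect]
    _ ≤ K * ((16 * d) ^ d * (N : ℝ) ^ critExp d * #B *
          (D * (4 * (2 * N + 1))) ^ critExp d) / #B := by
        have hmean0 : 0 ≤ 𝔼 β, f β := expect_nonneg fun β _ => hf β
        gcongr
    _ = _ := by
        have : (#B : ℝ) ≠ 0 := by exact_mod_cast hB.card_ne_zero
        field_simp

end LargeSieve

section Completion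

variable {L : ℕ} [NeZero L]

/-- The exponential sum of the interval `{1, …, N}` at the frequency `t` modulo `L`. -/
def intervalSum (L N : ℕ) [NeZero L] (t : ZMod L) : ℂ :=
  ∑ y ∈ Icc (1 : ℤ) N, ZMod.stdAddChar (t * (y : ZMod L))

lemma sum_stdAddChar_mul_intCast {u : ℤ} (hu : |u| < L) :
    ∑ t : ZMod L, (ZMod.stdAddChar (t * (u : ZMod L)) : ℂ) = if u = 0 then (L : ℂ) else 0 := by
  have hzero : (u : ZMod L) = 0 ↔ u = 0 := by
    rw [ZMod.intCast_zmod_eq_zero_iff_dvd]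
    exact ⟨fun h => Int.eq_zero_of_abs_lt_dvd h hu, by rintro rfl; exact dvd_zero _⟩
  rw [AddChar.sum_mulShift _ (ZMod.isPrimitive_stdAddChar L), ZMod.card]
  simp only [hzero, Nat.cast_ite, Nat.cast_zero]

lemma sum_intervalSum_neg_mul {N : ℕ} {x : ℤ} (hx : ∀ y ∈ Icc (1 : ℤ) N, |x - y| < L) :
    ∑ t, intervalSum L N (-t) * ZMod.stdAddChar (t * (x : ZMod L)) =
      if x ∈ Icc (1 : ℤ) N then (L : ℂ) else 0 := by
  have hterm (t : ZMod L) : intervalSum L N (-t) * ZMod.stdAddChar (t * (x : ZMod L)) =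
      ∑ y ∈ Icc (1 : ℤ) N, ZMod.stdAddChar (t * ((x - y : ℤ) : ZMod L)) := by
    rw [intervalSum, sum_mul]
    refine sum_congr rfl fun y _ => ?_
    rw [← AddChar.map_add_eq_mul]
    push_cast
    ring_nf
  simp only [hterm]
  rw [sum_comm, sum_congr rfl fun y hy => sum_stdAddChar_mul_intCast (hx y hy)]
  simp only [sub_eq_zero, sum_ite_eq]

lemma two_mul_mul_one_sub_le_sin {u : ℝ} (h0 : 0 ≤ u) (h1 : u ≤ 1) :
    2 * u * (1 - u) ≤ sin (π * u) := by
  wlog h : u ≤ 1 / 2 generalizing u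
  · have := this (u := 1 - u) (by linarith) (by linarith) (by linarith)
    rw [show π * (1 - u) = π - π * u by ring, sin_pi_sub] at this
    linarith
  have hsin := mul_le_sin (x := π * u) (by positivity) (by nlinarith [pi_pos])
  rw [← mul_assoc, div_mul_cancel₀ _ pi_ne_zero] at hsin
  nlinarith

lemma four_mul_le_norm_stdAddChar_sub_one (t : ZMod L) :
    4 * ((t.val : ℝ) / L) * (1 - t.val / L) ≤ ‖(ZMod.stdAddChar t : ℂ) - 1‖ := by
  have hL : (0 : ℝ) < L := by exact_mod_cast NeZero.pos L
  have hexp : (ZMod.stdAddChar t : ℂ) = Complex.exp (Complex.I * (2 * (π * (t.val / L)) : ℝ)) := by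
    conv_lhs => rw [← ZMod.natCast_zmod_val t, ← Int.cast_natCast, ZMod.stdAddChar_coe]
    push_cast
    ring_nf
  rw [hexp, Complex.norm_exp_I_mul_ofReal_sub_one, mul_div_cancel_left₀ _ two_ne_zero]
  refine le_trans ?_ (le_abs_self _)
  have hsin := two_mul_mul_one_sub_le_sin (u := t.val / L) (by positivity)
    ((div_le_one hL).2 (by exact_mod_cast (ZMod.val_lt t).le))
  linarith

lemma intervalSum_eq_mul_geom_sum (N : ℕ) (t : ZMod L) :
    intervalSum L N t = ZMod.stdAddChar t * ∑ i ∈ range N, (ZMod.stdAddChar t : ℂ) ^ i := by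
  rw [mul_sum, intervalSum]
  refine (sum_nbij' (fun i : ℕ => (i : ℤ) + 1) (fun y => (y - 1).toNat) ?_ ?_ ?_ ?_ ?_).symm
  · intro i hi
    rw [mem_range] at hi
    rw [mem_Icc]
    omega
  · intro y hy
    rw [mem_Icc] at hy
    rw [mem_range]
    omega
  · intro i _
    omega
  · intro y hy
    rw [mem_Icc] at hy
    omega
  · intro i _
    rw [← pow_succ', ← AddChar.map_nsmul_eq_pow, nsmul_eq_mul]
    push_cast
    rw [mul_comm]

lemma norm_intervalSum_mul_norm_sub_one_le (N : ℕ) (t : ZMod L) :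
    ‖intervalSum L N t‖ * ‖(ZMod.stdAddChar t : ℂ) - 1‖ ≤ 2 := by
  rw [intervalSum_eq_mul_geom_sum, norm_mul, AddChar.norm_apply, one_mul, ← norm_mul, geom_sum_mul]
  refine (norm_sub_le _ _).trans_eq ?_
  rw [norm_pow, AddChar.norm_apply, one_pow, norm_one]
  norm_num

lemma norm_intervalSum_le {N : ℕ} {t : ZMod L} (ht : t ≠ 0) :
    ‖intervalSum L N t‖ ≤ L / 2 * ((t.val : ℝ)⁻¹ + (L - t.val : ℝ)⁻¹) := by
  have hL : (0 : ℝ) < L := by exact_mod_cast NeZero.pos L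
  have hv : (0 : ℝ) < t.val := by
    exact_mod_cast Nat.pos_of_ne_zero (mt (ZMod.val_eq_zero t).1 ht)
  have hvL : (0 : ℝ) < L - t.val := sub_pos.2 (by exact_mod_cast ZMod.val_lt t)
  have hfrac : 1 - (t.val : ℝ) / L = (L - t.val) / L := by field_simp
  have hbound : ‖intervalSum L N t‖ * (4 * (t.val / L) * ((L - t.val) / L)) ≤ 2 := by
    rw [← hfrac]
    exact (mul_le_mul_of_nonneg_left (four_mul_le_norm_stdAddChar_sub_one t) (norm_nonneg _)).trans
      (norm_intervalSum_mul_norm_sub_one_le N t)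
  refine ((le_div_iff₀ (by positivity)).2 hbound).trans_eq ?_
  field_simp
  ring

lemma norm_intervalSum_le_natCast (N : ℕ) (t : ZMod L) : ‖intervalSum L N t‖ ≤ N := by
  refine (norm_sum_le _ _).trans_eq ?_
  simp [AddChar.norm_apply]

lemma sum_val_eq_sum_range {M : Type*} [AddCommMonoid M] (f : ℕ → M) :
    ∑ t : ZMod L, f t.val = ∑ v ∈ range L, f v := by
  obtain ⟨l, rfl⟩ := Nat.exists_eq_succ_of_ne_zero (NeZero.ne L)
  exact Fin.sum_univ_eq_sum_range f (l + 1)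

lemma sum_norm_intervalSum_le {N : ℕ} (hN : N ≤ L) :
    ∑ t, ‖intervalSum L N t‖ ≤ L * (2 + log L) := by
  have hharm : ∑ i ∈ range L, ((i + 1 : ℕ) : ℝ)⁻¹ ≤ 1 + log L := by
    simpa [harmonic] using harmonic_le_one_add_log L
  have hleft : ∑ t : ZMod L, (t.val : ℝ)⁻¹ ≤ 1 + log L := by
    refine le_trans ?_ hharm
    rw [sum_val_eq_sum_range fun v => (v : ℝ)⁻¹]
    refine (sum_le_sum_of_subset_of_nonneg (range_subset_range.2 L.le_succ)
      fun _ _ _ => ?_).trans ?_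
    · positivity
    · rw [sum_range_succ', Nat.cast_zero, inv_zero, add_zero]
  have hright : ∑ t : ZMod L, (L - t.val : ℝ)⁻¹ ≤ 1 + log L := by
    rw [sum_val_eq_sum_range fun v => (L - v : ℝ)⁻¹, ← sum_range_reflect]
    refine (sum_le_sum fun i hi => ?_).trans hharm
    rw [mem_range] at hi
    rw [Nat.sub_sub, Nat.cast_sub (by omega)]
    push_cast
    rw [sub_sub_cancel, add_comm]
  have hpoint (t : ZMod L) : ‖intervalSum L N t‖ ≤
      L / 2 * ((t.val : ℝ)⁻¹ + (L - t.val : ℝ)⁻¹) + if t = 0 then (L : ℝ) else 0 := by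
    have hvL : (0 : ℝ) ≤ L - t.val := sub_nonneg.2 (by exact_mod_cast (ZMod.val_lt t).le)
    split_ifs with ht
    · refine le_add_of_nonneg_of_le (by positivity) ?_
      exact (norm_intervalSum_le_natCast N t).trans (by exact_mod_cast hN)
    · rw [add_zero]
      exact norm_intervalSum_le ht
  calc ∑ t, ‖intervalSum L N t‖
      ≤ ∑ t : ZMod L, (L / 2 * ((t.val : ℝ)⁻¹ + (L - t.val : ℝ)⁻¹) +
          if t = 0 then (L : ℝ) else 0) := sum_le_sum fun t _ => hpoint t
    _ = L / 2 * (∑ t : ZMod L, (t.val : ℝ)⁻¹ + ∑ t : ZMod L, (L - t.val : ℝ)⁻¹) + L := by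
        rw [sum_add_distrib, ← mul_sum, sum_add_distrib, sum_ite_eq' univ, if_pos (mem_univ _)]
    _ ≤ L / 2 * ((1 + log L) + (1 + log L)) + L := by gcongr
    _ = _ := by ring

lemma natCast_mul_sum_eq_sum_intervalSum {N m : ℕ} (hm : m ∈ Icc 1 N) (hL : 3 * N < L)
    (f : ℤ → ℂ) : L * ∑ y ∈ Icc (1 : ℤ) N, f y = ∑ t, intervalSum L N (-t) *
      ∑ x ∈ Icc (-N : ℤ) N, ZMod.stdAddChar (t * ((x + m : ℤ) : ZMod L)) * f (x + m) := by
  rw [mem_Icc] at hm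
  have hshift : ∑ y ∈ Icc (m - N : ℤ) (m + N), (if y ∈ Icc (1 : ℤ) N then (L : ℂ) else 0) * f y =
      L * ∑ y ∈ Icc (1 : ℤ) N, f y := by
    simp only [ite_mul, zero_mul]
    rw [← sum_filter, filter_mem_eq_inter,
      inter_eq_right.2 (Icc_subset_Icc (by omega) (by omega)), mul_sum]
  rw [← hshift]
  simp only [mul_sum, ← mul_assoc]
  rw [sum_comm]
  refine (sum_nbij' (· + (m : ℤ)) (· - (m : ℤ)) ?_ ?_ ?_ ?_ fun x hx => ?_).symm
  · simp only [mem_Icc]; omega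
  · simp only [mem_Icc]; omega
  · simp
  · simp
  · rw [← sum_mul, sum_intervalSum_neg_mul]
    simp only [mem_Icc, abs_lt] at hx ⊢
    omega

-- Completing the sum over `{1, …, N}` lets `f` be shifted by any `m ≤ N`, at the cost of a
-- logarithm and a linear phase.
theorem norm_sum_le_of_expect_shift {N : ℕ} (hN : 1 ≤ N) (hL : 3 * N < L) {f : ℤ → ℂ} {X : ℝ}
    (hX : ∀ t : ZMod L, 𝔼 m ∈ Icc 1 N, ‖∑ x ∈ Icc (-N : ℤ) N,
      ZMod.stdAddChar (t * ((x + m : ℤ) : ZMod L)) * f (x + m)‖ ≤ X) :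
    ‖∑ y ∈ Icc (1 : ℤ) N, f y‖ ≤ (2 + log L) * X := by
  have hLpos : (0 : ℝ) < L := by exact_mod_cast NeZero.pos L
  have hX0 : 0 ≤ X := (expect_nonneg fun _ _ => norm_nonneg _).trans (hX 0)
  have hnegsum : ∑ t, ‖intervalSum L N (-t)‖ = ∑ t, ‖intervalSum L N t‖ :=
    Equiv.sum_comp (Equiv.neg (ZMod L)) fun t => ‖intervalSum L N t‖
  set T : ZMod L → ℕ → ℂ := fun t m =>
    ∑ x ∈ Icc (-N : ℤ) N, ZMod.stdAddChar (t * ((x + m : ℤ) : ZMod L)) * f (x + m)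
  refine le_of_mul_le_mul_left ?_ hLpos
  calc L * ‖∑ y ∈ Icc (1 : ℤ) N, f y‖
      = 𝔼 _m ∈ Icc 1 N, ‖L * ∑ y ∈ Icc (1 : ℤ) N, f y‖ := by
        rw [expect_const (nonempty_Icc.2 hN), norm_mul, Complex.norm_natCast]
    _ ≤ 𝔼 m ∈ Icc 1 N, ∑ t, ‖intervalSum L N (-t)‖ * ‖T t m‖ := by
        refine expect_le_expect fun _ hm => ?_
        rw [natCast_mul_sum_eq_sum_intervalSum hm hL]
        exact (norm_sum_le _ _).trans_eq (sum_congr rfl fun t _ => norm_mul _ _)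
    _ = ∑ t, ‖intervalSum L N (-t)‖ * 𝔼 m ∈ Icc 1 N, ‖T t m‖ := by
        rw [expect_sum_comm]; simp only [mul_expect]
    _ ≤ ∑ t, ‖intervalSum L N (-t)‖ * X := by gcongr with t; exact hX t
    _ = (∑ t, ‖intervalSum L N t‖) * X := by rw [← sum_mul, hnegsum]
    _ ≤ L * (2 + log L) * X := by gcongr; exact sum_norm_intervalSum_le (by omega)
    _ = L * ((2 + log L) * X) := mul_assoc _ _ _

lemma norm_sum_pow_le_of_expect_shift_pow {N : ℕ} (hN : 1 ≤ N) (hL : 3 * N < L) {f : ℤ → ℂ}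
    {r : ℕ} (hr : r ≠ 0) {Y : ℝ}
    (hY : ∀ t : ZMod L, 𝔼 m ∈ Icc 1 N, ‖∑ x ∈ Icc (-N : ℤ) N,
      ZMod.stdAddChar (t * ((x + m : ℤ) : ZMod L)) * f (x + m)‖ ^ r ≤ Y) :
    ‖∑ y ∈ Icc (1 : ℤ) N, f y‖ ^ r ≤ (2 + log L) ^ r * Y := by
  have hY0 : 0 ≤ Y := (expect_nonneg fun _ _ => by positivity).trans (hY 0)
  have hroot : (Y ^ (r : ℝ)⁻¹) ^ r = Y := rpow_inv_natCast_pow hY0 hr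
  rw [← hroot, ← mul_pow]
  refine pow_le_pow_left₀ (norm_nonneg _) (norm_sum_le_of_expect_shift hN hL fun t => ?_) r
  refine le_of_pow_le_pow_left₀ hr (by positivity) ?_
  rw [hroot]
  exact (pow_expect_le_expect_pow (nonempty_Icc.2 hN) (fun _ _ => norm_nonneg _) r).trans (hY t)

end Completion

section ShiftedSums

/-- The bracket in Weyl's inequality for the denominator `q`, the length `N` and the exponent
`j`. -/
def weylRatio (q N j : ℕ) : ℝ := (q : ℝ)⁻¹ + (N : ℝ)⁻¹ + q * ((N : ℝ) ^ j)⁻¹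

/-- The coefficients of `x, …, x ^ d` in the translate by `m` of the polynomial with coefficients
`A 1, …, A (d + 1)`. Its leading coefficient `A (d + 1)` does not depend on `m`. -/
def shiftedFreq (d : ℕ) {Q : ℕ} (A : ℕ → ZMod Q) (m : ℤ) : Freq d Q :=
  fun i => taylorCoeff (d + 1) A m (i.val + 1)

lemma weylRatio_nonneg (q N j : ℕ) : 0 ≤ weylRatio q N j := by
  unfold weylRatio; positivity

lemma mul_weylRatio {N : ℕ} (hN : 1 ≤ N) (q j : ℕ) :
    N * weylRatio q N j = N / q + 1 + q * (N / (N : ℝ) ^ j) := by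
  have : (N : ℝ) ≠ 0 := by positivity
  rw [weylRatio]
  field_simp

lemma mul_add_one_le_mul_weylRatio {N q j : ℕ} (hN : 1 ≤ N) (hq : 0 < q) (hj : 2 ≤ j) {K c : ℝ}
    (hK : 0 ≤ K) (hc : 0 ≤ c) : (4 * q * (K * (N / (N : ℝ) ^ j)) + 1) * (2 * c * N / q + 1) ≤
      (8 * c * K + 4 * K + 2 * c + 1) * (N * weylRatio q N j) := by
  have _hq0 : (0 : ℝ) < q := by exact_mod_cast hq
  have hNN : N * (N / (N : ℝ) ^ j) ≤ 1 := by
    rw [mul_div_assoc', div_le_one (by positivity), ← sq]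
    exact pow_le_pow_right₀ (by exact_mod_cast hN) hj
  have hu : (0 : ℝ) ≤ N / q := by positivity
  have hv : 0 ≤ q * (N / (N : ℝ) ^ j) := by positivity
  rw [mul_weylRatio hN]
  calc _ = 8 * c * K * (N * (N / (N : ℝ) ^ j)) + 4 * K * (q * (N / (N : ℝ) ^ j)) +
        2 * c * (N / q) + 1 := by field_simp; ring
    _ ≤ 8 * c * K * (N / q + 1 + q * (N / (N : ℝ) ^ j)) +
        4 * K * (N / q + 1 + q * (N / (N : ℝ) ^ j)) +
        2 * c * (N / q + 1 + q * (N / (N : ℝ) ^ j)) + (N / q + 1 + q * (N / (N : ℝ) ^ j)) := by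
        gcongr <;> linarith
    _ = _ := by ring

lemma exists_card_le_of_shiftedFreq (d : ℕ) : ∃ C : ℝ, 0 ≤ C ∧ ∀ {Q N j q : ℕ} [NeZero Q]
    {A : ℕ → ZMod Q} {x : ℝ} {a : ℤ}, 1 ≤ N → N ^ (d + 1) ≤ Q → 2 ≤ j → j ≤ d + 1 → 0 < q →
    Int.gcd a q = 1 → |x - a / q| ≤ (q : ℝ)⁻¹ ^ 2 →
    ‖(x : UnitAddCircle) - ZMod.toAddCircle (A j)‖ ≤ (Q : ℝ)⁻¹ → ∀ J ⊆ Icc 1 N,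
      (∀ m ∈ J, ∀ m' ∈ J, ∀ i : Fin d, ‖ZMod.toAddCircle (shiftedFreq d A m i) -
        ZMod.toAddCircle (shiftedFreq d A m' i)‖ ≤ ((N : ℝ) ^ (i.val + 1))⁻¹) →
      (#J : ℝ) ≤ C * (N * weylRatio q N j) := by
  obtain ⟨c, hc, κ, hκ, hcoeff⟩ :=
    exists_norm_smul_le_of_taylorCoeff UnitAddCircle (Nat.lt_succ_self d)
  refine ⟨8 * c * (κ + c) + 4 * (κ + c) + 2 * c + 1, by positivity, ?_⟩
  intro Q N j q _ A x a hN hNQ hj hjd hq hgcd hx hxA J hJ hclose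
  have hmem (m) (hm : m ∈ J) : |(m : ℤ)| ≤ N := by
    rw [Nat.abs_cast]; exact_mod_cast (mem_Icc.1 (hJ hm)).2
  have _hN0 : (0 : ℝ) < N := by exact_mod_cast hN
  have hQN : (Q : ℝ)⁻¹ ≤ ((N : ℝ) ^ j)⁻¹ := by
    gcongr
    exact_mod_cast (Nat.pow_le_pow_right hN hjd).trans hNQ
  refine (card_le_of_norm_smul_sub_le hq hgcd hx (by positivity) hc
    (fun m hm => (mem_Icc.1 (hJ hm)).2) fun m hm m' hm' => ?_).trans
    (mul_add_one_le_mul_weylRatio hN hq hj (K := κ + c) (by positivity) (Nat.cast_nonneg c))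
  have hA : ‖(c * (m - m') : ℤ) • ZMod.toAddCircle (A j)‖ ≤ κ * (N / (N : ℝ) ^ j) := by
    refine hcoeff (a := ZMod.toAddCircle ∘ A) hN (hmem m hm) (hmem m' hm') ?_ j (by omega) hjd
    intro i hi hid
    have h := hclose m hm m' hm' ⟨i - 1, by omega⟩
    simpa only [shiftedFreq, map_taylorCoeff, Nat.sub_add_cancel hi] using h
  have hdiff : ‖(c * (m - m') : ℤ) • ((x : UnitAddCircle) - ZMod.toAddCircle (A j))‖ ≤
      c * (N / (N : ℝ) ^ j) := by
    have hmm : |((m - m' : ℤ) : ℝ)| ≤ N := by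
      have := mem_Icc.1 (hJ hm)
      have := mem_Icc.1 (hJ hm')
      exact_mod_cast (abs_le.2 (by omega) : |(m - m' : ℤ)| ≤ N)
    refine (norm_zsmul_le_abs_mul _ _).trans ?_
    rw [Int.cast_mul, Int.cast_natCast, abs_mul, Nat.abs_cast, mul_assoc]
    gcongr
    exact mul_le_mul hmm (hxA.trans hQN) (norm_nonneg _) (by positivity)
  rw [← sub_add_cancel (x : UnitAddCircle) (ZMod.toAddCircle (A j)), smul_add, add_comm, add_mul]
  exact norm_add_le_of_le hA hdiff

lemma norm_sum_stdAddChar_polyValue_add {d Q : ℕ} [NeZero Q] (A : ℕ → ZMod Q) (m : ℤ)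
    (s : Finset ℤ) : ‖∑ x ∈ s, (ZMod.stdAddChar (polyValue (d + 1) A (x + m)) : ℂ)‖ =
      ‖expSum (fun x => ZMod.stdAddChar (x ^ (d + 1) • A (d + 1))) s (shiftedFreq d A m)‖ := by
  have hsplit (x : ℤ) : polyValue (d + 1) A (x + m) = taylorCoeff (d + 1) A m 0 +
      (x ^ (d + 1) • A (d + 1) + phase (shiftedFreq d A m) x) := by
    rw [polyValue_add, sum_range_succ, sum_range_succ', taylorCoeff_self (Nat.le_add_left 1 d),
      phase, ← Fin.sum_univ_eq_sum_range fun i => x ^ (i + 1) • taylorCoeff (d + 1) A m (i + 1)]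
    simp only [shiftedFreq, zsmul_eq_mul, Int.cast_pow, pow_zero, Int.cast_one, mul_comm]
    ring
  simp only [hsplit, AddChar.map_add_eq_mul, ← mul_sum, norm_mul, AddChar.norm_apply, one_mul,
    expSum]

lemma stdAddChar_mul_mul_stdAddChar_polyValue {k Q : ℕ} [NeZero Q] (hk : 1 ≤ k) (A : ℕ → ZMod Q)
    (t : ZMod Q) (x : ℤ) :
    (ZMod.stdAddChar (t * (x : ZMod Q)) * ZMod.stdAddChar (polyValue k A x) : ℂ) =
      ZMod.stdAddChar (polyValue k (A + Pi.single 1 t) x) := by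
  rw [polyValue_add_single hk, ← AddChar.map_add_eq_mul, zsmul_eq_mul, mul_comm, add_comm]

theorem exists_norm_sum_stdAddChar_pow_le {d : ℕ} (hd : 1 ≤ d) : ∃ C : ℝ, 0 ≤ C ∧
    ∀ {P N j q : ℕ} [NeZero P] {D : ℝ} {A : ℕ → ZMod (P ^ d)} {x : ℝ} {a : ℤ},
      0 ≤ D → DecouplingBound d P D → 1 ≤ N → N ^ (d + 1) ≤ P ^ d → 3 * N < P →
      2 ≤ j → j ≤ d + 1 → 0 < q → Int.gcd a q = 1 → |x - a / q| ≤ (q : ℝ)⁻¹ ^ 2 →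
      ‖(x : UnitAddCircle) - ZMod.toAddCircle (A j)‖ ≤ ((P ^ d : ℕ) : ℝ)⁻¹ →
      ‖∑ y ∈ Icc (1 : ℤ) N, (ZMod.stdAddChar (polyValue (d + 1) A y) : ℂ)‖ ^ (2 * critExp d) ≤
        (2 + log (P ^ d : ℕ)) ^ (2 * critExp d) *
          (C * D ^ critExp d * N ^ (2 * critExp d) * weylRatio q N j) := by
  obtain ⟨C, hC, hcard⟩ := exists_card_le_of_shiftedFreq d
  refine ⟨C * (16 * d) ^ d * 12 ^ critExp d, by positivity, ?_⟩
  intro P N j q _ D A x a hD0 hD hN hNP h3N hj hjd hq hgcd hx hxA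
  have hN1 : (1 : ℝ) ≤ N := by exact_mod_cast hN
  have h12 : 4 * (2 * N + 1) ≤ 12 * (N : ℝ) := by linarith
  have hR := weylRatio_nonneg q N j
  refine norm_sum_pow_le_of_expect_shift_pow hN (h3N.trans_le (Nat.le_self_pow (by omega) P))
    (mul_ne_zero two_ne_zero (critExp_ne_zero hd)) fun t => ?_
  set A' := A + Pi.single 1 t
  have hA' : A' j = A j := by simp [A', Pi.single_eq_of_ne (show j ≠ 1 by omega)]
  simp only [stdAddChar_mul_mul_stdAddChar_polyValue (Nat.le_add_left 1 d),
    norm_sum_stdAddChar_polyValue_add]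
  have hsieve := hD.sum_energy_pow_le hd hD0 hN (by omega) (I := Icc 1 N)
    (a := fun x => ZMod.stdAddChar (x ^ (d + 1) • A' (d + 1)))
    (fun x => (AddChar.norm_apply _ _).le) (β := fun m : ℕ => shiftedFreq d A' m)
    (hcard hN hNP hj hjd hq hgcd hx (by rwa [hA']))
  simp only [energy, ← pow_mul] at hsieve
  rw [expect_eq_sum_div_card, Nat.card_Icc, add_tsub_cancel_right, div_le_iff₀ (by positivity)]
  refine hsieve.trans ?_
  calc _ ≤ C * (N * weylRatio q N j) * ((16 * d) ^ d * (N : ℝ) ^ critExp d) *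
        (D * (12 * N)) ^ critExp d := by gcongr
    _ = _ := by rw [two_mul, pow_add, mul_pow D, mul_pow 12]; ring

end ShiftedSums

section Discretization

lemma norm_toCircle_sub_toCircle_le (u v : UnitAddCircle) :
    ‖(AddCircle.toCircle u - AddCircle.toCircle v : ℂ)‖ ≤ 2 * π * ‖u - v‖ := by
  have hfactor : (AddCircle.toCircle u - AddCircle.toCircle v : ℂ) =
      AddCircle.toCircle v * (AddCircle.toCircle (u - v) - 1) := by
    rw [mul_sub, ← Circle.coe_mul, ← AddCircle.toCircle_add, add_sub_cancel, mul_one]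
  rw [hfactor, norm_mul, Circle.norm_coe, one_mul]
  exact norm_toCircle_sub_one_le _

variable {k N Q : ℕ} [NeZero Q]

lemma norm_sub_toAddCircle_floor_le (x : ℝ) :
    ‖(x : UnitAddCircle) - ZMod.toAddCircle ((⌊x * Q⌋ : ℤ) : ZMod Q)‖ ≤ (Q : ℝ)⁻¹ := by
  have hQ : (0 : ℝ) < Q := by exact_mod_cast NeZero.pos Q
  rw [ZMod.toAddCircle_intCast, ← AddCircle.coe_sub]
  refine (norm_coe_unitAddCircle_le _).trans ?_
  rw [show x - ⌊x * Q⌋ / Q = Int.fract (x * Q) * (Q : ℝ)⁻¹ by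
    rw [← Int.self_sub_floor]; field_simp, abs_of_nonneg (by positivity)]
  exact mul_le_of_le_one_left (by positivity) (Int.fract_lt_one _).le

lemma norm_polyValue_le {G : Type*} [SeminormedAddCommGroup G] (hN : 1 ≤ N) {a : ℕ → G} {δ : ℝ}
    (ha : ∀ h, ‖a h‖ ≤ δ) {x : ℤ} (hx : |x| ≤ N) : ‖polyValue k a x‖ ≤ k * (N ^ k * δ) := by
  have hN1 : (1 : ℝ) ≤ N := by exact_mod_cast hN
  have hterm : ∀ h ∈ Icc 1 k, ‖x ^ h • a h‖ ≤ N ^ k * δ := fun h hh => by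
    refine (norm_zsmul_le_abs_mul _ _).trans ?_
    rw [Int.cast_pow, abs_pow]
    have hxR : |(x : ℝ)| ≤ N := by exact_mod_cast hx
    gcongr
    · exact (pow_le_pow_left₀ (abs_nonneg _) hxR h).trans (pow_le_pow_right₀ hN1 (mem_Icc.1 hh).2)
    · exact ha h
  exact (norm_sum_le_of_le _ hterm).trans_eq (by simp)

lemma exists_norm_sum_toCircle_sub_sum_stdAddChar_le (hN : 1 ≤ N) (hNQ : N ^ (k + 1) ≤ Q)
    (α : ℕ → ℝ) : ∃ A : ℕ → ZMod Q,
      (∀ h, ‖(α h : UnitAddCircle) - ZMod.toAddCircle (A h)‖ ≤ (Q : ℝ)⁻¹) ∧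
      ‖∑ y ∈ Icc (1 : ℤ) N,
          (AddCircle.toCircle (polyValue k (fun h => (α h : UnitAddCircle)) y) : ℂ) -
        ∑ y ∈ Icc (1 : ℤ) N, ZMod.stdAddChar (polyValue k A y)‖ ≤ 2 * π * k := by
  obtain ⟨A, hA⟩ : ∃ A : ℕ → ZMod Q,
      ∀ h, ‖(α h : UnitAddCircle) - ZMod.toAddCircle (A h)‖ ≤ (Q : ℝ)⁻¹ :=
    ⟨_, fun h => norm_sub_toAddCircle_floor_le (α h)⟩
  refine ⟨A, hA, ?_⟩
  have hQ : (0 : ℝ) < Q := by exact_mod_cast NeZero.pos Q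
  have hterm : ∀ y ∈ Icc (1 : ℤ) N, ‖(AddCircle.toCircle
      (polyValue k (fun h => (α h : UnitAddCircle)) y) : ℂ) - ZMod.stdAddChar (polyValue k A y)‖ ≤
      2 * π * (k * (N ^ k * (Q : ℝ)⁻¹)) := fun y hy => by
    rw [ZMod.stdAddChar_apply]
    refine (norm_toCircle_sub_toCircle_le _ _).trans ?_
    rw [map_polyValue, ← polyValue_sub]
    have hyN : |y| ≤ N := by grind
    gcongr
    exact norm_polyValue_le hN hA hyN
  have hNQR : (N : ℝ) * N ^ k * (Q : ℝ)⁻¹ ≤ 1 := by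
    rw [← div_eq_mul_inv, div_le_one hQ, ← pow_succ']
    exact_mod_cast hNQ
  rw [← sum_sub_distrib]
  calc _ ≤ (N : ℝ) * (2 * π * (k * (N ^ k * (Q : ℝ)⁻¹))) :=
        (norm_sum_le_of_le _ hterm).trans_eq (by simp)
    _ = 2 * π * k * (N * N ^ k * (Q : ℝ)⁻¹) := by ring
    _ ≤ 2 * π * k := mul_le_of_le_one_right (by positivity) hNQR

end Discretization

section WeylSum

variable {d N j q : ℕ}

lemma inv_two_mul_critExp_le_one (hd : 1 ≤ d) : ((2 * critExp d : ℕ) : ℝ)⁻¹ ≤ 1 :=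
  inv_le_one_of_one_le₀ (by exact_mod_cast (by have := critExp_ne_zero hd; omega))

lemma one_le_mul_weylRatio_rpow (hN : 1 ≤ N) {s : ℝ} (hs0 : 0 ≤ s) (hs1 : s ≤ 1) :
    1 ≤ N * weylRatio q N j ^ s := by
  have hN1 : (1 : ℝ) ≤ N := by exact_mod_cast hN
  have hinv : (N : ℝ)⁻¹ ≤ weylRatio q N j := by
    rw [weylRatio, add_right_comm]
    exact le_add_of_nonneg_left (by positivity)
  calc (1 : ℝ) = N * (N : ℝ)⁻¹ ^ (1 : ℝ) := by rw [rpow_one]; field_simp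
    _ ≤ N * (N : ℝ)⁻¹ ^ s := mul_le_mul_of_nonneg_left
        (rpow_le_rpow_of_exponent_ge (by positivity) (inv_le_one_of_one_le₀ hN1) hs1)
        (by positivity)
    _ ≤ N * weylRatio q N j ^ s := by gcongr

lemma two_add_log_pow_le {P : ℕ} (hP : 1 ≤ P) {η : ℝ} (hη : 0 < η) (d : ℕ) :
    2 + log (P ^ d : ℕ) ≤ (2 + d / η) * (P : ℝ) ^ η := by
  have hP1 : (1 : ℝ) ≤ P := by exact_mod_cast hP
  have hlog := log_le_rpow_div (x := (P : ℝ)) (by positivity) hη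
  have hone := one_le_rpow hP1 hη.le
  rw [Nat.cast_pow, log_pow]
  calc 2 + d * log P ≤ 2 * (P : ℝ) ^ η + d * ((P : ℝ) ^ η / η) := by gcongr; linarith
    _ = _ := by ring

lemma exists_decouplingBound_of_mem_powers {p : ℕ} [Fact p.Prime] (hd : 1 ≤ d) (hdp : d < p)
    {η : ℝ} (hη : 0 < η) :
    ∃ C : ℝ, 0 < C ∧ ∀ (P : ℕ) [NeZero P], P ∈ Submonoid.powers p →
      DecouplingBound d P (C * (P : ℝ) ^ η) := by
  obtain ⟨C, hC, hdec⟩ := exists_decouplingBound hd hdp hη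
  refine ⟨C, hC, ?_⟩
  rintro _ _ ⟨n, rfl⟩
  rw [Nat.cast_pow, ← rpow_natCast, ← rpow_mul cast_prime_pos.le, mul_comm (n : ℝ)]
  exact hdec n

lemma exists_norm_sum_stdAddChar_le (hd : 1 ≤ d) (C₀ : ℝ) {η : ℝ} (hη : 0 < η) :
    ∃ C : ℝ, 0 ≤ C ∧ ∀ {P N j q : ℕ} [NeZero P] {A : ℕ → ZMod (P ^ d)} {x : ℝ} {a : ℤ},
      DecouplingBound d P (C₀ * (P : ℝ) ^ η) → 1 ≤ N → N ^ (d + 1) ≤ P ^ d → 3 * N < P →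
      2 ≤ j → j ≤ d + 1 → 0 < q → Int.gcd a q = 1 → |x - a / q| ≤ (q : ℝ)⁻¹ ^ 2 →
      ‖(x : UnitAddCircle) - ZMod.toAddCircle (A j)‖ ≤ ((P ^ d : ℕ) : ℝ)⁻¹ →
      ‖∑ y ∈ Icc (1 : ℤ) N, (ZMod.stdAddChar (polyValue (d + 1) A y) : ℂ)‖ ≤
        C * (P : ℝ) ^ (2 * η) * (N * weylRatio q N j ^ ((2 * critExp d : ℕ) : ℝ)⁻¹) := by
  obtain ⟨C₁, _, hbound⟩ := exists_norm_sum_stdAddChar_pow_le hd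
  refine ⟨(2 + d / η) * (max 1 C₁ * max 1 C₀), by positivity, ?_⟩
  intro P N j q _ A x a hdec hN hNP h3N hj hjd hq hgcd hx hxA
  have hr : 2 * critExp d ≠ 0 := mul_ne_zero two_ne_zero (critExp_ne_zero hd)
  have hR := weylRatio_nonneg q N j
  have hP : 1 ≤ P := NeZero.one_le
  set V : ℝ := (P : ℝ) ^ η
  set ρ := weylRatio q N j ^ ((2 * critExp d : ℕ) : ℝ)⁻¹
  have hV : 1 ≤ V := one_le_rpow (by exact_mod_cast hP) hη.le
  have hD : DecouplingBound d P (max 1 C₀ * V) :=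
    hdec.mono (by gcongr; exact le_max_right _ _)
  have hD1 : 1 ≤ max 1 C₀ * V := one_le_mul_of_one_le_of_one_le (le_max_left _ _) hV
  have hVV : (P : ℝ) ^ (2 * η) = V * V := by rw [two_mul, rpow_add (by positivity)]
  have hC₁ : C₁ ≤ max 1 C₁ ^ (2 * critExp d) :=
    (le_max_right 1 C₁).trans (le_self_pow₀ (le_max_left _ _) hr)
  have _hlog0 : 0 ≤ 2 + log (P ^ d : ℕ) := by linarith [log_natCast_nonneg (P ^ d)]
  have hlog := two_add_log_pow_le hP hη d
  refine le_of_pow_le_pow_left₀ hr (by positivity)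
    ((hbound (by positivity) hD hN hNP h3N hj hjd hq hgcd hx hxA).trans ?_)
  calc _ ≤ ((2 + d / η) * V) ^ (2 * critExp d) * (max 1 C₁ ^ (2 * critExp d) *
        (max 1 C₀ * V) ^ (2 * critExp d) * N ^ (2 * critExp d) * ρ ^ (2 * critExp d)) := by
        rw [rpow_inv_natCast_pow hR hr]
        gcongr
        omega
    _ = _ := by rw [hVV]; simp only [← mul_pow]; ring

lemma exists_mem_powers_between {p : ℕ} (hp : 1 < p) {M : ℕ} (hM : 1 < M) :
    ∃ P ∈ Submonoid.powers p, M ≤ P ∧ P ≤ p * M := by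
  refine ⟨p ^ Nat.clog p M, ⟨_, rfl⟩, Nat.le_pow_clog hp M, ?_⟩
  rw [← Nat.succ_pred_eq_of_pos (Nat.clog_pos hp hM), pow_succ']
  exact Nat.mul_le_mul_left p (Nat.pow_pred_clog_lt_self hp hM).le

lemma rpow_le_of_le_mul_pow {p P N m : ℕ} {s : ℝ} (hs : 0 ≤ s) (hP : P ≤ p * (3 * N) ^ m) :
    (P : ℝ) ^ s ≤ ((p * 3 ^ m : ℕ) : ℝ) ^ s * (N : ℝ) ^ (m * s) := by
  have hP' : (P : ℝ) ≤ (p * 3 ^ m : ℕ) * (N : ℝ) ^ m := by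
    exact_mod_cast hP.trans_eq (by ring)
  calc (P : ℝ) ^ s ≤ ((p * 3 ^ m : ℕ) * (N : ℝ) ^ m) ^ s := rpow_le_rpow (by positivity) hP' hs
    _ = _ := by
      rw [mul_rpow (by positivity) (by positivity), ← rpow_natCast (N : ℝ) m,
        ← rpow_mul (by positivity)]

theorem exists_norm_sum_toCircle_polyValue_le (hd : 1 ≤ d) {ε : ℝ} (hε : 0 < ε) :
    ∃ C : ℝ, 0 < C ∧ ∀ {N j q : ℕ} {α : ℕ → ℝ} {a : ℤ}, 1 ≤ N → 2 ≤ j → j ≤ d + 1 → 0 < q →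
      Int.gcd a q = 1 → |α j - a / q| ≤ (q : ℝ)⁻¹ ^ 2 →
      ‖∑ y ∈ Icc (1 : ℤ) N, (AddCircle.toCircle
          (polyValue (d + 1) (fun h => (α h : UnitAddCircle)) y) : ℂ)‖ ≤
        C * (N : ℝ) ^ (1 + ε) * weylRatio q N j ^ ((2 * critExp d : ℕ) : ℝ)⁻¹ := by
  obtain ⟨p, hdp, hp⟩ := Nat.exists_infinite_primes (d + 1)
  have : Fact p.Prime := ⟨hp⟩
  obtain ⟨η, hη, hηε⟩ : ∃ η : ℝ, 0 < η ∧ (d + 2 : ℕ) * (2 * η) = ε :=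
    ⟨ε / (2 * (d + 2 : ℕ)), by positivity, by field_simp⟩
  obtain ⟨C₀, _, hdec⟩ := exists_decouplingBound_of_mem_powers hd hdp hη
  obtain ⟨C, hC, hbound⟩ := exists_norm_sum_stdAddChar_le hd C₀ hη
  set F : ℝ := ((p * 3 ^ (d + 2) : ℕ) : ℝ) ^ (2 * η)
  refine ⟨C * F + 2 * π * (d + 1 : ℕ), by positivity, ?_⟩
  intro N j q α a hN hj hjd hq hgcd hα
  obtain ⟨P, hP, hlow, hup⟩ := exists_mem_powers_between hp.one_lt
    (Nat.one_lt_pow (by omega : d + 2 ≠ 0) (by omega : 1 < 3 * N))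
  have hNP : N ^ (d + 2) ≤ P ^ d := ((Nat.pow_le_pow_left (by omega) _).trans hlow).trans
    (Nat.le_self_pow (by omega) P)
  have h3N : 3 * N < P := (lt_self_pow₀ (by omega) (by omega)).trans_le hlow
  have : NeZero P := ⟨by omega⟩
  set ρ := weylRatio q N j ^ ((2 * critExp d : ℕ) : ℝ)⁻¹
  have hρ : 1 ≤ N * ρ := one_le_mul_weylRatio_rpow hN (by positivity)
    (inv_two_mul_critExp_le_one hd)
  have hPF : (P : ℝ) ^ (2 * η) ≤ F * N ^ ε := by
    rw [← hηε]
    exact rpow_le_of_le_mul_pow (by positivity) hup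
  obtain ⟨A, hA, hdisc⟩ := exists_norm_sum_toCircle_sub_sum_stdAddChar_le hN hNP α
  have hmain := hbound (hdec P hP) hN ((Nat.pow_le_pow_right hN (by omega)).trans hNP) h3N hj hjd
    hq hgcd hα (hA j)
  have hone : 1 ≤ N ^ ε * (N * ρ) :=
    one_le_mul_of_one_le_of_one_le (one_le_rpow (by exact_mod_cast hN) hε.le) hρ
  calc _ ≤ C * (P : ℝ) ^ (2 * η) * (N * ρ) + 2 * π * (d + 1 : ℕ) :=
        (norm_le_norm_add_norm_sub' _ _).trans (add_le_add hmain hdisc)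
    _ ≤ C * (F * N ^ ε) * (N * ρ) + 2 * π * (d + 1 : ℕ) * (N ^ ε * (N * ρ)) :=
        add_le_add (by gcongr) (le_mul_of_one_le_right (by positivity) hone)
    _ = _ := by rw [rpow_add (by positivity), rpow_one]; ring

lemma eC_eq_toCircle (x : ℝ) : eC x = AddCircle.toCircle (x : UnitAddCircle) := by
  rw [eC, AddCircle.toCircle_apply_mk, Circle.coe_exp]
  congr 1
  push_cast
  ring

lemma sum_eC_eq_sum_toCircle_polyValue (k N : ℕ) (α : ℕ → ℝ) :
    ∑ n ∈ Icc 1 N, eC (∑ i ∈ Icc 1 k, α i * (n : ℝ) ^ i) =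
      ∑ y ∈ Icc (1 : ℤ) N,
        (AddCircle.toCircle (polyValue k (fun h => (α h : UnitAddCircle)) y) : ℂ) := by
  refine sum_bij (fun n _ => (n : ℤ)) (by simp) (by simp)
    (fun y hy => ⟨y.toNat, by grind, by grind⟩) fun n _ => ?_
  have hpoly : ∑ i ∈ Icc 1 k, α i * (n : ℝ) ^ i = polyValue k α n := by
    simp [polyValue, mul_comm]
  rw [eC_eq_toCircle, hpoly]
  exact congrArg (fun u => (AddCircle.toCircle u : ℂ))
    (map_polyValue (QuotientAddGroup.mk' (AddSubgroup.zmultiples (1 : ℝ))) n)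

end WeylSum

end MomentCurve

theorem stmt9_general (k : ℕ) (hk : 2 ≤ k) (ε : ℝ) (hε : 0 < ε) :
    ∃ C : ℝ, 0 < C ∧ ∀ (N : ℕ) (α : ℕ → ℝ) (j : ℕ) (a : ℤ) (q : ℕ),
      2 ≤ j → j ≤ k → 0 < q → Int.gcd a (q : ℤ) = 1 →
      |α j - (a : ℝ) / (q : ℝ)| ≤ ((q : ℝ)) ⁻¹ ^ 2 →
      ‖∑ n ∈ Finset.Icc 1 N, eC (∑ i ∈ Finset.Icc 1 k, α i * (n : ℝ) ^ i)‖ ≤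
        C * (N : ℝ) ^ (1 + ε) *
          ((q : ℝ)⁻¹ + (N : ℝ)⁻¹ + (q : ℝ) * (N : ℝ) ^ (-(j : ℝ))) ^
            ((1 : ℝ) / ((k : ℝ) * ((k : ℝ) - 1))) := by
  obtain ⟨d, rfl⟩ : ∃ d, k = d + 1 := ⟨k - 1, by omega⟩
  obtain ⟨C, hC, hbound⟩ := MomentCurve.exists_norm_sum_toCircle_polyValue_le (d := d) (by omega) hε
  refine ⟨C, hC, fun N α j a q hj hjk hq hgcd hα => ?_⟩
  rcases N.eq_zero_or_pos with rfl | hN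
  · rw [Finset.Icc_eq_empty (by omega), Finset.sum_empty, norm_zero]
    positivity
  · have hexp : (1 : ℝ) / ((d + 1 : ℕ) * ((d + 1 : ℕ) - 1)) =
        ((2 * MomentCurve.critExp d : ℕ) : ℝ)⁻¹ := by
      rw [MomentCurve.two_mul_critExp]; push_cast; ring
    rw [MomentCurve.sum_eC_eq_sum_toCircle_polyValue, hexp, Real.rpow_neg (by positivity),
      Real.rpow_natCast]
    exact hbound hN hj hjk hq hgcd hα

/-- Bourgain's refinement of Weyl's inequality. -/
theorem stmt9 (k : ℕ) (hk : 3 ≤ k) (ε : ℝ) (hε : 0 < ε) :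
    ∃ C : ℝ, 0 < C ∧ ∀ (N : ℕ) (α : ℕ → ℝ) (j : ℕ) (a : ℤ) (q : ℕ),
      2 ≤ j → j ≤ k → 0 < q → Int.gcd a (q : ℤ) = 1 →
      |α j - (a : ℝ) / (q : ℝ)| ≤ ((q : ℝ)) ⁻¹ ^ 2 →
      ‖∑ n ∈ Finset.Icc 1 N, eC (∑ i ∈ Finset.Icc 1 k, α i * (n : ℝ) ^ i)‖ ≤
        C * (N : ℝ) ^ (1 + ε) *
          ((q : ℝ)⁻¹ + (N : ℝ)⁻¹ + (q : ℝ) * (N : ℝ) ^ (-(j : ℝ))) ^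
            ((1 : ℝ) / ((k : ℝ) * ((k : ℝ) - 1))) :=
  stmt9_general k (by omega) ε hε
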